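/- Second Growth Theorem: Let Y = (y,s) ∈ ℝ^{n+1}, r > 0, and let u ∈ C^{2,1} on the closure of Q_r(Y) satisfy −u_t + Lu ≥ 0 at every point of Q_r(Y). Suppose u ≤ 0 on the disk D_ρ := B_ρ(z) × {τ}, where B_ρ(z) ⊂ B_r(y) and s − r² ≤ τ ≤ s − r²/4 − ρ². Then u(Y) ≤ β₃ · sup_{Q_r(Y)} u₊, where u₊ := max(u,0) and β₃ < 1 is a positive constant depending only on n, ν, the ratio ρ/r, and S. -/

import Mathlib

open MeasureTheory ENNReal Metric Set RealInnerProductSpace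

noncomputable section

/-- `n`-dimensional Euclidean space. -/
abbrev En (n : ℕ) : Type := EuclideanSpace ℝ (Fin n)

variable {n : ℕ}

/-- Time derivative `u_t`. -/
def Dt (u : En n × ℝ → ℝ) (X : En n × ℝ) : ℝ :=
  deriv (fun t => u (X.1, t)) X.2

/-- First spatial derivative `D_i u`. -/
def Dx (u : En n × ℝ → ℝ) (i : Fin n) (X : En n × ℝ) : ℝ :=
  fderiv ℝ (fun x => u (x, X.2)) X.1 (EuclideanSpace.single i 1)

/-- Second spatial derivative `D_{ij} u`. -/
def Dxx (u : En n × ℝ → ℝ) (i j : Fin n) (X : En n × ℝ) : ℝ :=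
  Dx (Dx u j) i X

/-- `u` is of class `C^{2,1}` on `Q`: `u`, `D_i u`, `D_{ij} u`, `u_t` exist and are
continuous on `Q`. -/
structure IsC21 (u : En n × ℝ → ℝ) (Q : Set (En n × ℝ)) : Prop where
  cont : ContinuousOn u Q
  diff_t : ∀ X ∈ Q, DifferentiableAt ℝ (fun t => u (X.1, t)) X.2
  diff_x : ∀ X ∈ Q, DifferentiableAt ℝ (fun x => u (x, X.2)) X.1
  diff_xx : ∀ j : Fin n, ∀ X ∈ Q, DifferentiableAt ℝ (fun x => Dx u j (x, X.2)) X.1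
  cont_t : ContinuousOn (Dt u) Q
  cont_x : ∀ i, ContinuousOn (Dx u i) Q
  cont_xx : ∀ i j, ContinuousOn (Dxx u i j) Q

/-- Uniform parabolicity with constant `ν` on `Q`:
`ν⁻¹|ξ|² ≤ Σ a_ij ξ_i ξ_j` and `Σ a_ij² ≤ ν²`. -/
def UnifParabolic (ν : ℝ) (a : En n × ℝ → Matrix (Fin n) (Fin n) ℝ)
    (Q : Set (En n × ℝ)) : Prop :=
  ∀ X ∈ Q, (∀ ξ : Fin n → ℝ, ν⁻¹ * (∑ i, ξ i ^ 2) ≤ ∑ i, ∑ j, a X i j * ξ i * ξ j) ∧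
    (∑ i, ∑ j, (a X i j) ^ 2) ≤ ν ^ 2

/-- `Lu = Σ_{ij} a_ij D_ij u + Σ_i b_i D_i u`. -/
def Lop (a : En n × ℝ → Matrix (Fin n) (Fin n) ℝ) (b : En n × ℝ → En n)
    (u : En n × ℝ → ℝ) (X : En n × ℝ) : ℝ :=
  (∑ i, ∑ j, a X i j * Dxx u i j X) + ∑ i, b X i * Dx u i X

/-- `∫ (ess sup_t |f(x,t)|)ⁿ dx`, the `n`-th power of the `L^n_x L^∞_t` norm of `f`
over the set `Q ⊆ ℝⁿ × ℝ`. -/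
def LxnLtinfPow {E : Type*} [NNNorm E] (f : En n × ℝ → E) (Q : Set (En n × ℝ)) : ℝ≥0∞ :=
  ∫⁻ x, (essSup (fun t => (‖f (x, t)‖₊ : ℝ≥0∞)) (volume.restrict {t | (x, t) ∈ Q})) ^ n

/-- The `L^n_x L^∞_t` norm of `f` over `Q`. -/
def LxnLtinf {E : Type*} [NNNorm E] (f : En n × ℝ → E) (Q : Set (En n × ℝ)) : ℝ≥0∞ :=
  (LxnLtinfPow f Q) ^ (1 / (n : ℝ))

/-- The box `B_ρ(y) × (t₁, t₂)`. -/
def box (y : En n) (ρ t₁ t₂ : ℝ) : Set (En n × ℝ) := ball y ρ ×ˢ Ioo t₁ t₂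

/-- The standard parabolic cylinder `Q_r(Y) = B_r(y) × (s - r², s)`. -/
def pcyl (Y : En n × ℝ) (r : ℝ) : Set (En n × ℝ) := box Y.1 r (Y.2 - r ^ 2) Y.2

/-- The slanted cylinder `V_r(Y) = {(x,t) : |x - (t/s)y| < r, 0 < t < s}`. -/
def slantCyl (Y : En n × ℝ) (r : ℝ) : Set (En n × ℝ) :=
  {X | ‖X.1 - (X.2 / Y.2) • Y.1‖ < r ∧ 0 < X.2 ∧ X.2 < Y.2}

/-- Supremum of the positive part `u₊` over a set `A`. -/
def supPos (u : En n × ℝ → ℝ) (A : Set (En n × ℝ)) : ℝ :=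
  sSup ((fun X => max (u X) 0) '' A)

/-- `Ω` is a Lipschitz domain with character `(rΩ, mΩ)`: at every boundary point `y`
there is a coordinate frame, encoded by the unit "vertical" direction `e`, in which
`Ω ∩ B_{rΩ}(y)` is the region above the graph of an `mΩ`-Lipschitz function `φ`
of the tangential variables. -/
def IsLipschitzDomain (Ω : Set (En n)) (rΩ mΩ : ℝ) : Prop :=
  0 < rΩ ∧ 0 ≤ mΩ ∧
  ∀ y ∈ frontier Ω, ∃ (e : En n) (φ : En n → ℝ),
    ‖e‖ = 1 ∧ LipschitzWith (Real.toNNReal mΩ) φ ∧ φ 0 = 0 ∧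
    (∀ x, x ∈ Ω ∩ ball y rΩ ↔
      dist x y < rΩ ∧ φ ((x - y) - ⟪x - y, e⟫ • e) < ⟪x - y, e⟫) ∧
    (∀ ρ : ℝ, 0 < ρ → ρ ≤ rΩ → y + ρ • e ∈ Ω)

open Filter Topology Measure


lemma vol_lip_image {K : NNReal} {F : En n → En n} {A : Set (En n)} (h : LipschitzOnWith K F A) :
    volume (F '' A) ≤ (K : ℝ≥0∞) ^ n * volume A := by
  have h1 := h.hausdorffMeasure_image_le (d := (n : ℝ)) (by positivity)
  have : IsAddHaarMeasure (μH[(n : ℝ)] : Measure (En n)) := by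
    simpa using MeasureTheory.isAddHaarMeasure_hausdorffMeasure (E := En n)
  have h2 := isAddLeftInvariant_eq_smul (volume : Measure (En n)) (μH[(n : ℝ)])
  rw [h2, Measure.smul_apply, Measure.smul_apply]
  rw [ENNReal.rpow_natCast] at h1
  calc _ ≤ _ := smul_le_smul_of_nonneg_left h1 (zero_le)
    _ = _ := by
      simp only [ENNReal.smul_def, smul_eq_mul]; ring

lemma vol_loc_lip_image {L : NNReal} {F : En n → En n} {A : Set (En n)}
    (h : ∀ x ∈ A, ∀ᶠ x' in 𝓝[A] x, ‖F x' - F x‖ ≤ L * ‖x' - x‖) :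
    volume (F '' A) ≤ (L : ℝ≥0∞) ^ n * volume A := by
  let B : ℕ → Set (En n) := fun m => {x | x ∈ A ∧ ∀ x' ∈ A, ‖x' - x‖ < 1 / ((m : ℝ) + 1) →
    ‖F x' - F x‖ ≤ L * ‖x' - x‖}
  have hBA : ∀ m, B m ⊆ A := fun m x hx => hx.1
  have hmono : Monotone B := by
    intro m k hmk x hx
    refine ⟨hx.1, fun x' hx' hd => hx.2 x' hx' (lt_of_lt_of_le hd ?_)⟩
    exact Nat.one_div_le_one_div hmk
  have hU : A = ⋃ m, B m := by
    apply Subset.antisymm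
    · intro x hx
      have := h x hx
      rw [eventually_nhdsWithin_iff, Metric.eventually_nhds_iff] at this
      obtain ⟨ε, hε, he⟩ := this
      obtain ⟨m, hm⟩ := exists_nat_one_div_lt hε
      refine mem_iUnion.2 ⟨m, hx, fun x' hx' hd => he (y := x') ?_ hx'⟩
      rw [dist_eq_norm]; linarith
    · exact iUnion_subset hBA
  have key : ∀ m, volume (F '' B m) ≤ (L : ℝ≥0∞) ^ n * volume (B m) := by
    intro m
    obtain ⟨q, hq⟩ := TopologicalSpace.exists_dense_seq (En n)
    let δ : ℝ := 1 / ((m : ℝ) + 1)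
    have hδ : 0 < δ := by positivity
    let c : ℕ → Set (En n) := fun i => ball (q i) (δ / 2)
    have hc : ∀ i, MeasurableSet (disjointed c i) :=
      MeasurableSet.disjointed (fun i => measurableSet_ball)
    have hcu : (⋃ i, disjointed c i) = univ := by
      rw [iUnion_disjointed]
      refine eq_univ_of_forall fun x => ?_
      obtain ⟨i, hi⟩ := hq.exists_dist_lt x (half_pos hδ)
      exact mem_iUnion.2 ⟨i, hi⟩
    have hp : ∀ i, volume (F '' (B m ∩ disjointed c i)) ≤
        (L : ℝ≥0∞) ^ n * volume (disjointed c i ∩ B m) := by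
      intro i
      rw [inter_comm]
      apply vol_lip_image
      rw [lipschitzOnWith_iff_dist_le_mul]
      rintro x ⟨hxc, hx⟩ y ⟨hyc, hy⟩
      rw [dist_eq_norm, dist_eq_norm]
      apply hy.2 x hx.1
      have h1 : dist x (q i) < δ / 2 := disjointed_subset c i hxc
      have h2 : dist y (q i) < δ / 2 := disjointed_subset c i hyc
      rw [← dist_eq_norm]
      have := dist_triangle_right x y (q i)
      change _ < δ
      linarith
    calc volume (F '' B m) ≤ volume (⋃ i, F '' (B m ∩ disjointed c i)) := by
          rw [← image_iUnion, ← inter_iUnion, hcu, inter_univ]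
      _ ≤ ∑' i, volume (F '' (B m ∩ disjointed c i)) := measure_iUnion_le _
      _ ≤ ∑' i, (L : ℝ≥0∞) ^ n * volume (disjointed c i ∩ B m) := ENNReal.tsum_le_tsum hp
      _ = (L : ℝ≥0∞) ^ n * ∑' i, (volume.restrict (B m)) (disjointed c i) := by
          rw [ENNReal.tsum_mul_left]
          congr 2; ext i; rw [Measure.restrict_apply (hc i)]
      _ = (L : ℝ≥0∞) ^ n * volume (B m) := by
          rw [← measure_iUnion (disjoint_disjointed c) hc, hcu, Measure.restrict_apply_univ]
  calc volume (F '' A) = volume (⋃ m, F '' B m) := by rw [← image_iUnion, ← hU]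
    _ = ⨆ m, volume (F '' B m) := Monotone.measure_iUnion (fun a b hab => image_mono (hmono hab))
    _ ≤ _ := iSup_le fun m => (key m).trans (by gcongr; exact hBA m)

lemma vol_image_le {F : En n → En n} {E : Set (En n)} (hE : MeasurableSet E) {Λ : En n → ℝ}
    (hΛ : Measurable Λ) (hpos : ∀ x, 0 < Λ x)
    (h1 : ∀ x ∈ E, ∃ L : ℝ, ∀ᶠ x' in 𝓝[E] x, ‖F x' - F x‖ ≤ L * ‖x' - x‖)
    (h2 : ∀ᵐ x, x ∈ E → ∀ᶠ x' in 𝓝[E] x, ‖F x' - F x‖ ≤ Λ x * ‖x' - x‖) :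
    volume (F '' E) ≤ 2 ^ n * ∫⁻ x in E, ENNReal.ofReal (Λ x) ^ n := by
  let N : Set (En n) := {x | ¬ (x ∈ E → ∀ᶠ x' in 𝓝[E] x, ‖F x' - F x‖ ≤ Λ x * ‖x' - x‖)}
  have hN : volume N = 0 := h2
  -- level sets
  let lev : ℤ → Set (En n) := fun k => Λ ⁻¹' (Ico ((2:ℝ) ^ k) (2 ^ (k + 1)))
  have hlevm : ∀ k, MeasurableSet (lev k) := fun k => hΛ measurableSet_Ico
  have hlev : ∀ x, ∃ k, x ∈ lev k := fun x => exists_mem_Ico_zpow (hpos x) one_lt_two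
  have hdisj : Pairwise (Function.onFun Disjoint fun k => E ∩ lev k) := by
    intro k l hkl
    have : Disjoint (Ico ((2:ℝ) ^ k) (2 ^ (k + 1))) (Ico ((2:ℝ) ^ l) (2 ^ (l + 1))) := by
      rw [Set.disjoint_left]
      rintro v ⟨h1, h2⟩ ⟨h3, h4⟩
      rcases lt_or_gt_of_ne hkl with hlt | hlt
      · have : (2:ℝ) ^ (k + 1) ≤ 2 ^ l := zpow_le_zpow_right₀ (by norm_num) (by omega)
        linarith
      · have : (2:ℝ) ^ (l + 1) ≤ 2 ^ k := zpow_le_zpow_right₀ (by norm_num) (by omega)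
        linarith
    exact ((this.preimage Λ).inter_left' E).inter_right' E
  have hEU : E = ⋃ k, E ∩ lev k := by
    rw [← inter_iUnion]
    refine (inter_eq_left.2 fun x _ => ?_).symm
    exact mem_iUnion.2 (hlev x)
  have hnull : volume (F '' (E ∩ N)) = 0 := by
    have : E ∩ N ⊆ ⋃ L : ℕ, {x | x ∈ E ∩ N ∧ ∀ᶠ x' in 𝓝[E] x, ‖F x' - F x‖ ≤ L * ‖x' - x‖} := by
      rintro x ⟨hx, hxN⟩
      obtain ⟨L, hL⟩ := h1 x hx
      obtain ⟨k, hk⟩ := exists_nat_ge L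
      refine mem_iUnion.2 ⟨k, ⟨hx, hxN⟩, ?_⟩
      filter_upwards [hL] with x' hx'
      exact hx'.trans (by gcongr)
    refine measure_mono_null (image_mono this) ?_
    rw [image_iUnion]
    refine measure_iUnion_null fun L => ?_
    refine le_antisymm ((vol_loc_lip_image (L := (L : NNReal)) ?_).trans ?_) zero_le
    · intro x hx
      refine Eventually.filter_mono (nhdsWithin_mono _ ?_) hx.2
      exact fun y hy => hy.1.1
    · have : volume {x | x ∈ E ∩ N ∧ ∀ᶠ x' in 𝓝[E] x, ‖F x' - F x‖ ≤ L * ‖x' - x‖} = 0 :=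
        measure_mono_null (fun x hx => hx.1.2) hN
      rw [this, mul_zero]
  have hk : ∀ k : ℤ, volume (F '' ((E ∩ lev k) \ N)) ≤
      2 ^ n * ∫⁻ x in E ∩ lev k, ENNReal.ofReal (Λ x) ^ n := by
    intro k
    have h3 := vol_loc_lip_image (F := F) (A := (E ∩ lev k) \ N)
      (L := ((2 : NNReal) ^ (k + 1))) (by
      rintro x ⟨⟨hxE, hxl⟩, hxN⟩
      have hx : x ∈ E → ∀ᶠ x' in 𝓝[E] x, ‖F x' - F x‖ ≤ Λ x * ‖x' - x‖ := by
        by_contra hcon; exact hxN hcon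
      have hx := hx hxE
      refine Eventually.filter_mono (nhdsWithin_mono _ (fun y hy => hy.1.1)) ?_
      filter_upwards [hx] with x' hx'
      refine hx'.trans ?_
      gcongr
      have := hxl.2.le
      simpa using this)
    refine h3.trans ?_
    have h4 : ((2 : ℝ≥0∞) ^ n * ENNReal.ofReal ((2:ℝ) ^ k) ^ n) * volume (E ∩ lev k) ≤
        2 ^ n * ∫⁻ x in E ∩ lev k, ENNReal.ofReal (Λ x) ^ n := by
      rw [mul_assoc]
      gcongr
      rw [← setLIntegral_const]
      refine setLIntegral_mono' (hE.inter (hlevm k)) fun x hx => ?_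
      gcongr
      exact hx.2.1
    refine le_trans ?_ h4
    have : (((2 : NNReal) ^ (k + 1) : NNReal) : ℝ≥0∞) = 2 * ENNReal.ofReal ((2:ℝ) ^ k) := by
      rw [show (2 : ℝ≥0∞) = ENNReal.ofReal 2 by simp, ← ENNReal.ofReal_mul (by norm_num)]
      rw [ENNReal.ofReal, ENNReal.coe_inj]
      rw [zpow_add_one₀ (by norm_num)]
      ext
      rw [Real.coe_toNNReal _ (by positivity)]
      push_cast; ring
    rw [this, mul_pow]
    gcongr
    exact sdiff_subset
  have hsplit : F '' E ⊆ F '' (E ∩ N) ∪ ⋃ k, F '' ((E ∩ lev k) \ N) := by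
    rintro _ ⟨x, hx, rfl⟩
    by_cases hxN : x ∈ N
    · exact Or.inl ⟨x, ⟨hx, hxN⟩, rfl⟩
    · obtain ⟨k, hk⟩ := hlev x
      exact Or.inr (mem_iUnion.2 ⟨k, x, ⟨⟨hx, hk⟩, hxN⟩, rfl⟩)
  calc volume (F '' E) ≤ volume (F '' (E ∩ N)) + ∑' k, volume (F '' ((E ∩ lev k) \ N)) :=
        (measure_mono hsplit).trans ((measure_union_le _ _).trans
          (by gcongr; exact measure_iUnion_le _))
    _ ≤ 0 + ∑' k : ℤ, 2 ^ n * ∫⁻ x in E ∩ lev k, ENNReal.ofReal (Λ x) ^ n := by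
        rw [hnull]; gcongr with k; exact hk k
    _ = 2 ^ n * ∫⁻ x in E, ENNReal.ofReal (Λ x) ^ n := by
        rw [zero_add, ENNReal.tsum_mul_left]
        conv_rhs => rw [hEU]
        rw [lintegral_iUnion (fun k => hE.inter (hlevm k)) hdisj]

/-- Elliptic matrices with constant `ν`. -/
def Ell (ν : ℝ) (A : Matrix (Fin n) (Fin n) ℝ) : Prop :=
  (∀ ξ : Fin n → ℝ, ν⁻¹ * (∑ i, ξ i ^ 2) ≤ ∑ i, ∑ j, A i j * ξ i * ξ j) ∧
    (∑ i, ∑ j, (A i j) ^ 2) ≤ ν ^ 2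

/-- Spatial gradient. -/
def grd (u : En n × ℝ → ℝ) (X : En n × ℝ) : En n := WithLp.toLp 2 (fun i => Dx u i X)

lemma taylor2 {E : Type*} [NormedAddCommGroup E] [NormedSpace ℝ E] {f : E → ℝ} {f' : E → E →L[ℝ] ℝ}
    {f'' : E →L[ℝ] E →L[ℝ] ℝ} {x : E}
    (hf : ∀ᶠ y in 𝓝 x, HasFDerivAt f (f' y) y) (hx : HasFDerivAt f' f'' x) {ε : ℝ} (hε : 0 < ε) :
    ∀ᶠ z in 𝓝 (0 : E), |f (x + z) - f x - f' x z - (1 / 2) * f'' z z| ≤ ε * ‖z‖ ^ 2 := by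
  have hsym := second_derivative_symmetric_of_eventually hf hx
  have h1 := hx.isLittleO.def hε
  obtain ⟨δ, hδ, hb⟩ := Metric.eventually_nhds_iff_ball.1 (hf.and h1)
  filter_upwards [Metric.ball_mem_nhds (0 : E) hδ] with z hz
  rw [mem_ball_zero_iff] at hz
  let φ : E → ℝ := fun y => f y - f' x (y - x) - (1 / 2) * f'' (y - x) (y - x)
  have hφ : ∀ y ∈ ball x δ, HasFDerivAt φ (f' y - f' x - f'' (y - x)) y := by
    intro y hy
    have hsub : HasFDerivAt (fun y : E => y - x) (ContinuousLinearMap.id ℝ E) y :=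
      (hasFDerivAt_id y).sub_const x
    have hA : HasFDerivAt (fun y => f' x (y - x)) (f' x) y := by
      have := (f' x).hasFDerivAt.comp y hsub
      rw [ContinuousLinearMap.comp_id] at this
      exact this
    have hB : HasFDerivAt (fun y => f'' (y - x) (y - x))
        (f''.precompR E (y - x) (ContinuousLinearMap.id ℝ E) +
          f''.precompL E (ContinuousLinearMap.id ℝ E) (y - x)) y :=
      f''.hasFDerivAt_of_bilinear hsub hsub
    have := ((hb y hy).1.sub hA).sub (hB.const_mul (1 / 2))
    refine this.congr_fderiv ?_
    ext v
    simp [ContinuousLinearMap.precompR_apply, ContinuousLinearMap.precompL_apply]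
    rw [hsym v y, hsym v x]; ring
  have hseg : segment ℝ x (x + z) ⊆ closedBall x ‖z‖ := by
    apply (convex_closedBall x ‖z‖).segment_subset
    · simp
    · simp
  have key := Convex.norm_image_sub_le_of_norm_hasFDerivWithin_le (f := φ)
    (s := closedBall x ‖z‖) (f' := fun y => (f' y - f' x - f'' (y - x))) (C := ε * ‖z‖)
    (x := x) (y := x + z)
    (fun y hy => (hφ y (by
      rw [mem_closedBall] at hy; rw [mem_ball]; linarith)).hasFDerivWithinAt)
    (fun y hy => by
      have h3 := (hb y (by rw [mem_closedBall] at hy; rw [mem_ball]; linarith)).2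
      refine h3.trans ?_
      rw [mem_closedBall, dist_eq_norm] at hy
      gcongr) (convex_closedBall x ‖z‖) (by simp) (by simp)
  have e : φ (x + z) - φ x = f (x + z) - f x - f' x z - (1 / 2) * f'' z z := by
    simp [φ]; ring
  rw [e, Real.norm_eq_abs] at key
  refine key.trans (le_of_eq ?_)
  simp; ring

lemma psd_facts {H : Matrix (Fin n) (Fin n) ℝ} (hH : H.PosSemidef) :
    0 ≤ ∑ i, H i i ∧ (∀ z : En n, ∑ i, ∑ j, H i j * z i * z j ≤ (∑ i, H i i) * ‖z‖ ^ 2) ∧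
    ∀ ν A, 0 < ν → Ell ν A → ∑ i, H i i ≤ ν * ∑ i, ∑ j, A i j * H i j := by
  obtain ⟨B, rfl⟩ : ∃ B : Matrix (Fin n) (Fin n) ℝ, H = B.conjTranspose * B :=
    by open scoped MatrixOrder in
        exact (CStarAlgebra.nonneg_iff_eq_star_mul_self.1 hH.nonneg)
  have hHij : ∀ i j, (B.conjTranspose * B) i j = ∑ k, B k i * B k j := by
    intro i j; simp [Matrix.mul_apply]
  have htr : ∑ i, (B.conjTranspose * B) i i = ∑ k, ∑ i, B k i ^ 2 := by
    rw [Finset.sum_comm]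
    refine Finset.sum_congr rfl fun i _ => ?_
    rw [hHij]; exact Finset.sum_congr rfl fun k _ => by ring
  rw [htr]
  refine ⟨by positivity, fun z => ?_, fun ν A hν hA => ?_⟩
  · have : ∑ i, ∑ j, (B.conjTranspose * B) i j * z i * z j = ∑ k, (∑ i, B k i * z i) ^ 2 := by
      simp_rw [hHij, Finset.sum_mul]
      rw [Finset.sum_congr rfl fun i _ => Finset.sum_comm, Finset.sum_comm]
      refine Finset.sum_congr rfl fun k _ => ?_
      rw [sq, Finset.sum_mul_sum]
      exact Finset.sum_congr rfl fun i _ => Finset.sum_congr rfl fun j _ => by ring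
    rw [this, Finset.sum_mul]
    gcongr with k
    rw [EuclideanSpace.norm_sq_eq]
    simpa using Finset.sum_mul_sq_le_sq_mul_sq Finset.univ (fun i => B k i) (fun i => z i)
  · have : ∑ i, ∑ j, A i j * (B.conjTranspose * B) i j =
        ∑ k, ∑ i, ∑ j, A i j * B k i * B k j := by
      simp_rw [hHij, Finset.mul_sum]
      rw [Finset.sum_congr rfl fun i _ => Finset.sum_comm, Finset.sum_comm]
      exact Finset.sum_congr rfl fun k _ => Finset.sum_congr rfl fun i _ =>
        Finset.sum_congr rfl fun j _ => by ring
    rw [this, Finset.mul_sum]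
    gcongr with k
    have := hA.1 (fun i => B k i)
    calc ∑ i, B k i ^ 2 = ν * (ν⁻¹ * ∑ i, B k i ^ 2) := by field_simp
      _ ≤ _ := by gcongr

/-- Coordinate expansion of a functional. -/
lemma clm_expand (L : En n →L[ℝ] ℝ) :
    L = ∑ j, L (EuclideanSpace.single j 1) • (EuclideanSpace.proj j : En n →L[ℝ] ℝ) := by
  ext v
  have hv : v = ∑ j, v j • EuclideanSpace.single j (1 : ℝ) := by
    ext i; simp [Finset.sum_apply, Pi.single_apply]
  conv_lhs => rw [hv]
  simp [mul_comm]

/-- Second-order facts at a point where `f - ⟪p, ·⟫` has a local maximum. -/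
lemma contact_slice {f : En n → ℝ} {x p : En n}
    (hf : ∀ᶠ y in 𝓝 x, DifferentiableAt ℝ f y)
    (hff : ∀ j, DifferentiableAt ℝ (fun y => fderiv ℝ f y (EuclideanSpace.single j 1)) x)
    (hmax : IsLocalMax (fun y => f y - ⟪p, y⟫) x) :
    (∀ i, fderiv ℝ f x (EuclideanSpace.single i 1) = p i) ∧
    ∃ κ : ℝ, 0 ≤ κ ∧
      (∀ ν A, 0 < ν → Ell ν A → κ ≤ ν * (-∑ i, ∑ j, A i j *
        fderiv ℝ (fun y => fderiv ℝ f y (EuclideanSpace.single j 1)) x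
          (EuclideanSpace.single i 1))) ∧
      ∀ ε, 0 < ε → ∀ᶠ z in 𝓝 (0 : En n), f x + ⟪p, z⟫ - (κ / 2 + ε) * ‖z‖ ^ 2 ≤ f (x + z) := by
  have hfd : fderiv ℝ f x = innerSL ℝ p := by
    have h1 : HasFDerivAt (fun y => f y - ⟪p, y⟫) (fderiv ℝ f x - innerSL ℝ p) x :=
      hf.self_of_nhds.hasFDerivAt.sub (innerSL ℝ p).hasFDerivAt
    exact sub_eq_zero.1 (hmax.hasFDerivAt_eq_zero h1)
  refine ⟨fun i => by rw [hfd]; simp [EuclideanSpace.inner_single_right], ?_⟩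
  let D : Fin n → En n →L[ℝ] ℝ := fun j =>
    fderiv ℝ (fun y => fderiv ℝ f y (EuclideanSpace.single j 1)) x
  let f'' : En n →L[ℝ] En n →L[ℝ] ℝ :=
    ∑ j, (D j).smulRight (EuclideanSpace.proj j : En n →L[ℝ] ℝ)
  have hf'' : HasFDerivAt (fderiv ℝ f) f'' x := by
    have h2 : HasFDerivAt (fun y => ∑ j, fderiv ℝ f y (EuclideanSpace.single j 1) •
        (EuclideanSpace.proj j : En n →L[ℝ] ℝ)) f'' x := by
      refine HasFDerivAt.fun_sum fun j _ => ?_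
      exact (hff j).hasFDerivAt.smul_const (EuclideanSpace.proj j : En n →L[ℝ] ℝ)
    refine h2.congr_of_eventuallyEq (Eventually.of_forall fun y => ?_)
    exact clm_expand _
  have hf1 : ∀ᶠ y in 𝓝 x, HasFDerivAt f (fderiv ℝ f y) y := hf.mono fun y hy => hy.hasFDerivAt
  have hsym := second_derivative_symmetric_of_eventually hf1 hf''
  have hfe : ∀ v w : En n, f'' v w = ∑ j, D j v * w j := by
    intro v w; simp [f'']
  have hfe2 : ∀ i j, f'' (EuclideanSpace.single i 1) (EuclideanSpace.single j 1) =
      D j (EuclideanSpace.single i 1) := by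
    intro i j; rw [hfe]; simp [Pi.single_apply]
  have hquad : ∀ z : En n, f'' z z = ∑ i, ∑ j, D j (EuclideanSpace.single i 1) * z i * z j := by
    intro z
    rw [hfe, Finset.sum_comm]
    refine Finset.sum_congr rfl fun j _ => ?_
    conv_lhs => rw [clm_expand (D j)]
    simp [Finset.sum_mul]
  let H : Matrix (Fin n) (Fin n) ℝ := fun i j => - D j (EuclideanSpace.single i 1)
  have hHq : ∀ z : En n, ∑ i, ∑ j, H i j * z i * z j = - f'' z z := by
    intro z; rw [hquad]; simp [H]
  have hneg : ∀ z : En n, f'' z z ≤ 0 := by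
    intro z
    by_contra hcon
    push Not at hcon
    have hz : 0 < ‖z‖ := by
      rw [norm_pos_iff]; rintro rfl; simp at hcon
    set ε : ℝ := f'' z z / (4 * ‖z‖ ^ 2) with hεd
    have hε : 0 < ε := by positivity
    have h3 := taylor2 hf1 hf'' hε
    have h4 : ∀ᶠ w in 𝓝 (0 : En n), f (x + w) - ⟪p, x + w⟫ ≤ f x - ⟪p, x⟫ := by
      have : Tendsto (fun w : En n => x + w) (𝓝 0) (𝓝 x) := by
        have h : Continuous fun w : En n => x + w := by fun_prop
        simpa using h.tendsto 0
      exact this.eventually hmax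
    have h5 : Tendsto (fun s : ℝ => s • z) (𝓝[>] 0) (𝓝 (0 : En n)) := by
      have h : Continuous fun s : ℝ => s • z := by fun_prop
      have := h.tendsto 0
      rw [zero_smul] at this
      exact this.mono_left nhdsWithin_le_nhds
    obtain ⟨s, ⟨hs1, hs2⟩, hs⟩ := ((h5.eventually (h3.and h4)).and self_mem_nhdsWithin).exists
    rw [hfd] at hs1
    have hs1 := (abs_le.1 hs1).1
    have hspos : 0 < s := hs
    simp only [map_smul, _root_.smul_apply, smul_eq_mul, norm_smul, Real.norm_eq_abs,
      innerSL_apply_apply, inner_add_right, inner_smul_right] at hs1 hs2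
    rw [mul_pow, sq_abs] at hs1
    have : ε * (s ^ 2 * ‖z‖ ^ 2) = s ^ 2 * f'' z z / 4 := by
      rw [hεd]; field_simp
    have hp : 0 < s ^ 2 * f'' z z := by positivity
    nlinarith
  have hPSD : H.PosSemidef := by
    refine Matrix.PosSemidef.of_dotProduct_mulVec_nonneg ?_ ?_
    · ext i j
      rw [Matrix.conjTranspose_apply]
      change - D i (EuclideanSpace.single j 1) = - D j (EuclideanSpace.single i 1)
      rw [← hfe2, ← hfe2, hsym]
    · intro v
      have := hHq (WithLp.toLp 2 v)
      have h6 := hneg (WithLp.toLp 2 v)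
      have e : star v ⬝ᵥ H.mulVec v = ∑ i, ∑ j, H i j * v i * v j := by
        simp only [dotProduct, Matrix.mulVec, Finset.mul_sum, star_trivial, Pi.star_apply]
        exact Finset.sum_congr rfl fun i _ => Finset.sum_congr rfl fun j _ => by ring
      rw [e]
      simp only at this
      linarith
  obtain ⟨hk0, hk1, hk2⟩ := psd_facts hPSD
  refine ⟨∑ i, H i i, hk0, ?_, ?_⟩
  · intro ν A hν hA
    refine (hk2 ν A hν hA).trans (le_of_eq ?_)
    congr 1
    simp [H, D]
  · intro ε hε
    filter_upwards [taylor2 hf1 hf'' hε] with z hz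
    have h7 := (abs_le.1 hz).1
    rw [hfd] at h7
    have h8 := hk1 z
    rw [hHq] at h8
    simp only [innerSL_apply_apply] at h7
    nlinarith

/-- Pointwise regularity on `D`. -/
structure Reg (w : En n × ℝ → ℝ) (D : Set (En n × ℝ)) : Prop where
  dt : ∀ X ∈ D, DifferentiableAt ℝ (fun t => w (X.1, t)) X.2
  dx : ∀ X ∈ D, DifferentiableAt ℝ (fun x => w (x, X.2)) X.1
  dxx : ∀ j : Fin n, ∀ X ∈ D, DifferentiableAt ℝ (fun x => Dx w j (x, X.2)) X.1

/-- `X` maximises `w - ⟪p, x⟫` over `K`. -/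
def Ct (w : En n × ℝ → ℝ) (K : Set (En n × ℝ)) (p : En n) (X : En n × ℝ) : Prop :=
  X ∈ K ∧ ∀ X' ∈ K, w X' - ⟪p, X'.1⟫ ≤ w X - ⟪p, X.1⟫

lemma ct_facts {w : En n × ℝ → ℝ} {x0 : En n} {R t1 t2 : ℝ}
    (hreg : Reg w (ball x0 R ×ˢ Ioc t1 t2)) {p : En n} {X : En n × ℝ}
    (hX : X ∈ ball x0 R ×ˢ Ioc t1 t2) (hct : Ct w (closedBall x0 R ×ˢ Icc t1 t2) p X) :
    grd w X = p ∧ 0 ≤ Dt w X ∧ ∃ κ : ℝ, 0 ≤ κ ∧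
      (∀ ν A, 0 < ν → Ell ν A → κ ≤ ν * (-∑ i, ∑ j, A i j * Dxx w i j X)) ∧
      ∀ ε, 0 < ε → ∀ᶠ z in 𝓝 (0 : En n),
        w X + ⟪p, z⟫ - (κ / 2 + ε) * ‖z‖ ^ 2 ≤ w (X.1 + z, X.2) := by
  obtain ⟨x, t⟩ := X
  obtain ⟨hx, ht⟩ := hX
  simp only at hx ht
  have hnear : ∀ᶠ y in 𝓝 x, y ∈ ball x0 R := isOpen_ball.mem_nhds hx
  have hs := contact_slice (f := fun y => w (y, t)) (x := x) (p := p)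
    (hnear.mono fun y hy => hreg.dx (y, t) ⟨hy, ht⟩)
    (fun j => hreg.dxx j (x, t) ⟨hx, ht⟩)
    (hnear.mono fun y hy => hct.2 (y, t) ⟨ball_subset_closedBall hy, Ioc_subset_Icc_self ht⟩)
  refine ⟨?_, ?_, hs.2⟩
  · ext i
    exact hs.1 i
  · -- time derivative
    have hd : HasDerivAt (fun τ => w (x, τ)) (Dt w (x, t)) t := (hreg.dt (x, t) ⟨hx, ht⟩).hasDerivAt
    have h2 : Tendsto (slope (fun τ => w (x, τ)) t) (𝓝[<] t) (𝓝 (Dt w (x, t))) :=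
      (hasDerivAt_iff_tendsto_slope.1 hd).mono_left (nhdsWithin_mono _ fun a ha => ne_of_lt ha)
    refine ge_of_tendsto h2 ?_
    filter_upwards [Ioo_mem_nhdsLT ht.1] with τ hτ
    have h3 := hct.2 (x, τ) ⟨ball_subset_closedBall hx, hτ.1.le, hτ.2.le.trans ht.2⟩
    simp only [sub_le_sub_iff_right] at h3
    rw [slope_def_field]
    exact div_nonneg_of_nonpos (by linarith) (by linarith [hτ.2])

lemma ct_unique {w : En n × ℝ → ℝ} {x0 : En n} {R t1 t2 : ℝ}
    (hreg : Reg w (ball x0 R ×ˢ Ioc t1 t2)) {p p' : En n} {x : En n} {t t' : ℝ}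
    (hX' : (x, t') ∈ ball x0 R ×ˢ Ioc t1 t2)
    (hct : Ct w (closedBall x0 R ×ˢ Icc t1 t2) p (x, t))
    (hct' : Ct w (closedBall x0 R ×ˢ Icc t1 t2) p' (x, t')) : p = p' := by
  have h1 : Ct w (closedBall x0 R ×ˢ Icc t1 t2) p (x, t') := by
    refine ⟨hct'.1, fun X hX => (hct.2 X hX).trans ?_⟩
    have := hct'.2 _ hct.1
    simp only at this ⊢
    linarith
  rw [← (ct_facts hreg hX' h1).1, ← (ct_facts hreg hX' hct').1]

lemma ct_lip {w : En n × ℝ → ℝ} {K : Set (En n × ℝ)} {p p' x x' : En n} {t t' c δ : ℝ}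
    (hct : Ct w K p (x, t)) (hct' : Ct w K p' (x', t'))
    (hδ : ∀ z : En n, ‖z‖ < δ → (x + z, t) ∈ K ∧ w (x, t) + ⟪p, z⟫ - c * ‖z‖ ^ 2 ≤ w (x + z, t))
    (hx : ‖x' - x‖ < δ / 2) (hc : 0 ≤ c) (hne : x = x' → p = p') :
    ‖p' - p‖ ≤ 4 * c * ‖x' - x‖ := by
  by_cases hq : p' = p
  · rw [hq]; simp; positivity
  have hy : x' - x ≠ 0 := fun h => hq (hne (sub_eq_zero.1 h).symm).symm
  set y := x' - x with hyd
  set q := p - p' with hqd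
  have hq0 : q ≠ 0 := fun h => hq (sub_eq_zero.1 h).symm
  have hqp : 0 < ‖q‖ := norm_pos_iff.2 hq0
  have hyp : 0 < ‖y‖ := norm_pos_iff.2 hy
  let z : En n := y + (‖y‖ / ‖q‖) • q
  have hz : ‖z‖ ≤ 2 * ‖y‖ := by
    refine (norm_add_le _ _).trans ?_
    rw [norm_smul, Real.norm_of_nonneg (by positivity), div_mul_cancel₀ _ hqp.ne']
    linarith
  obtain ⟨hzK, hz2⟩ := hδ z (by linarith)
  have h1 := hct'.2 _ hzK
  have h2 := hct.2 _ hct'.1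
  simp only [inner_add_right] at h1 h2
  have h3 : ⟪q, z - y⟫ ≤ c * ‖z‖ ^ 2 := by
    simp only [hqd, hyd, inner_sub_left, inner_sub_right]
    linarith
  have h4 : ⟪q, z - y⟫ = ‖y‖ * ‖q‖ := by
    simp only [z, add_sub_cancel_left, inner_smul_right, real_inner_self_eq_norm_sq]
    field_simp
  have h5 : c * ‖z‖ ^ 2 ≤ c * (2 * ‖y‖) ^ 2 := by gcongr
  have h6 : ‖y‖ * ‖q‖ ≤ ‖y‖ * (4 * c * ‖y‖) := by nlinarith
  have h7 := le_of_mul_le_mul_left h6 hyp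
  rwa [hqd, norm_sub_rev] at h7

lemma ct_compact {w : En n × ℝ → ℝ} {K : Set (En n × ℝ)} (hK : IsCompact K)
    (hw : ContinuousOn w K) {P : Set (En n)} (hP : IsCompact P) :
    IsCompact {x | ∃ t, ∃ p ∈ P, Ct w K p (x, t)} := by
  let T : Set ((En n × ℝ) × En n) := {q | q.1 ∈ K ∧ q.2 ∈ P ∧ Ct w K q.2 q.1}
  have hT : IsCompact T := by
    rcases K.eq_empty_or_nonempty with rfl | hne
    · have : T = ∅ := by ext q; simp [T]
      rw [this]; exact isCompact_empty
    have : T = ⋂ X' ∈ K, ((K ×ˢ P) ∩ (fun q : (En n × ℝ) × En n =>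
        w X' - ⟪q.2, X'.1⟫ - (w q.1 - ⟪q.2, q.1.1⟫)) ⁻¹' Iic 0) := by
      ext q
      simp only [T, Ct, mem_ofPred_eq, mem_iInter, mem_inter_iff, mem_prod, mem_preimage, mem_Iic,
        sub_nonpos]
      constructor
      · rintro ⟨h1, h2, _, h4⟩ X' hX'
        exact ⟨⟨h1, h2⟩, h4 X' hX'⟩
      · intro h
        obtain ⟨X', hX'⟩ := hne
        exact ⟨(h X' hX').1.1, (h X' hX').1.2, (h X' hX').1.1, fun Y hY => (h Y hY).2⟩
    rw [this]
    refine IsCompact.of_isClosed_subset (hK.prod hP) ?_ ?_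
    · refine isClosed_biInter fun X' hX' => ?_
      refine ContinuousOn.preimage_isClosed_of_isClosed ?_ (hK.prod hP).isClosed isClosed_Iic
      have h1 : ContinuousOn (fun q : (En n × ℝ) × En n => w q.1) (K ×ˢ P) :=
        hw.comp continuousOn_fst (fun q hq => hq.1)
      have h2 : Continuous (fun q : (En n × ℝ) × En n => ⟪q.2, X'.1⟫) := by fun_prop
      have h3 : Continuous (fun q : (En n × ℝ) × En n => ⟪q.2, q.1.1⟫) := by fun_prop
      exact (continuousOn_const.sub h2.continuousOn).sub (h1.sub h3.continuousOn)
    · obtain ⟨X', hX'⟩ := hne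
      exact (biInter_subset_of_mem hX').trans inter_subset_left
  have : {x | ∃ t, ∃ p ∈ P, Ct w K p (x, t)} = (fun q : (En n × ℝ) × En n => q.1.1) '' T := by
    ext x
    constructor
    · rintro ⟨t, p, hp, hc⟩
      exact ⟨((x, t), p), ⟨hc.1, hp, hc⟩, rfl⟩
    · rintro ⟨⟨⟨x', t⟩, p⟩, ⟨_, hp, hc⟩, rfl⟩
      exact ⟨t, p, hp, hc⟩
  rw [this]
  exact hT.image (by fun_prop)

lemma abp_layer {w : En n × ℝ → ℝ} {x0 : En n} {R t1 t2 ν b : ℝ} {g f : En n → ℝ}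
    {P : Set (En n)} (hν : 0 < ν)
    (hw : ContinuousOn w (closedBall x0 R ×ˢ Icc t1 t2))
    (hreg : Reg w (ball x0 R ×ˢ Ioc t1 t2)) (hgm : Measurable g) (hfm : Measurable f)
    (hg : ∀ x, 0 ≤ g x) (hf : ∀ x, 0 < f x) (hb : 0 ≤ b) (hP : IsCompact P)
    (hPb : ∀ p ∈ P, ‖p‖ ≤ b)
    (hex : ∀ p ∈ P, ∃ X, Ct w (closedBall x0 R ×ˢ Icc t1 t2) p X)
    (hin : ∀ p ∈ P, ∀ X, Ct w (closedBall x0 R ×ˢ Icc t1 t2) p X → X ∈ ball x0 R ×ˢ Ioc t1 t2)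
    (hpde : ∀ᵐ x : En n, x ∈ ball x0 R → ∀ t ∈ Ioc t1 t2, ∃ A, Ell ν A ∧
      Dt w (x, t) ≤ ∑ i, ∑ j, A i j * Dxx w i j (x, t) + g x * ‖grd w (x, t)‖ + f x) :
    volume P ≤ 2 ^ n * ∫⁻ x in {x | ∃ t, ∃ p ∈ P, Ct w (closedBall x0 R ×ˢ Icc t1 t2) p (x, t)},
      ENNReal.ofReal (4 * ν * (b * g x + f x)) ^ n := by
  classical
  set K := closedBall x0 R ×ˢ Icc t1 t2 with hK
  have hKc : IsCompact K := (isCompact_closedBall x0 R).prod isCompact_Icc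
  set E := {x | ∃ t, ∃ p ∈ P, Ct w K p (x, t)} with hE
  have hEc : IsCompact E := ct_compact hKc hw hP
  have hch : ∀ x : En n, ∃ p : En n, ∃ t : ℝ, x ∈ E → p ∈ P ∧ Ct w K p (x, t) := by
    intro x
    by_cases hx : x ∈ E
    · obtain ⟨t, p, hp, hc⟩ := hx
      exact ⟨p, t, fun _ => ⟨hp, hc⟩⟩
    · exact ⟨0, 0, fun h => absurd h hx⟩
  choose F T hF using hch
  have hsub : P ⊆ F '' E := by
    intro p hp
    obtain ⟨⟨x, t⟩, hX⟩ := hex p hp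
    have hxE : x ∈ E := ⟨t, p, hp, hX⟩
    exact ⟨x, hxE, ct_unique hreg (hin p hp _ hX) (hF x hxE).2 hX⟩
  have hlip : ∀ x ∈ E, ∀ c : ℝ, 0 ≤ c → (∀ᶠ z in 𝓝 (0 : En n),
        w (x, T x) + ⟪F x, z⟫ - c * ‖z‖ ^ 2 ≤ w (x + z, T x)) →
      ∀ᶠ x' in 𝓝[E] x, ‖F x' - F x‖ ≤ 4 * c * ‖x' - x‖ := by
    intro x hx c hc hev
    have hXin := hin _ (hF x hx).1 _ (hF x hx).2
    have hnear : ∀ᶠ z in 𝓝 (0 : En n), x + z ∈ ball x0 R := by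
      have : Tendsto (fun z : En n => x + z) (𝓝 0) (𝓝 x) := by
        have h : Continuous (fun z : En n => x + z) := by fun_prop
        simpa using h.tendsto 0
      exact this.eventually (isOpen_ball.mem_nhds hXin.1)
    obtain ⟨δ, hδ, hball⟩ := Metric.eventually_nhds_iff_ball.1 (hev.and hnear)
    filter_upwards [self_mem_nhdsWithin,
      mem_nhdsWithin_of_mem_nhds (Metric.ball_mem_nhds x (half_pos hδ))] with x' hx'E hx'
    refine ct_lip (hF x hx).2 (hF x' hx'E).2 (δ := δ) ?_ ?_ hc ?_
    · intro z hz
      obtain ⟨h1, h2⟩ := hball z (by simpa using hz)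
      exact ⟨⟨ball_subset_closedBall h2, Ioc_subset_Icc_self hXin.2⟩, h1⟩
    · rwa [mem_ball, dist_eq_norm] at hx'
    · rintro rfl; rfl
  refine (measure_mono hsub).trans (vol_image_le hEc.isClosed.measurableSet
    (Λ := fun x => 4 * ν * (b * g x + f x)) (by fun_prop) ?_ ?_ ?_)
  · intro x
    have := hf x; have := hg x; positivity
  · intro x hx
    obtain ⟨-, -, κ, hκ, -, hev⟩ := ct_facts hreg (hin _ (hF x hx).1 _ (hF x hx).2) (hF x hx).2
    exact ⟨_, hlip x hx (κ / 2 + 1) (by positivity) (hev 1 one_pos)⟩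
  · filter_upwards [hpde] with x hpx hx
    have hXin := hin _ (hF x hx).1 _ (hF x hx).2
    obtain ⟨hgr, hdt, κ, hκ, hκA, hev⟩ := ct_facts hreg hXin (hF x hx).2
    obtain ⟨A, hA, hle⟩ := hpx hXin.1 _ hXin.2
    have h1 := hκA ν A hν hA
    have hfx := hf x
    have h2 := hlip x hx (κ / 2 + ν * f x / 2) (by positivity) (hev _ (by positivity))
    filter_upwards [h2] with x' hx'
    refine hx'.trans ?_
    rw [hgr] at hle
    have h3 : g x * ‖F x‖ ≤ b * g x := by
      rw [mul_comm]; exact mul_le_mul_of_nonneg_right (hPb _ (hF x hx).1) (hg x)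
    have h4 : κ ≤ ν * (b * g x + f x) := h1.trans (by gcongr; linarith)
    have h5 := mul_nonneg hν.le (mul_nonneg hb (hg x))
    refine mul_le_mul_of_nonneg_right ?_ (norm_nonneg _)
    nlinarith

lemma abp_pow {a b c ρ : ℝ} (ha : 0 ≤ a) (hb : 0 ≤ b) (hc : 0 ≤ c) (hρ : 0 ≤ ρ) (n : ℕ) :
    (4 * c * (2 * ρ * a + b)) ^ n ≤ (16 * c) ^ n * (ρ ^ n * a ^ n + b ^ n) := by
  have h1 : 2 * ρ * a + b ≤ 2 * max (2 * ρ * a) b := by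
    rw [two_mul (max _ _)]; exact add_le_add (le_max_left _ _) (le_max_right _ _)
  have h2 : (max (2 * ρ * a) b) ^ n ≤ (2 * ρ * a) ^ n + b ^ n := by
    rcases max_cases (2 * ρ * a) b with ⟨h, -⟩ | ⟨h, -⟩ <;> rw [h]
    · have := pow_nonneg hb n; linarith
    · have : 0 ≤ (2 * ρ * a) ^ n := by positivity
      linarith
  have h3 : (2 * ρ * a) ^ n + b ^ n ≤ 2 ^ n * (ρ ^ n * a ^ n + b ^ n) := by
    have : (1 : ℝ) ≤ 2 ^ n := one_le_pow₀ (by norm_num)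
    have h4 : b ^ n ≤ 2 ^ n * b ^ n := le_mul_of_one_le_left (by positivity) this
    calc (2 * ρ * a) ^ n + b ^ n = 2 ^ n * (ρ ^ n * a ^ n) + b ^ n := by
          rw [mul_pow, mul_pow]; ring
      _ ≤ _ := by rw [mul_add]; gcongr
  calc (4 * c * (2 * ρ * a + b)) ^ n ≤ (4 * c * (2 * max (2 * ρ * a) b)) ^ n := by gcongr
    _ = (8 * c) ^ n * (max (2 * ρ * a) b) ^ n := by rw [← mul_pow]; ring
    _ ≤ (8 * c) ^ n * (2 ^ n * (ρ ^ n * a ^ n + b ^ n)) := by gcongr; exact h2.trans h3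
    _ = ((8 * c) * 2) ^ n * (ρ ^ n * a ^ n + b ^ n) := by rw [mul_pow (8 * c) 2]; ring
    _ = _ := by ring

/-- one shell of slopes -/
lemma abp_shell (hn : 0 < n) {w : En n × ℝ → ℝ} {x0 : En n} {R t1 t2 ν ρ : ℝ} {g f : En n → ℝ}
    (hν : 0 < ν) (hρ : 0 < ρ)
    (hw : ContinuousOn w (closedBall x0 R ×ˢ Icc t1 t2))
    (hreg : Reg w (ball x0 R ×ˢ Ioc t1 t2)) (hgm : Measurable g) (hfm : Measurable f)
    (hg : ∀ x, 0 ≤ g x) (hf : ∀ x, 0 < f x)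
    (hex : ∀ p, ‖p‖ ≤ 2 * ρ → ∃ X, Ct w (closedBall x0 R ×ˢ Icc t1 t2) p X)
    (hin : ∀ p, ‖p‖ ≤ 2 * ρ → ∀ X, Ct w (closedBall x0 R ×ˢ Icc t1 t2) p X →
      X ∈ ball x0 R ×ˢ Ioc t1 t2)
    (hpde : ∀ᵐ x : En n, x ∈ ball x0 R → ∀ t ∈ Ioc t1 t2, ∃ A, Ell ν A ∧
      Dt w (x, t) ≤ ∑ i, ∑ j, A i j * Dxx w i j (x, t) + g x * ‖grd w (x, t)‖ + f x) :
    ∃ E : Set (En n), MeasurableSet E ∧ E ⊆ ball x0 R ∧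
      (∀ x ∈ E, ∃ t p, ρ ≤ ‖p‖ ∧ ‖p‖ ≤ 2 * ρ ∧ Ct w (closedBall x0 R ×ˢ Icc t1 t2) p (x, t)) ∧
      ENNReal.ofReal (ρ ^ n) * volume (ball (0 : En n) 1) ≤
        ENNReal.ofReal ((64 * ν) ^ n) * (ENNReal.ofReal (ρ ^ n) * (∫⁻ x in E, ENNReal.ofReal (g x) ^ n)
          + ∫⁻ x in ball x0 R, ENNReal.ofReal (f x) ^ n) := by
  have : NeZero n := ⟨hn.ne'⟩
  set P : Set (En n) := closedBall 0 (2 * ρ) \ ball 0 ρ with hP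
  have hPc : IsCompact P := (isCompact_closedBall _ _).diff isOpen_ball
  have hPm : ∀ p ∈ P, ‖p‖ ≤ 2 * ρ ∧ ρ ≤ ‖p‖ := by
    intro p hp
    simpa [hP] using hp
  have hKc : IsCompact (closedBall x0 R ×ˢ Icc t1 t2) :=
    (isCompact_closedBall x0 R).prod isCompact_Icc
  have hmain := abp_layer hν hw hreg hgm hfm hg hf (by positivity) hPc (fun p hp => (hPm p hp).1)
    (fun p hp => hex p (hPm p hp).1) (fun p hp => hin p (hPm p hp).1) hpde
  set E := {x | ∃ t, ∃ p ∈ P, Ct w (closedBall x0 R ×ˢ Icc t1 t2) p (x, t)} with hE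
  have hEb : E ⊆ ball x0 R := by
    rintro x ⟨t, p, hp, hc⟩
    exact (hin p (hPm p hp).1 _ hc).1
  refine ⟨E, (ct_compact hKc hw hPc).isClosed.measurableSet, hEb, ?_, ?_⟩
  · rintro x ⟨t, p, hp, hc⟩
    exact ⟨t, p, (hPm p hp).2, (hPm p hp).1, hc⟩
  have hball : ball (EuclideanSpace.single (0 : Fin n) (3 * ρ / 2)) (ρ / 2) ⊆ P := by
    intro p hp
    rw [mem_ball, dist_eq_norm] at hp
    have hc : ‖EuclideanSpace.single (0 : Fin n) (3 * ρ / 2)‖ = 3 * ρ / 2 := by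
      rw [PiLp.norm_single, Real.norm_of_nonneg (by positivity)]
    have h1 := abs_norm_sub_norm_le p (EuclideanSpace.single (0 : Fin n) (3 * ρ / 2))
    rw [hc] at h1
    have h2 := abs_le.1 (h1.trans hp.le)
    simp only [hP, Set.mem_sdiff, mem_closedBall, mem_ball, dist_zero_right, not_lt]
    constructor <;> linarith
  have h1 := (measure_mono hball).trans hmain
  rw [addHaar_ball _ _ (by positivity), finrank_euclideanSpace_fin] at h1
  have h2 : ∫⁻ x in E, ENNReal.ofReal (4 * ν * (2 * ρ * g x + f x)) ^ n ≤
      ENNReal.ofReal ((16 * ν) ^ n) * (ENNReal.ofReal (ρ ^ n) * (∫⁻ x in E, ENNReal.ofReal (g x) ^ n)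
          + ∫⁻ x in ball x0 R, ENNReal.ofReal (f x) ^ n) := by
    calc _ ≤ ∫⁻ x in E, ENNReal.ofReal ((16 * ν) ^ n) * (ENNReal.ofReal (ρ ^ n) *
          ENNReal.ofReal (g x) ^ n + ENNReal.ofReal (f x) ^ n) := by
          refine lintegral_mono fun x => ?_
          have hgx := hg x
          have hfx := (hf x).le
          rw [← ENNReal.ofReal_pow (by positivity), ← ENNReal.ofReal_pow hgx,
            ← ENNReal.ofReal_pow hfx, ← ENNReal.ofReal_mul (by positivity),
            ← ENNReal.ofReal_add (by positivity) (by positivity),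
            ← ENNReal.ofReal_mul (by positivity)]
          exact ENNReal.ofReal_le_ofReal (abp_pow hgx hfx hν.le hρ.le n)
      _ = ENNReal.ofReal ((16 * ν) ^ n) * (ENNReal.ofReal (ρ ^ n) * (∫⁻ x in E, ENNReal.ofReal (g x) ^ n)
          + ∫⁻ x in E, ENNReal.ofReal (f x) ^ n) := by
          rw [lintegral_const_mul _ (by fun_prop), lintegral_add_left (by fun_prop),
            lintegral_const_mul _ (by fun_prop)]
      _ ≤ _ := by gcongr
  have h3 := h1.trans (mul_le_mul_right h2 _)
  have e2 : (2 : ℝ≥0∞) ^ n = ENNReal.ofReal (2 ^ n) := by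
    rw [ENNReal.ofReal_pow (by norm_num), ENNReal.ofReal_ofNat]
  calc ENNReal.ofReal (ρ ^ n) * volume (ball (0 : En n) 1)
      = 2 ^ n * (ENNReal.ofReal ((ρ / 2) ^ n) * volume (ball (0 : En n) 1)) := by
        rw [← mul_assoc, e2,
          ← ENNReal.ofReal_mul (by positivity), ← mul_pow]
        congr 3; ring
    _ ≤ 2 ^ n * _ := mul_le_mul_right h3 _
    _ = _ := by
        rw [← mul_assoc, ← mul_assoc, e2,
          ← ENNReal.ofReal_mul (by positivity), ← ENNReal.ofReal_mul (by positivity),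
          ← mul_pow, ← mul_pow]
        congr 3; ring

/-- The parabolic Aleksandrov–Bakelman–Pucci estimate with drift in `L^n_x L^∞_t`. -/
theorem abp (hn : 0 < n) {ν : ℝ} (S : ℝ) (hν : 0 < ν) : ∃ C : ℝ, 0 < C ∧
    ∀ (w : En n × ℝ → ℝ) (x0 : En n) (R t1 t2 κ : ℝ) (g f : En n → ℝ), 0 < R →
      ContinuousOn w (closedBall x0 R ×ˢ Icc t1 t2) →
      Reg w (ball x0 R ×ˢ Ioc t1 t2) → Measurable g → Measurable f →
      (∀ x, 0 ≤ g x) → (∀ x, 0 < f x) →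
      (∀ᵐ x : En n, x ∈ ball x0 R → ∀ t ∈ Ioc t1 t2, ∃ A, Ell ν A ∧
        Dt w (x, t) ≤ ∑ i, ∑ j, A i j * Dxx w i j (x, t) + g x * ‖grd w (x, t)‖ + f x) →
      (∀ x ∈ closedBall x0 R, w (x, t1) ≤ 0) →
      (∀ x ∈ sphere x0 R, ∀ t ∈ Icc t1 t2, w (x, t) ≤ 0) →
      ∫⁻ x in ball x0 R, ENNReal.ofReal (g x) ^ n ≤ ENNReal.ofReal S →
      0 ≤ κ → ∫⁻ x in ball x0 R, ENNReal.ofReal (f x) ^ n ≤ ENNReal.ofReal (κ ^ n) →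
      ∀ X ∈ closedBall x0 R ×ˢ Icc t1 t2, w X ≤ C * R * κ := by
  set ω : ℝ := (volume (ball (0 : En n) 1)).toReal with hω
  have hfin : volume (ball (0 : En n) 1) ≠ ⊤ := measure_ball_lt_top.ne
  have hωpos : 0 < ω := ENNReal.toReal_pos (measure_ball_pos volume _ one_pos).ne' hfin
  set C1 : ℝ := (64 * ν) ^ n with hC1
  have hC1pos : 0 < C1 := by positivity
  set S' : ℝ := max S 0 with hS'
  have hS'0 : 0 ≤ S' := le_max_right _ _
  obtain ⟨N0, hN0⟩ := exists_nat_ge (2 * C1 * S' / ω)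
  set N : ℕ := N0 + 1 with hN
  have hNω : 2 * C1 * S' ≤ N * ω := by
    rw [div_le_iff₀ hωpos] at hN0
    push_cast [hN]; nlinarith
  set B : ℝ := max 1 (2 * C1 / ω) with hB
  have hB1 : 1 ≤ B := le_max_left _ _
  have hBpos : 0 < B := by linarith
  refine ⟨5 * 4 ^ N * B, by positivity, ?_⟩
  intro w x0 R t1 t2 κ g f hR hw hreg hgm hfm hg hf hpde hbot hlat hgS hκ hfκ Xs hXs
  by_contra hcon
  push Not at hcon
  set M := w Xs with hM
  have hMpos : 0 < M := lt_of_le_of_lt (by positivity) hcon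
  have hKc : IsCompact (closedBall x0 R ×ˢ Icc t1 t2) :=
    (isCompact_closedBall x0 R).prod isCompact_Icc
  have hpR : ∀ p : En n, ‖p‖ ≤ 2 * (M / (5 * R)) → ‖p‖ * (2 * R) < M := by
    intro p hp
    have : 2 * (M / (5 * R)) * (2 * R) = 4 / 5 * M := by field_simp; ring
    nlinarith
  have hex : ∀ p : En n, ∃ X, Ct w (closedBall x0 R ×ˢ Icc t1 t2) p X := by
    intro p
    have hc : ContinuousOn (fun X : En n × ℝ => w X - ⟪p, X.1⟫) (closedBall x0 R ×ˢ Icc t1 t2) :=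
      hw.sub (Continuous.continuousOn (by fun_prop))
    obtain ⟨X, hX, hmax⟩ := hKc.exists_isMaxOn ⟨Xs, hXs⟩ hc
    exact ⟨X, hX, fun X' hX' => hmax hX'⟩
  have hin : ∀ p : En n, ‖p‖ ≤ 2 * (M / (5 * R)) → ∀ X,
      Ct w (closedBall x0 R ×ˢ Icc t1 t2) p X → X ∈ ball x0 R ×ˢ Ioc t1 t2 := by
    intro p hp X hX
    have h1 := hX.2 Xs hXs
    have hd : ‖Xs.1 - X.1‖ ≤ 2 * R := by
      have a1 : dist Xs.1 x0 ≤ R := hXs.1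
      have a2 : dist X.1 x0 ≤ R := hX.1.1
      rw [← dist_eq_norm]
      linarith [dist_triangle_right Xs.1 X.1 x0]
    have h2 : ⟪p, Xs.1 - X.1⟫ ≤ ‖p‖ * (2 * R) :=
      (real_inner_le_norm _ _).trans (by gcongr)
    rw [inner_sub_right] at h2
    have h3 := hpR p hp
    have hpos : 0 < w X := by linarith
    obtain ⟨x, t⟩ := X
    obtain ⟨hx, ht⟩ := hX.1
    refine ⟨?_, ?_, ht.2⟩
    · rcases (mem_closedBall.1 hx).lt_or_eq with h | h
      · exact h
      · exact absurd (hlat x h t ht) (not_le.2 hpos)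
    · rcases ht.1.lt_or_eq with h | h
      · exact h
      · simp only at h hx
        subst h
        exact absurd (hbot x hx) (not_le.2 hpos)
  set ρ : ℕ → ℝ := fun j => M / (5 * R) / 4 ^ j with hρ
  have hρpos : ∀ j, 0 < ρ j := fun j => by positivity
  have hρanti : ∀ j k, j ≤ k → ρ k ≤ ρ j := by
    intro j k hjk
    simp only [hρ]; gcongr; norm_num
  have hρ0 : ∀ j, ρ j ≤ M / (5 * R) := by
    intro j
    have := hρanti 0 j (Nat.zero_le _)
    simpa [hρ] using this
  have hsh : ∀ j, ∃ E : Set (En n), MeasurableSet E ∧ E ⊆ ball x0 R ∧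
      (∀ x ∈ E, ∃ t p, ρ j ≤ ‖p‖ ∧ ‖p‖ ≤ 2 * ρ j ∧
        Ct w (closedBall x0 R ×ˢ Icc t1 t2) p (x, t)) ∧
      ENNReal.ofReal (ρ j ^ n) * volume (ball (0 : En n) 1) ≤
        ENNReal.ofReal ((64 * ν) ^ n) * (ENNReal.ofReal (ρ j ^ n) *
          (∫⁻ x in E, ENNReal.ofReal (g x) ^ n)
          + ∫⁻ x in ball x0 R, ENNReal.ofReal (f x) ^ n) := by
    intro j
    refine abp_shell hn hν (hρpos j) hw hreg hgm hfm hg hf (fun p _ => hex p) ?_ hpde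
    intro p hp
    exact hin p (hp.trans (by linarith [hρ0 j]))
  choose E hEm hEb hEp hEi using hsh
  have hdis : ∀ j k, j < k → Disjoint (E j) (E k) := by
    intro j k hjk
    rw [Set.disjoint_left]
    intro x hxj hxk
    obtain ⟨t, p, hp1, hp2, hc⟩ := hEp j x hxj
    obtain ⟨t', p', hp1', hp2', hc'⟩ := hEp k x hxk
    have : p = p' := ct_unique hreg (hin p' (hp2'.trans (by linarith [hρ0 k])) _ hc') hc hc'
    subst this
    have h1 := hρanti (j + 1) k hjk
    have h2 : ρ (j + 1) = ρ j / 4 := by simp only [hρ]; rw [pow_succ]; field_simp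
    have h3 := hρpos j
    linarith
  have hpair : (↑(Finset.range N) : Set ℕ).PairwiseDisjoint E := by
    intro j _ k _ hjk
    rcases lt_or_gt_of_ne hjk with h | h
    · exact hdis j k h
    · exact (hdis k j h).symm
  have hsum : ∑ j ∈ Finset.range N, ∫⁻ x in E j, ENNReal.ofReal (g x) ^ n ≤ ENNReal.ofReal S := by
    rw [← lintegral_biUnion_finset hpair (fun j _ => hEm j)]
    refine (lintegral_mono_set ?_).trans hgS
    exact iUnion₂_subset fun j _ => hEb j
  have hfinj : ∀ j ∈ Finset.range N, ∫⁻ x in E j, ENNReal.ofReal (g x) ^ n ≠ ⊤ := by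
    intro j hj
    exact (((Finset.single_le_sum (f := fun j => ∫⁻ x in E j, ENNReal.ofReal (g x) ^ n)
      (fun _ _ => zero_le) hj).trans hsum).trans_lt
      ENNReal.ofReal_lt_top).ne
  set G : ℕ → ℝ := fun j => (∫⁻ x in E j, ENNReal.ofReal (g x) ^ n).toReal with hG
  have hGsum : ∑ j ∈ Finset.range N, G j ≤ S' := by
    simp only [hG]
    rw [← ENNReal.toReal_sum hfinj]
    refine ENNReal.toReal_le_of_le_ofReal hS'0 (hsum.trans (ENNReal.ofReal_le_ofReal (le_max_left _ _)))
  have hreal : ∀ j ∈ Finset.range N, ω ≤ C1 * (G j + κ ^ n / ρ N ^ n) := by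
    intro j hj
    have h1 := (hEi j).trans (mul_le_mul_right (add_le_add_right hfκ _) _)
    have hGe : ∫⁻ x in E j, ENNReal.ofReal (g x) ^ n = ENNReal.ofReal (G j) :=
      (ENNReal.ofReal_toReal (hfinj j hj)).symm
    have hωe : volume (ball (0 : En n) 1) = ENNReal.ofReal ω := (ENNReal.ofReal_toReal hfin).symm
    have hG0 : 0 ≤ G j := ENNReal.toReal_nonneg
    have hρj := hρpos j
    rw [hGe, hωe, ← ENNReal.ofReal_mul (by positivity), ← ENNReal.ofReal_mul (by positivity),
      ← ENNReal.ofReal_add (by positivity) (by positivity),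
      ← ENNReal.ofReal_mul (by positivity), ENNReal.ofReal_le_ofReal_iff (by positivity)] at h1
    have h2 : ρ N ^ n ≤ ρ j ^ n :=
      pow_le_pow_left₀ (hρpos N).le (hρanti j N (Finset.mem_range.1 hj).le) n
    have h3 : ω ≤ C1 * (G j + κ ^ n / ρ j ^ n) := by
      have hp : 0 < ρ j ^ n := by positivity
      rw [← mul_le_mul_iff_right₀ hp]
      refine h1.trans (le_of_eq ?_)
      field_simp
      rw [hC1]; ring
    have := hρpos N
    refine h3.trans ?_
    gcongr
  have hN1 := Finset.sum_le_sum hreal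
  rw [Finset.sum_const, Finset.card_range, ← Finset.mul_sum, Finset.sum_add_distrib,
    Finset.sum_const, Finset.card_range, nsmul_eq_mul, nsmul_eq_mul] at hN1
  have hNpos : (0 : ℝ) < N := by rw [hN]; positivity
  set q := κ ^ n / ρ N ^ n with hq
  have h5 : (N : ℝ) * ω ≤ N * (2 * C1 * q) := by
    have := mul_le_mul_of_nonneg_left hGsum hC1pos.le
    nlinarith
  have h6 : ω ≤ 2 * C1 * q := le_of_mul_le_mul_left h5 hNpos
  have hρN := hρpos N
  have h7 : ρ N ^ n ≤ (B * κ) ^ n := by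
    have h8 : ρ N ^ n ≤ (2 * C1 / ω) * κ ^ n := by
      rw [hq, ← mul_div_assoc, le_div_iff₀ (by positivity)] at h6
      rw [div_mul_eq_mul_div, le_div_iff₀ hωpos]
      linarith
    rw [mul_pow]
    refine h8.trans (mul_le_mul_of_nonneg_right ((le_max_right (1 : ℝ) (2 * C1 / ω)).trans ?_) (by positivity))
    exact le_self_pow₀ hB1 hn.ne'
  have h9 : ρ N ≤ B * κ := le_of_pow_le_pow_left₀ hn.ne' (by positivity) h7
  simp only [hρ] at h9
  rw [div_div, div_le_iff₀ (by positivity)] at h9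
  nlinarith

lemma ell_compact (ν : ℝ) (hν : 0 < ν) : IsCompact {A : Fin n → Fin n → ℝ | Ell ν A} := by
  have hc : IsCompact (Set.pi univ (fun _ : Fin n => Set.pi univ (fun _ : Fin n => Icc (-ν) ν))) :=
    isCompact_univ_pi fun _ => isCompact_univ_pi fun _ => isCompact_Icc
  refine hc.of_isClosed_subset ?_ ?_
  · have h1 : IsClosed {A : Fin n → Fin n → ℝ | ∑ i, ∑ j, (A i j) ^ 2 ≤ ν ^ 2} :=
      isClosed_le (by fun_prop) (by fun_prop)
    have h2 : IsClosed {A : Fin n → Fin n → ℝ | ∀ ξ : Fin n → ℝ,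
        ν⁻¹ * (∑ i, ξ i ^ 2) ≤ ∑ i, ∑ j, A i j * ξ i * ξ j} := by
      rw [Set.ofPred_forall]
      exact isClosed_iInter fun ξ => isClosed_le (by fun_prop) (by fun_prop)
    exact h2.inter h1
  · intro A hA i _ j _
    have h1 : (A i j) ^ 2 ≤ ν ^ 2 := by
      refine le_trans ?_ hA.2
      refine le_trans ?_ (Finset.single_le_sum (f := fun i => ∑ j, (A i j) ^ 2)
        (fun i _ => Finset.sum_nonneg fun j _ => sq_nonneg _) (Finset.mem_univ i))
      exact Finset.single_le_sum (f := fun j => (A i j) ^ 2)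
        (fun j _ => sq_nonneg _) (Finset.mem_univ j)
    exact abs_le.1 (abs_le_of_sq_le_sq h1 hν.le)

lemma dot_le_grd (v : En n) (u : En n × ℝ → ℝ) (X : En n × ℝ) :
    ∑ i, v i * Dx u i X ≤ ‖v‖ * ‖grd u X‖ := by
  refine le_trans (le_of_eq ?_) (real_inner_le_norm v (grd u X))
  simp [PiLp.inner_apply, grd, mul_comm]

lemma closure_pcyl (y : En n) (s r : ℝ) (hr : 0 < r) :
    closure (pcyl (y, s) r) = closedBall y r ×ˢ Icc (s - r ^ 2) s := by
  have : 0 < r ^ 2 := by positivity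
  rw [pcyl, box, closure_prod_eq, closure_ball _ hr.ne', closure_Ioo (by simp only; linarith)]

/-- pass to the limit in the differential inequality -/
lemma pde_limit {ν β : ℝ} (hν : 0 < ν) {Q : Set (En n × ℝ)} {u : En n × ℝ → ℝ}
    (hC : IsC21 u (closure Q)) {X : En n × ℝ} (hX : X ∈ closure Q)
    (hseq : ∀ m : ℕ, ∃ X' ∈ Q, dist X' X < 1 / ((m : ℝ) + 1) ∧ ∃ A, Ell ν A ∧
      Dt u X' ≤ ∑ i, ∑ j, A i j * Dxx u i j X' + β * ‖grd u X'‖) :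
    ∃ A, Ell ν A ∧ Dt u X ≤ ∑ i, ∑ j, A i j * Dxx u i j X + β * ‖grd u X‖ := by
  choose Z hZQ hZd A0 hA hle using hseq
  let A : ℕ → Fin n → Fin n → ℝ := A0
  have hZ : Tendsto Z atTop (𝓝[closure Q] X) := by
    refine tendsto_nhdsWithin_iff.2 ⟨?_, Eventually.of_forall fun m => subset_closure (hZQ m)⟩
    rw [tendsto_iff_dist_tendsto_zero]
    exact squeeze_zero (fun _ => dist_nonneg) (fun m => (hZd m).le)
      tendsto_one_div_add_atTop_nhds_zero_nat
  obtain ⟨B, hB, φ, hφ, hlim⟩ := (ell_compact (n := n) ν hν).tendsto_subseq (x := A) hA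
  refine ⟨B, hB, ?_⟩
  have hZφ := hZ.comp hφ.tendsto_atTop
  have h1 : Tendsto (fun m => Dt u (Z (φ m))) atTop (𝓝 (Dt u X)) := (hC.cont_t X hX).tendsto.comp hZφ
  have h2 : ∀ i j, Tendsto (fun m => Dxx u i j (Z (φ m))) atTop (𝓝 (Dxx u i j X)) :=
    fun i j => (hC.cont_xx i j X hX).tendsto.comp hZφ
  have h3 : Tendsto (fun m => ‖grd u (Z (φ m))‖) atTop (𝓝 ‖grd u X‖) := by
    have : ∀ i, Tendsto (fun m => Dx u i (Z (φ m))) atTop (𝓝 (Dx u i X)) :=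
      fun i => (hC.cont_x i X hX).tendsto.comp hZφ
    refine Tendsto.norm ?_
    exact ((PiLp.continuous_toLp 2 _).tendsto _).comp (tendsto_pi_nhds.2 this)
  have h4 : ∀ i j, Tendsto (fun m => A (φ m) i j) atTop (𝓝 (B i j)) :=
    fun i j => tendsto_pi_nhds.1 (tendsto_pi_nhds.1 hlim i) j
  refine le_of_tendsto_of_tendsto' h1 ?_ (fun m => hle (φ m))
  refine Tendsto.add ?_ (h3.const_mul β)
  exact tendsto_finsetSum _ fun i _ => tendsto_finsetSum _ fun j _ => (h4 i j).mul (h2 i j)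

lemma exists_small_gap {γ h : En n → ℝ≥0∞} (hh : Measurable h) (hle : h ≤ γ)
    (heq : ∫⁻ x, γ x = ∫⁻ x, h x) (hfin : ∫⁻ x, γ x ≠ ⊤) {ε : ℝ≥0∞} (hε : ε ≠ 0) {A : Set (En n)}
    (hA : MeasurableSet A) (hpos : volume A ≠ 0) : ∃ x ∈ A, γ x ≤ h x + ε := by
  by_contra hcon
  push Not at hcon
  have h1 : ∫⁻ x, (h x + A.indicator (fun _ => ε) x) ≤ ∫⁻ x, γ x := by
    refine lintegral_mono fun x => ?_
    by_cases hx : x ∈ A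
    · simpa [hx] using (hcon x hx).le
    · simpa [hx] using hle x
  rw [lintegral_add_left hh, lintegral_indicator_const hA, heq] at h1
  rw [heq] at hfin
  have h2 : ∫⁻ x, h x + 0 < (∫⁻ x, h x) + ε * volume A := by
    simp only [add_zero]
    exact ENNReal.lt_add_right hfin (mul_ne_zero hε hpos)
  simp only [add_zero] at h2
  exact absurd h1 (not_le.2 h2)

lemma ae_dense_pts {A : Set (En n)} :
    ∀ᵐ x, x ∈ A → ∀ U ∈ 𝓝 x, volume (U ∩ A) ≠ 0 := by
  have : volume {x | x ∈ A ∧ ∃ U ∈ 𝓝 x, volume (U ∩ A) = 0} = 0 := by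
    refine measure_null_of_locally_null _ ?_
    rintro x ⟨hxA, U, hU, h0⟩
    refine ⟨U ∩ {x | x ∈ A ∧ ∃ U ∈ 𝓝 x, volume (U ∩ A) = 0},
      inter_mem (mem_nhdsWithin_of_mem_nhds hU) self_mem_nhdsWithin, ?_⟩
    exact measure_mono_null (inter_subset_inter_right _ fun z hz => hz.1) h0
  rw [← compl_mem_ae_iff] at this
  filter_upwards [this] with x hx hxA U hU h0
  exact hx ⟨hxA, U, hU, h0⟩

/-- Replace the (possibly non measurable) drift by a measurable time independent bound. -/
theorem reduction (hn : 0 < n) {ν S : ℝ} (hν : 0 < ν) {y : En n} {s r : ℝ} (hr : 0 < r)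
    {u : En n × ℝ → ℝ} {a : En n × ℝ → Matrix (Fin n) (Fin n) ℝ} {b : En n × ℝ → En n}
    (hC : IsC21 u (closure (pcyl (y, s) r))) (hUP : UnifParabolic ν a (pcyl (y, s) r))
    (hb : LxnLtinfPow b (pcyl (y, s) r) ≤ ENNReal.ofReal S)
    (hpde : ∀ X ∈ pcyl (y, s) r, 0 ≤ -Dt u X + Lop a b u X) :
    ∃ g : En n → ℝ, Measurable g ∧ (∀ x, 0 < g x) ∧
      ∫⁻ x in ball y r, ENNReal.ofReal (g x) ^ n ≤
        ENNReal.ofReal (max S 0 + 2 * (volume (ball (0 : En n) 1)).toReal) ∧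
      ∀ᵐ x, x ∈ ball y r → ∀ t ∈ Ioc (s - r ^ 2) s, ∃ A, Ell ν A ∧
        Dt u (x, t) ≤ ∑ i, ∑ j, A i j * Dxx u i j (x, t) + g x * ‖grd u (x, t)‖ := by
  set Q := pcyl (y, s) r with hQ
  set γ : En n → ℝ≥0∞ := fun x =>
    (essSup (fun t => (‖b (x, t)‖₊ : ℝ≥0∞)) (volume.restrict {t | (x, t) ∈ Q})) ^ n with hγ
  have hγS : ∫⁻ x, γ x ≤ ENNReal.ofReal S := hb
  obtain ⟨h, hhm, hhle, hheq⟩ := exists_measurable_le_lintegral_eq volume γ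
  have hγfin : ∫⁻ x, γ x ≠ ⊤ := (hγS.trans_lt ENNReal.ofReal_lt_top).ne
  have hhfin : ∀ᵐ x, h x < ⊤ := ae_lt_top hhm (by rw [← hheq]; exact hγfin)
  set e : ℝ := (r ^ n)⁻¹ with he
  have hepos : 0 < e := by positivity
  set A : ℕ → Set (En n) := fun k => {x | ENNReal.ofReal (k * e) ≤ h x ∧
    h x < ENNReal.ofReal ((k + 1) * e)} with hA
  have hAm : ∀ k, MeasurableSet (A k) := fun k =>
    (measurableSet_le measurable_const hhm).inter (measurableSet_lt hhm measurable_const)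
  have hdense : ∀ᵐ x, ∀ k, x ∈ A k → ∀ U ∈ 𝓝 x, volume (U ∩ A k) ≠ 0 :=
    ae_all_iff.2 fun k => ae_dense_pts
  have hn' : (n : ℝ) ≠ 0 := Nat.cast_ne_zero.2 hn.ne'
  have hpow : ∀ c : ℝ, 0 ≤ c → (c ^ (1 / (n : ℝ))) ^ n = c := by
    intro c hc
    rw [← Real.rpow_natCast, ← Real.rpow_mul hc, one_div, inv_mul_cancel₀ hn', Real.rpow_one]
  refine ⟨fun x => ((h x).toReal + 2 * e) ^ (1 / (n : ℝ)), by fun_prop, ?_, ?_, ?_⟩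
  · intro x; positivity
  · calc ∫⁻ x in ball y r, ENNReal.ofReal (((h x).toReal + 2 * e) ^ (1 / (n : ℝ))) ^ n
        ≤ ∫⁻ x in ball y r, (h x + ENNReal.ofReal (2 * e)) := by
          refine lintegral_mono fun x => ?_
          rw [← ENNReal.ofReal_pow (by positivity), hpow _ (by positivity),
            ENNReal.ofReal_add (by positivity) (by positivity)]
          gcongr
          exact ENNReal.ofReal_toReal_le
      _ = (∫⁻ x in ball y r, h x) + ENNReal.ofReal (2 * e) * volume (ball y r) := by
          rw [lintegral_add_left hhm, setLIntegral_const]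
      _ ≤ ENNReal.ofReal (max S 0) + ENNReal.ofReal (2 * (volume (ball (0 : En n) 1)).toReal) := by
          gcongr
          · refine (setLIntegral_le_lintegral _ _).trans ?_
            rw [← hheq]
            exact hγS.trans (ENNReal.ofReal_le_ofReal (le_max_left _ _))
          · rw [addHaar_ball_of_pos _ _ hr, finrank_euclideanSpace_fin, ← mul_assoc,
              ← ENNReal.ofReal_mul (by positivity), ENNReal.ofReal_mul (by norm_num : (0:ℝ) ≤ 2),
              ENNReal.ofReal_toReal measure_ball_lt_top.ne, mul_assoc 2, he,
              inv_mul_cancel₀ (by positivity), mul_one]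
      _ = _ := by rw [ENNReal.ofReal_add (le_max_right _ _) (by positivity)]
  · filter_upwards [hhfin, hdense] with x hxfin hxd hx t ht
    obtain ⟨k, hk⟩ : ∃ k : ℕ, x ∈ A k := by
      refine ⟨⌊(h x).toReal / e⌋₊, ?_, ?_⟩
      · rw [ENNReal.ofReal_le_iff_le_toReal hxfin.ne, ← le_div_iff₀ hepos]
        exact Nat.floor_le (by positivity)
      · rw [ENNReal.lt_ofReal_iff_toReal_lt hxfin.ne, ← div_lt_iff₀ hepos]
        exact Nat.lt_floor_add_one _
    have hkh : k * e ≤ (h x).toReal := (ENNReal.ofReal_le_iff_le_toReal hxfin.ne).1 hk.1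
    set β : ℝ := ((k + 2) * e) ^ (1 / (n : ℝ)) with hβ
    have hβ0 : 0 ≤ β := by positivity
    have hcl : (x, t) ∈ closure Q := by
      rw [hQ, closure_pcyl y s r hr]
      exact ⟨ball_subset_closedBall hx, Ioc_subset_Icc_self ht⟩
    have key : ∃ A, Ell ν A ∧
        Dt u (x, t) ≤ ∑ i, ∑ j, A i j * Dxx u i j (x, t) + β * ‖grd u (x, t)‖ := by
      refine pde_limit hν hC hcl fun m => ?_
      set η : ℝ := 1 / ((m : ℝ) + 1) with hη
      have hηpos : 0 < η := by positivity
      have hU : ball x η ∩ ball y r ∈ 𝓝 x :=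
        inter_mem (ball_mem_nhds x hηpos) (isOpen_ball.mem_nhds hx)
      have hUm : MeasurableSet ((ball x η ∩ ball y r) ∩ A k) :=
        (measurableSet_ball.inter measurableSet_ball).inter (hAm k)
      obtain ⟨x', ⟨⟨hx'1, hx'2⟩, hx'A⟩, hgap⟩ := exists_small_gap hhm hhle hheq hγfin
        (ε := ENNReal.ofReal e) (by simpa using hepos) hUm (hxd k hk _ hU)
      have hslice : {t | (x', t) ∈ Q} = Ioo (s - r ^ 2) s := by
        ext t'
        simp only [hQ, pcyl, box, mem_ofPred_eq, mem_prod, hx'2, true_and]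
      have hess : essSup (fun t => (‖b (x', t)‖₊ : ℝ≥0∞)) (volume.restrict (Ioo (s - r ^ 2) s)) ≤
          ENNReal.ofReal β := by
        have h1 : γ x' ≤ ENNReal.ofReal β ^ n := by
          rw [← ENNReal.ofReal_pow hβ0, hβ, hpow _ (by positivity)]
          refine hgap.trans ?_
          refine (add_le_add_left hx'A.2.le _).trans ?_
          rw [← ENNReal.ofReal_add (by positivity) hepos.le]
          exact ENNReal.ofReal_le_ofReal (by linarith)
        simp only [hγ, hslice] at h1
        exact (ENNReal.pow_le_pow_left_iff hn.ne').1 h1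
      have hae : ∀ᵐ t' ∂(volume.restrict (Ioo (s - r ^ 2) s)), ‖b (x', t')‖ ≤ β := by
        filter_upwards [ENNReal.ae_le_essSup (μ := volume.restrict (Ioo (s - r ^ 2) s))
          (fun t => (‖b (x', t)‖₊ : ℝ≥0∞))] with t' ht'
        have h2 := ht'.trans hess
        rw [← ENNReal.ofReal_coe_nnreal, ENNReal.ofReal_le_ofReal_iff hβ0, coe_nnnorm] at h2
        exact h2
      rw [ae_restrict_iff' measurableSet_Ioo] at hae
      have hIpos : volume (Ioo (max (s - r ^ 2) (t - η)) t) ≠ 0 := by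
        rw [Real.volume_Ioo]
        simp only [ne_eq, ENNReal.ofReal_eq_zero, not_le, sub_pos, max_lt_iff]
        exact ⟨ht.1, by linarith⟩
      obtain ⟨t', ht'I, ht'⟩ : ∃ t' ∈ Ioo (max (s - r ^ 2) (t - η)) t,
          (t' ∈ Ioo (s - r ^ 2) s → ‖b (x', t')‖ ≤ β) := by
        by_contra hcon
        push Not at hcon
        refine hIpos (measure_mono_null (fun t' h' => ?_) (ae_iff.1 hae))
        have := hcon t' h'
        simp only [mem_ofPred_eq]
        push Not
        exact this
      have hI := max_lt_iff.1 ht'I.1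
      have ht's : t' ∈ Ioo (s - r ^ 2) s := ⟨hI.1, ht'I.2.trans_le ht.2⟩
      have hbb := ht' ht's
      have hXQ : (x', t') ∈ Q := ⟨hx'2, ht's⟩
      refine ⟨(x', t'), hXQ, ?_, a (x', t'), hUP _ hXQ, ?_⟩
      · rw [Prod.dist_eq, max_lt_iff]
        refine ⟨hx'1, ?_⟩
        simp only
        rw [Real.dist_eq, abs_lt]
        constructor <;> linarith [hI.2, ht'I.2]
      · have h3 := hpde _ hXQ
        have h4 := dot_le_grd (b (x', t')) u (x', t')
        have h5 := mul_le_mul_of_nonneg_right hbb (norm_nonneg (grd u (x', t')))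
        rw [Lop] at h3
        linarith
    obtain ⟨B, hB, hle⟩ := key
    refine ⟨B, hB, hle.trans ?_⟩
    gcongr
    refine Real.rpow_le_rpow (by positivity) (by linarith) (by positivity)

lemma dx_add {u v : En n × ℝ → ℝ} {X : En n × ℝ}
    (hu : DifferentiableAt ℝ (fun x => u (x, X.2)) X.1)
    (hv : DifferentiableAt ℝ (fun x => v (x, X.2)) X.1) (i : Fin n) :
    Dx (fun Y => u Y + v Y) i X = Dx u i X + Dx v i X := by
  simp only [Dx]
  rw [fderiv_fun_add hu hv]
  rfl

lemma reg_add {u v : En n × ℝ → ℝ} {U : Set (En n)} {I : Set ℝ} (hU : IsOpen U)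
    (hu : Reg u (U ×ˢ I)) (hv : Reg v (U ×ˢ I)) :
    Reg (fun Y => u Y + v Y) (U ×ˢ I) ∧ ∀ X ∈ U ×ˢ I,
      Dt (fun Y => u Y + v Y) X = Dt u X + Dt v X ∧
      (∀ i, Dx (fun Y => u Y + v Y) i X = Dx u i X + Dx v i X) ∧
      ∀ i j, Dxx (fun Y => u Y + v Y) i j X = Dxx u i j X + Dxx v i j X := by
  have hev : ∀ X ∈ U ×ˢ I, ∀ j, (fun x => Dx (fun Y => u Y + v Y) j (x, X.2)) =ᶠ[𝓝 X.1]
      fun x => Dx u j (x, X.2) + Dx v j (x, X.2) := by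
    intro X hX j
    filter_upwards [hU.mem_nhds hX.1] with x hx
    exact dx_add (X := (x, X.2)) (hu.dx _ ⟨hx, hX.2⟩) (hv.dx _ ⟨hx, hX.2⟩) j
  refine ⟨⟨fun X hX => (hu.dt X hX).add (hv.dt X hX), fun X hX => (hu.dx X hX).add (hv.dx X hX),
    fun j X hX => ((hu.dxx j X hX).add (hv.dxx j X hX)).congr_of_eventuallyEq (hev X hX j)⟩, ?_⟩
  intro X hX
  refine ⟨?_, fun i => dx_add (hu.dx X hX) (hv.dx X hX) i, fun i j => ?_⟩
  · exact deriv_add (hu.dt X hX) (hv.dt X hX)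
  · have h1 := dx_add (u := Dx u j) (v := Dx v j) (hu.dxx j X hX) (hv.dxx j X hX) i
    rw [Dxx, Dxx, Dxx, ← h1]
    simp only [Dx]
    have h2 := (hev X hX j).fderiv_eq (𝕜 := ℝ)
    simp only [Dx] at h2
    rw [h2]

lemma grd_norm_sub {u v w : En n × ℝ → ℝ} {X : En n × ℝ}
    (h : ∀ i, Dx w i X = Dx u i X + Dx v i X) : ‖grd u X‖ ≤ ‖grd w X‖ + ‖grd v X‖ := by
  have : grd u X = grd w X - grd v X := by
    ext i
    simp [grd, h i]
  rw [this]
  exact norm_sub_le _ _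

/-- Subsolutions on the box `B_r(y) × (t1, t2]`. -/
structure SubSol (ν S : ℝ) (y : En n) (r t1 t2 : ℝ) (u : En n × ℝ → ℝ) (g : En n → ℝ) : Prop where
  cont : ContinuousOn u (closedBall y r ×ˢ Icc t1 t2)
  reg : Reg u (ball y r ×ˢ Ioc t1 t2)
  gm : Measurable g
  gpos : ∀ x, 0 < g x
  gS : ∫⁻ x in ball y r, ENNReal.ofReal (g x) ^ n ≤ ENNReal.ofReal S
  pde : ∀ᵐ x : En n, x ∈ ball y r → ∀ t ∈ Ioc t1 t2, ∃ A, Ell ν A ∧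
    Dt u (x, t) ≤ ∑ i, ∑ j, A i j * Dxx u i j (x, t) + g x * ‖grd u (x, t)‖

lemma closedBall_sub {x0 y : En n} {R r : ℝ} (hR : 0 < R) (h : ball x0 R ⊆ ball y r) :
    closedBall x0 R ⊆ closedBall y r := by
  rw [← closure_ball x0 hR.ne']
  exact (closure_mono h).trans closure_ball_subset_closedBall

lemma SubSol.mono {ν S : ℝ} {y x0 : En n} {r R t1 t2 s1 s2 : ℝ} {u : En n × ℝ → ℝ} {g : En n → ℝ}
    (h : SubSol ν S y r t1 t2 u g) (hR : 0 < R) (hb : ball x0 R ⊆ ball y r) (h1 : t1 ≤ s1)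
    (h2 : s2 ≤ t2) : SubSol ν S x0 R s1 s2 u g where
  cont := h.cont.mono (prod_mono (closedBall_sub hR hb) (Icc_subset_Icc h1 h2))
  reg := by
    have hs : ball x0 R ×ˢ Ioc s1 s2 ⊆ ball y r ×ˢ Ioc t1 t2 := prod_mono hb (Ioc_subset_Ioc h1 h2)
    exact ⟨fun X hX => h.reg.dt X (hs hX), fun X hX => h.reg.dx X (hs hX),
      fun j X hX => h.reg.dxx j X (hs hX)⟩
  gm := h.gm
  gpos := h.gpos
  gS := (lintegral_mono_set hb).trans h.gS
  pde := by
    filter_upwards [h.pde] with x hx hxb t ht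
    exact hx (hb hxb) t (Ioc_subset_Ioc h1 h2 ht)

/-- Comparison with a barrier, a consequence of ABP. -/
theorem compare (hn : 0 < n) {ν : ℝ} (S : ℝ) (hν : 0 < ν) : ∃ C : ℝ, 0 < C ∧
    ∀ (u v : En n × ℝ → ℝ) (x0 : En n) (R t1 t2 κ : ℝ) (g f : En n → ℝ), 0 < R →
      SubSol ν S x0 R t1 t2 u g →
      ContinuousOn v (closedBall x0 R ×ˢ Icc t1 t2) → Reg v (ball x0 R ×ˢ Ioc t1 t2) →
      Measurable f → (∀ x, 0 < f x) →
      (∀ x ∈ ball x0 R, ∀ t ∈ Ioc t1 t2, ∀ A, Ell ν A →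
        Dt v (x, t) + g x * ‖grd v (x, t)‖ ≤ ∑ i, ∑ j, A i j * Dxx v i j (x, t) + f x) →
      (∀ x ∈ closedBall x0 R, u (x, t1) + v (x, t1) ≤ 0) →
      (∀ x ∈ sphere x0 R, ∀ t ∈ Icc t1 t2, u (x, t) + v (x, t) ≤ 0) →
      0 ≤ κ → ∫⁻ x in ball x0 R, ENNReal.ofReal (f x) ^ n ≤ ENNReal.ofReal (κ ^ n) →
      ∀ X ∈ closedBall x0 R ×ˢ Icc t1 t2, u X + v X ≤ C * R * κ := by
  obtain ⟨C, hC, habp⟩ := abp hn S hν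
  refine ⟨C, hC, ?_⟩
  intro u v x0 R t1 t2 κ g f hR hu hvc hvr hfm hf hv hbot hlat hκ hfκ X hX
  obtain ⟨hreg, hD⟩ := reg_add isOpen_ball hu.reg hvr
  refine habp (fun Y => u Y + v Y) x0 R t1 t2 κ g f hR (hu.cont.add hvc) hreg hu.gm hfm
    (fun x => (hu.gpos x).le) hf ?_ hbot hlat hu.gS hκ hfκ X hX
  filter_upwards [hu.pde] with x hx hxb t ht
  obtain ⟨A, hA, hle⟩ := hx hxb t ht
  obtain ⟨d1, d2, d3⟩ := hD (x, t) ⟨hxb, ht⟩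
  refine ⟨A, hA, ?_⟩
  have h1 := hv x hxb t ht A hA
  have h2 := mul_le_mul_of_nonneg_left (grd_norm_sub d2) (hu.gpos x).le
  rw [d1]
  simp only [d3, mul_add, Finset.sum_add_distrib]
  linarith

lemma hasDerivAt_pospow (k : ℕ) (v : ℝ) :
    HasDerivAt (fun v : ℝ => (max v 0) ^ (k + 2)) ((k + 2 : ℕ) * (max v 0) ^ (k + 1)) v := by
  rcases lt_trichotomy v 0 with h | h | h
  · rw [max_eq_right h.le]
    have h1 : HasDerivAt (fun _ : ℝ => (0 : ℝ)) 0 v := hasDerivAt_const v 0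
    have h2 : (fun v : ℝ => (max v 0) ^ (k + 2)) =ᶠ[𝓝 v] fun _ => 0 := by
      filter_upwards [Iio_mem_nhds h] with z hz
      rw [max_eq_right (le_of_lt hz)]; simp
    have h3 := h1.congr_of_eventuallyEq h2
    simpa using h3
  · subst h
    have h1 : HasDerivWithinAt (fun v : ℝ => (max v 0) ^ (k + 2)) 0 (Iic 0) 0 := by
      refine (hasDerivWithinAt_const (0 : ℝ) (Iic 0) (0 : ℝ)).congr ?_ (by simp)
      intro z hz; rw [max_eq_right hz]; simp
    have h2 : HasDerivWithinAt (fun v : ℝ => (max v 0) ^ (k + 2)) 0 (Ici 0) 0 := by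
      have h3 := (hasDerivAt_pow (k + 2) (0 : ℝ)).hasDerivWithinAt (s := Ici 0)
      have h4 : ((k + 2 : ℕ) : ℝ) * 0 ^ (k + 2 - 1) = 0 := by simp
      rw [h4] at h3
      exact h3.congr (fun z hz => by rw [max_eq_left hz]) (by simp)
    have h5 := h1.union h2
    rw [Iic_union_Ici, hasDerivWithinAt_univ] at h5
    simpa using h5
  · rw [max_eq_left h.le]
    have h1 := hasDerivAt_pow (k + 2) v
    refine (h1.congr_of_eventuallyEq ?_)
    filter_upwards [Ioi_mem_nhds h] with z hz
    rw [max_eq_left (le_of_lt hz)]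

/-- The barrier. -/
def vbar (Φ : En n → ℝ) (K θ0 a t1 M : ℝ) (p : ℕ) (X : En n × ℝ) : ℝ :=
  K * (max (θ0 + a * (X.2 - t1) - Φ X.1) 0) ^ 3 * ((θ0 + a * (X.2 - t1))⁻¹) ^ (p + 3) - M

lemma vbar_facts {Φ : En n → ℝ} {K θ0 a t1 M : ℝ} {p : ℕ} (h1 : Differentiable ℝ Φ)
    (h2 : ∀ j, Differentiable ℝ (fun x => fderiv ℝ Φ x (EuclideanSpace.single j 1)))
    {I : Set ℝ} (hI : ∀ t ∈ I, 0 < θ0 + a * (t - t1)) (U : Set (En n)) :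
    Reg (vbar Φ K θ0 a t1 M p) (U ×ˢ I) ∧
    (∀ x, ∀ t ∈ I, Dt (vbar Φ K θ0 a t1 M p) (x, t) =
      (K * ((θ0 + a * (t - t1))⁻¹) ^ (p + 3)) * (3 * (max (θ0 + a * (t - t1) - Φ x) 0) ^ 2 * a
        - (p + 3) * (max (θ0 + a * (t - t1) - Φ x) 0) ^ 3 * a * (θ0 + a * (t - t1))⁻¹)) ∧
    (∀ x, ∀ t, ∀ i, Dx (vbar Φ K θ0 a t1 M p) i (x, t) =
      -(3 * (K * ((θ0 + a * (t - t1))⁻¹) ^ (p + 3)) * (max (θ0 + a * (t - t1) - Φ x) 0) ^ 2)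
        * fderiv ℝ Φ x (EuclideanSpace.single i 1)) ∧
    (∀ x, ∀ t, ∀ i j, Dxx (vbar Φ K θ0 a t1 M p) i j (x, t) =
      (K * ((θ0 + a * (t - t1))⁻¹) ^ (p + 3)) *
      (6 * (max (θ0 + a * (t - t1) - Φ x) 0) * (fderiv ℝ Φ x (EuclideanSpace.single i 1) *
          fderiv ℝ Φ x (EuclideanSpace.single j 1)) -
        3 * (max (θ0 + a * (t - t1) - Φ x) 0) ^ 2 *
          fderiv ℝ (fun x => fderiv ℝ Φ x (EuclideanSpace.single j 1)) x
            (EuclideanSpace.single i 1))) := by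
  have hθ : ∀ t, HasDerivAt (fun t => θ0 + a * (t - t1)) a t := by
    intro t
    have := (((hasDerivAt_id t).sub_const t1).const_mul a).const_add θ0
    simpa using this
  have hP : ∀ (k : ℕ) (x : En n) (t : ℝ), HasFDerivAt (fun x => (max (θ0 + a * (t - t1) - Φ x) 0) ^ (k + 2))
      (((k + 2 : ℕ) * (max (θ0 + a * (t - t1) - Φ x) 0) ^ (k + 1)) • (- fderiv ℝ Φ x)) x := by
    intro k x t
    exact (hasDerivAt_pospow k _).comp_hasFDerivAt x ((h1 x).hasFDerivAt.const_sub _)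
  have hx : ∀ x t, HasFDerivAt (fun x => vbar Φ K θ0 a t1 M p (x, t))
      ((-(3 * (K * ((θ0 + a * (t - t1))⁻¹) ^ (p + 3)) * (max (θ0 + a * (t - t1) - Φ x) 0) ^ 2)) •
        fderiv ℝ Φ x) x := by
    intro x t
    have h := (((hP 1 x t).const_mul K).mul_const (((θ0 + a * (t - t1))⁻¹) ^ (p + 3))).sub_const M
    refine HasFDerivAt.congr_fderiv h ?_
    ext z
    simp only [_root_.smul_apply, _root_.neg_apply, smul_eq_mul]
    push_cast
    ring
  have hdx : ∀ x, ∀ t, ∀ i, Dx (vbar Φ K θ0 a t1 M p) i (x, t) =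
      -(3 * (K * ((θ0 + a * (t - t1))⁻¹) ^ (p + 3)) * (max (θ0 + a * (t - t1) - Φ x) 0) ^ 2)
        * fderiv ℝ Φ x (EuclideanSpace.single i 1) := by
    intro x t i
    simp only [Dx]
    rw [(hx x t).fderiv]
    rfl
  have hxx : ∀ x t j, HasFDerivAt (fun x => Dx (vbar Φ K θ0 a t1 M p) j (x, t))
      ((-(3 * (K * ((θ0 + a * (t - t1))⁻¹) ^ (p + 3)))) •
        (((max (θ0 + a * (t - t1) - Φ x) 0) ^ 2) •
          fderiv ℝ (fun x => fderiv ℝ Φ x (EuclideanSpace.single j 1)) x +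
        (fderiv ℝ Φ x (EuclideanSpace.single j 1)) •
          ((2 * (max (θ0 + a * (t - t1) - Φ x) 0)) • (- fderiv ℝ Φ x)))) x := by
    intro x t j
    have h := ((hP 0 x t).mul (h2 j x).hasFDerivAt).const_mul
      (-(3 * (K * ((θ0 + a * (t - t1))⁻¹) ^ (p + 3))))
    have e : (fun x => Dx (vbar Φ K θ0 a t1 M p) j (x, t)) = fun x =>
        (-(3 * (K * ((θ0 + a * (t - t1))⁻¹) ^ (p + 3)))) *
        ((max (θ0 + a * (t - t1) - Φ x) 0) ^ (0 + 2) * fderiv ℝ Φ x (EuclideanSpace.single j 1)) := by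
      ext x; rw [hdx]; ring
    rw [e]
    refine HasFDerivAt.congr_fderiv h ?_
    ext z; simp
  have hdt : ∀ x, ∀ t ∈ I, HasDerivAt (fun t => vbar Φ K θ0 a t1 M p (x, t))
      ((K * ((θ0 + a * (t - t1))⁻¹) ^ (p + 3)) * (3 * (max (θ0 + a * (t - t1) - Φ x) 0) ^ 2 * a
        - (p + 3) * (max (θ0 + a * (t - t1) - Φ x) 0) ^ 3 * a * (θ0 + a * (t - t1))⁻¹)) t := by
    intro x t ht
    have hne := (hI t ht).ne'
    have ha := (hasDerivAt_pospow 1 _).comp t ((hθ t).sub_const (Φ x))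
    have hb := ((hθ t).inv hne).pow (p + 3)
    have h := (((ha.const_mul K).mul hb).sub_const M)
    refine HasDerivAt.congr_deriv h ?_
    simp
    field_simp
    ring
  refine ⟨⟨fun X hX => (hdt X.1 X.2 hX.2).differentiableAt,
    fun X hX => (hx X.1 X.2).differentiableAt, fun j X hX => (hxx X.1 X.2 j).differentiableAt⟩,
    fun x t ht => (hdt x t ht).deriv, hdx, ?_⟩
  intro x t i j
  rw [Dxx, Dx]
  simp only
  rw [(hxx x t j).fderiv]
  simp
  ring

/-- Spatial gradient vector of a function on `En n`. -/
def gvec (Φ : En n → ℝ) (x : En n) : En n :=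
  WithLp.toLp 2 (fun i => fderiv ℝ Φ x (EuclideanSpace.single i 1))

/-- Admissible distorted squared distances. -/
structure Bar (ν l : ℝ) (x0 : En n) (g1 Φ : En n → ℝ) : Prop where
  d1 : Differentiable ℝ Φ
  d2 : ∀ j, Differentiable ℝ (fun x => fderiv ℝ Φ x (EuclideanSpace.single j 1))
  lo : ∀ x, l ^ 2 * ‖x - x0‖ ^ 2 ≤ Φ x
  hi : ∀ x, Φ x ≤ ‖x - x0‖ ^ 2
  gu : ∀ x, ‖gvec Φ x‖ ^ 2 ≤ 4 * Φ x
  gl : ∀ x, 4 * l ^ 2 * Φ x ≤ ‖gvec Φ x‖ ^ 2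
  hs : ∀ x A, Ell ν A → ∑ i, ∑ j, A i j *
    fderiv ℝ (fun x => fderiv ℝ Φ x (EuclideanSpace.single j 1)) x (EuclideanSpace.single i 1)
      + g1 x * ‖gvec Φ x‖ ≤ 2 * n * ν

lemma bar_alg {c0 C0 q a P θ h g1N Q L : ℝ} (hc0 : 0 < c0) (hL : L = 27 + 3 * C0 + 6 * c0)
    (hq : L ^ 2 ≤ 96 * c0 * q) (hP : 0 < P) (hθ : 0 < θ) (ha4 : 4 ≤ a) (ha9 : a ≤ 9) (hq0 : 0 ≤ q)
    (hQ : c0 * (θ - P) ≤ Q) (hh : h + g1N ≤ C0) :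
    3 * P * a - q * P ^ 2 * a * θ⁻¹ + 3 * P * g1N ≤ 6 * Q - 3 * P * h := by
  have h1 : 3 * P * a ≤ 27 * P := by nlinarith
  have h2 : 4 * q * P ^ 2 * θ⁻¹ ≤ q * P ^ 2 * a * θ⁻¹ := by
    have : 4 * q * P ^ 2 ≤ q * P ^ 2 * a := by nlinarith [mul_nonneg hq0 (sq_nonneg P)]
    gcongr
  have h3 : 3 * P * (h + g1N) ≤ 3 * P * C0 := by gcongr
  have h4 : 0 ≤ 6 * c0 * θ ^ 2 - L * P * θ + 4 * q * P ^ 2 := by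
    have h5 : 0 ≤ 24 * c0 * (6 * c0 * θ ^ 2 - L * P * θ + 4 * q * P ^ 2) := by
      have h6 : 0 ≤ (96 * c0 * q - L ^ 2) * P ^ 2 := mul_nonneg (by linarith) (sq_nonneg _)
      nlinarith [sq_nonneg (12 * c0 * θ - L * P)]
    exact nonneg_of_mul_nonneg_right h5 (by positivity)
  have h7 : 0 ≤ 6 * c0 * θ - L * P + 4 * q * P ^ 2 * θ⁻¹ := by
    have : 6 * c0 * θ - L * P + 4 * q * P ^ 2 * θ⁻¹ =
      (6 * c0 * θ ^ 2 - L * P * θ + 4 * q * P ^ 2) * θ⁻¹ := by field_simp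
    rw [this]; positivity
  rw [hL] at h7
  nlinarith

lemma bar_grad {θ0 θ P N lσ : ℝ} {p : ℕ} (hl : 0 < lσ) (h0 : θ0 = lσ ^ 2) (hθ : θ0 ≤ θ) (hP0 : 0 < P)
    (hPθ : P ≤ θ) (hN0 : 0 ≤ N) (hN : N ^ 2 ≤ 4 * θ) :
    3 * (θ0 ^ p * (θ⁻¹) ^ (p + 3)) * P ^ 2 * N ≤ 6 / lσ := by
  have hθ0 : 0 < θ0 := by rw [h0]; positivity
  have hθp : 0 < θ := by linarith
  have h1 : θ0 ^ p * (θ⁻¹) ^ p ≤ 1 := by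
    rw [← mul_pow]
    refine pow_le_one₀ (by positivity) ?_
    rw [← div_eq_mul_inv]; exact (div_le_one hθp).2 hθ
  have h2 : P ^ 2 * (θ⁻¹) ^ 2 ≤ 1 := by
    rw [← mul_pow]
    refine pow_le_one₀ (by positivity) ?_
    rw [← div_eq_mul_inv]; exact (div_le_one hθp).2 hPθ
  have h3 : N * lσ ≤ 2 * θ := by
    refine le_of_sq_le_sq ?_ (by positivity)
    rw [mul_pow, ← h0]; nlinarith
  have h4 : θ⁻¹ * N ≤ 2 / lσ := by
    rw [inv_mul_le_iff₀ hθp, ← mul_div_assoc, le_div_iff₀ hl]; linarith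
  calc 3 * (θ0 ^ p * (θ⁻¹) ^ (p + 3)) * P ^ 2 * N
      = 3 * (θ0 ^ p * (θ⁻¹) ^ p) * (P ^ 2 * (θ⁻¹) ^ 2) * (θ⁻¹ * N) := by ring
    _ ≤ 3 * 1 * 1 * (2 / lσ) := by gcongr
    _ = _ := by ring

set_option maxHeartbeats 1600000 in
theorem step (hn : 0 < n) {ν : ℝ} (S : ℝ) (hν : 0 < ν) {l : ℝ} (hl : 0 < l) (hl1 : l ≤ 1) :
    ∃ c ε : ℝ, 0 < c ∧ c < 1 ∧ 0 < ε ∧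
    ∀ (u : En n × ℝ → ℝ) (g g1 g2 Φ : En n → ℝ) (x0 : En n) (σ T t1 M μ : ℝ),
      0 < σ → σ ^ 2 ≤ T → T ≤ 2 * σ ^ 2 → SubSol ν S x0 (3 * σ / l) t1 (t1 + T) u g →
      Bar ν l x0 g1 Φ → Measurable g2 → (∀ x, 0 < g2 x) → (∀ x, g x ≤ g1 x + g2 x) →
      ∫⁻ x in ball x0 (3 * σ / l), ENNReal.ofReal (g2 x) ^ n ≤ ENNReal.ofReal (ε ^ n) →
      0 < μ → (∀ X ∈ closedBall x0 (3 * σ / l) ×ˢ Icc t1 (t1 + T), u X ≤ M) →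
      (∀ x ∈ ball x0 σ, u (x, t1) ≤ M - μ) →
      ∀ x ∈ ball x0 (2 * σ), u (x, t1 + T) ≤ M - c * μ := by
  obtain ⟨C, hC, hcmp⟩ := compare hn S hν
  set c0 : ℝ := 4 * l ^ 2 / ν with hc0
  have hc0pos : 0 < c0 := by positivity
  set C0 : ℝ := 2 * n * ν with hC0
  set L : ℝ := 27 + 3 * C0 + 6 * c0 with hL
  obtain ⟨p, hp⟩ := exists_nat_ge (L ^ 2 / (96 * c0))
  have hq : L ^ 2 ≤ 96 * c0 * ((p : ℝ) + 3) := by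
    rw [div_le_iff₀ (by positivity)] at hp
    nlinarith
  set c1 : ℝ := (l ^ 2 / 9) ^ p * (5 / 9) ^ 3 with hc1
  have hc1pos : 0 < c1 := by positivity
  have hc1le : c1 ≤ 1 := by
    have hll : l ^ 2 / 9 ≤ 1 := by nlinarith
    have := pow_le_one₀ (n := p) (by positivity) hll
    have h5 : ((5 : ℝ) / 9) ^ 3 ≤ 1 := by norm_num
    rw [hc1]; exact mul_le_one₀ this (by positivity) h5
  refine ⟨c1 / 2, c1 * l ^ 2 / (36 * C), by positivity, by linarith, by positivity, ?_⟩
  intro u g g1 g2 Φ x0 σ T t1 M μ hσ hT1 hT2 hu hb hg2m hg2 hgg hg2S hμ huM hbot x hx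
  set ε : ℝ := c1 * l ^ 2 / (36 * C) with hε
  have hεpos : 0 < ε := by positivity
  set R : ℝ := 3 * σ / l with hR
  have hRpos : 0 < R := by positivity
  have hTpos : 0 < T := lt_of_lt_of_le (by positivity) hT1
  set θ0 : ℝ := (l * σ) ^ 2 with hθ0
  have hθ0pos : 0 < θ0 := by positivity
  set a : ℝ := (9 - l ^ 2) * σ ^ 2 / T with ha
  have hl2 : l ^ 2 ≤ 1 := by nlinarith
  have ha4 : 4 ≤ a := by
    rw [ha, le_div_iff₀ hTpos]; nlinarith [sq_nonneg σ]
  have ha9 : a ≤ 9 := by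
    rw [ha, div_le_iff₀ hTpos]; nlinarith [sq_nonneg σ, mul_nonneg (sq_nonneg l) (sq_nonneg σ)]
  have haT : a * T = (9 - l ^ 2) * σ ^ 2 := by rw [ha]; field_simp
  have hθT : θ0 + a * T = 9 * σ ^ 2 := by rw [haT, hθ0]; ring
  have hθlo : ∀ t ∈ Icc t1 (t1 + T), θ0 ≤ θ0 + a * (t - t1) := by
    intro t ht
    have := mul_nonneg (by linarith : (0:ℝ) ≤ a) (sub_nonneg.2 ht.1)
    linarith
  have hθhi : ∀ t ∈ Icc t1 (t1 + T), θ0 + a * (t - t1) ≤ 9 * σ ^ 2 := by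
    intro t ht
    rw [← hθT]
    have : a * (t - t1) ≤ a * T := by gcongr; linarith [ht.2]
    linarith
  have hΦ0 : ∀ x, 0 ≤ Φ x := fun x => le_trans (by positivity) (hb.lo x)
  have hlR : l ^ 2 * R ^ 2 = 9 * σ ^ 2 := by rw [hR]; field_simp; ring
  set v := vbar Φ (μ * θ0 ^ p) θ0 a t1 M p with hv
  obtain ⟨vreg, vt, vx, vxx⟩ := vbar_facts (K := μ * θ0 ^ p) (M := M) (p := p) hb.d1 hb.d2
    (I := Ioc t1 (t1 + T)) (θ0 := θ0) (a := a) (t1 := t1)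
    (fun t ht => lt_of_lt_of_le hθ0pos (hθlo t (Ioc_subset_Icc_self ht))) (ball x0 R)
  -- values of `v`
  have vval : ∀ x t, v (x, t) = μ * θ0 ^ p * (max (θ0 + a * (t - t1) - Φ x) 0) ^ 3 *
      ((θ0 + a * (t - t1))⁻¹) ^ (p + 3) - M := fun x t => rfl
  have vout : ∀ x t, θ0 + a * (t - t1) ≤ Φ x → v (x, t) = - M := by
    intro x t h
    rw [vval, max_eq_right (by linarith)]; simp
  have vbot : ∀ x, v (x, t1) ≤ μ - M := by
    intro x
    rw [vval]
    have e : θ0 + a * (t1 - t1) = θ0 := by ring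
    rw [e]
    have h1 : max (θ0 - Φ x) 0 ≤ θ0 := max_le (by linarith [hΦ0 x]) hθ0pos.le
    have h2 : (max (θ0 - Φ x) 0) ^ 3 ≤ θ0 ^ 3 := pow_le_pow_left₀ (le_max_right _ _) h1 3
    have h3 : μ * θ0 ^ p * (max (θ0 - Φ x) 0) ^ 3 * (θ0⁻¹) ^ (p + 3) ≤
        μ * θ0 ^ p * θ0 ^ 3 * (θ0⁻¹) ^ (p + 3) := by gcongr
    have h4 : μ * θ0 ^ p * θ0 ^ 3 * (θ0⁻¹) ^ (p + 3) = μ := by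
      rw [inv_pow, mul_assoc μ, ← pow_add, mul_assoc, mul_inv_cancel₀ (by positivity), mul_one]
    linarith
  have vtop : c1 * μ - M ≤ v (x, t1 + T) := by
    rw [vval]
    have e : θ0 + a * (t1 + T - t1) = 9 * σ ^ 2 := by rw [← hθT]; ring
    rw [e]
    have hx2 : ‖x - x0‖ ^ 2 ≤ 4 * σ ^ 2 := by
      rw [mem_ball, dist_eq_norm] at hx
      nlinarith [norm_nonneg (x - x0)]
    have h1 : 5 * σ ^ 2 ≤ max (9 * σ ^ 2 - Φ x) 0 := le_max_of_le_left (by linarith [hb.hi x])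
    have h2 : (5 * σ ^ 2) ^ 3 ≤ (max (9 * σ ^ 2 - Φ x) 0) ^ 3 :=
      pow_le_pow_left₀ (by positivity) h1 3
    have h3 : μ * θ0 ^ p * (5 * σ ^ 2) ^ 3 * ((9 * σ ^ 2)⁻¹) ^ (p + 3) ≤
        μ * θ0 ^ p * (max (9 * σ ^ 2 - Φ x) 0) ^ 3 * ((9 * σ ^ 2)⁻¹) ^ (p + 3) := by gcongr
    have h4 : μ * θ0 ^ p * (5 * σ ^ 2) ^ 3 * ((9 * σ ^ 2)⁻¹) ^ (p + 3) = c1 * μ := by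
      have e1 : θ0 ^ p * ((9 * σ ^ 2)⁻¹) ^ p = (l ^ 2 / 9) ^ p := by
        rw [← mul_pow, hθ0]; congr 1; field_simp
      have e2 : (5 * σ ^ 2) ^ 3 * ((9 * σ ^ 2)⁻¹) ^ 3 = (5 / 9) ^ 3 := by
        rw [← mul_pow]; congr 1; field_simp
      rw [hc1, ← e1, ← e2]; ring
    linarith
  have hmain := hcmp u v x0 R t1 (t1 + T) (μ * (6 / (l * σ)) * ε) g
    (fun x => μ * (6 / (l * σ)) * g2 x) hRpos hu ?_ vreg (by fun_prop)
    (fun x => by have := hg2 x; positivity) ?_ ?_ ?_ (by positivity) ?_ (x, t1 + T)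
    ⟨?_, ⟨by linarith, le_rfl⟩⟩
  · have h1 : C * R * (μ * (6 / (l * σ)) * ε) = c1 * μ / 2 := by
      rw [hR, hε]; field_simp; ring
    rw [h1] at hmain
    linarith
  · -- continuity
    have hΦc : Continuous Φ := hb.d1.continuous
    have : ContinuousOn (fun X : En n × ℝ => μ * θ0 ^ p *
      (max (θ0 + a * (X.2 - t1) - Φ X.1) 0) ^ 3 * ((θ0 + a * (X.2 - t1))⁻¹) ^ (p + 3) - M)
      (closedBall x0 R ×ˢ Icc t1 (t1 + T)) := by
      refine ContinuousOn.sub (ContinuousOn.mul ?_ (ContinuousOn.pow (ContinuousOn.inv₀ ?_ ?_) _))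
        continuousOn_const
      · exact Continuous.continuousOn (by fun_prop)
      · exact Continuous.continuousOn (by fun_prop)
      · intro X hX
        exact (lt_of_lt_of_le hθ0pos (hθlo X.2 hX.2)).ne'
    exact this
  · -- differential inequality
    intro z hz t ht A hA
    have hθ1 := hθlo t (Ioc_subset_Icc_self ht)
    have vtz := vt z t ht
    have vxz := vx z t
    have vxxz := vxx z t
    set θ := θ0 + a * (t - t1) with hθ
    have hθp : 0 < θ := by linarith
    set P := max (θ - Φ z) 0 with hP
    have hP0 : 0 ≤ P := le_max_right _ _
    set k := μ * θ0 ^ p * (θ⁻¹) ^ (p + 3) with hk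
    have hk0 : 0 ≤ k := by positivity
    set N := ‖gvec Φ z‖ with hN
    have hgr : ‖grd v (z, t)‖ = 3 * k * P ^ 2 * N := by
      have : grd v (z, t) = (-(3 * k * P ^ 2)) • gvec Φ z := by
        ext i
        simp only [grd, gvec, PiLp.smul_apply, smul_eq_mul]
        exact vxz i
      rw [this, norm_smul, Real.norm_eq_abs, abs_neg, abs_of_nonneg (by positivity)]
    set Qf := ∑ i, ∑ j, A i j * fderiv ℝ Φ z (EuclideanSpace.single i 1) *
      fderiv ℝ Φ z (EuclideanSpace.single j 1) with hQf
    set h := ∑ i, ∑ j, A i j * fderiv ℝ (fun x => fderiv ℝ Φ x (EuclideanSpace.single j 1)) z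
      (EuclideanSpace.single i 1) with hh
    have hsum : ∑ i, ∑ j, A i j * Dxx v i j (z, t) = k * (6 * P * Qf - 3 * P ^ 2 * h) := by
      have e : ∀ i j, A i j * Dxx v i j (z, t) = k * (6 * P) * (A i j *
          fderiv ℝ Φ z (EuclideanSpace.single i 1) * fderiv ℝ Φ z (EuclideanSpace.single j 1)) -
          k * (3 * P ^ 2) * (A i j * fderiv ℝ (fun x => fderiv ℝ Φ x (EuclideanSpace.single j 1)) z
      (EuclideanSpace.single i 1)) := by
        intro i j
        rw [hv, vxxz i j]
        ring
      simp only [e, Finset.sum_sub_distrib, ← Finset.mul_sum]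
      rw [← hQf, ← hh]; ring
    have hQlow : c0 * Φ z ≤ Qf := by
      have h1 := hA.1 (fun i => fderiv ℝ Φ z (EuclideanSpace.single i 1))
      have h2 : ∑ i, (fderiv ℝ Φ z (EuclideanSpace.single i 1)) ^ 2 = N ^ 2 := by
        rw [hN, EuclideanSpace.norm_sq_eq]
        simp [gvec]
      rw [h2] at h1
      refine le_trans ?_ h1
      have h3 := hb.gl z
      rw [hc0, div_eq_inv_mul, mul_assoc]
      gcongr
    have hhs : h + g1 z * N ≤ C0 := hb.hs z A hA
    rw [hgr, hsum, vtz]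
    rcases hP0.eq_or_lt with hP00 | hPpos
    · rw [← hP00]
      have := hg2 z
      simp; positivity
    have hPe : P = θ - Φ z := by
      rw [hP]; refine max_eq_left (le_of_lt ?_)
      by_contra hcon
      rw [hP, max_eq_right (not_lt.1 hcon)] at hPpos
      exact lt_irrefl _ hPpos
    have hN2 : N ^ 2 ≤ 4 * θ := (hb.gu z).trans (by linarith [hPe])
    have hgrad : 3 * k * P ^ 2 * N ≤ μ * (6 / (l * σ)) := by
      have := bar_grad (p := p) (P := P) (lσ := l * σ) (by positivity) hθ0 hθ1 hPpos
        (by linarith [hΦ0 z]) (norm_nonneg (gvec Φ z)) hN2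
      calc 3 * k * P ^ 2 * N = μ * (3 * (θ0 ^ p * θ⁻¹ ^ (p + 3)) * P ^ 2 * N) := by rw [hk]; ring
        _ ≤ _ := by gcongr
    have halg := bar_alg (q := (p : ℝ) + 3) (a := a) (P := P) (θ := θ) (h := h) (g1N := g1 z * N)
      (Q := Qf) hc0pos hL hq hPpos hθp ha4 ha9 (by positivity)
      (by rw [hPe]; simpa using hQlow) hhs
    have h1 := mul_le_mul_of_nonneg_left halg (mul_nonneg hk0 hPpos.le)
    have hN0 : 0 ≤ 3 * k * P ^ 2 * N := by positivity
    have h2 := mul_le_mul_of_nonneg_right (hgg z) hN0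
    have h3 := mul_le_mul_of_nonneg_left hgrad (hg2 z).le
    have e1 : k * (3 * P ^ 2 * a - ((p : ℝ) + 3) * P ^ 3 * a * θ⁻¹) + g1 z * (3 * k * P ^ 2 * N) =
        k * P * (3 * P * a - ((p : ℝ) + 3) * P ^ 2 * a * θ⁻¹ + 3 * P * (g1 z * N)) := by ring
    have e2 : k * P * (6 * Qf - 3 * P * h) = k * (6 * P * Qf - 3 * P ^ 2 * h) := by ring
    linarith
  · -- bottom
    intro z hz
    by_cases hzb : z ∈ ball x0 σ
    · linarith [hbot z hzb, vbot z]
    · have h1 : θ0 + a * (t1 - t1) ≤ Φ z := by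
        refine le_trans ?_ (hb.lo z)
        rw [mem_ball, dist_eq_norm, not_lt] at hzb
        rw [sub_self, mul_zero, add_zero, hθ0, mul_pow]
        gcongr
      rw [vout z t1 h1]
      linarith [huM (z, t1) ⟨hz, ⟨le_rfl, by linarith⟩⟩]
  · -- lateral
    intro z hz t ht
    have h1 : θ0 + a * (t - t1) ≤ Φ z := by
      refine le_trans ((hθhi t ht).trans ?_) (hb.lo z)
      rw [mem_sphere, dist_eq_norm] at hz
      rw [hz, hlR]
    rw [vout z t h1]
    linarith [huM (z, t) ⟨sphere_subset_closedBall hz, ht⟩]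
  · -- integral of f
    set m : ℝ := μ * (6 / (l * σ)) with hm
    have hm0 : 0 ≤ m := by positivity
    calc ∫⁻ x in ball x0 R, ENNReal.ofReal (m * g2 x) ^ n
        = ∫⁻ x in ball x0 R, ENNReal.ofReal (m ^ n) * ENNReal.ofReal (g2 x) ^ n := by
          refine lintegral_congr fun x => ?_
          rw [ENNReal.ofReal_mul hm0, mul_pow, ENNReal.ofReal_pow hm0]
      _ = ENNReal.ofReal (m ^ n) * ∫⁻ x in ball x0 R, ENNReal.ofReal (g2 x) ^ n :=
          lintegral_const_mul _ (by fun_prop)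
      _ ≤ ENNReal.ofReal (m ^ n) * ENNReal.ofReal (ε ^ n) := by gcongr
      _ = _ := by rw [← ENNReal.ofReal_mul (by positivity), mul_pow m ε n]
  · refine ball_subset_closedBall (ball_subset_ball ?_ hx)
    rw [hR, le_div_iff₀ hl]
    nlinarith

theorem chain (hn : 0 < n) {ν : ℝ} (S : ℝ) (hν : 0 < ν) {l : ℝ} (hl : 0 < l) (hl1 : l ≤ 1) :
    ∃ c ε : ℝ, 0 < c ∧ c < 1 ∧ 0 < ε ∧
    ∀ (u : En n × ℝ → ℝ) (g g2 : En n → ℝ) (y : En n) (r t1 t2 M : ℝ),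
      SubSol ν S y r t1 t2 u g → (∀ X ∈ closedBall y r ×ˢ Icc t1 t2, u X ≤ M) →
      Measurable g2 → (∀ x, 0 < g2 x) →
    ∀ (γ : ℝ → En n) (σ D t0 L μ : ℝ) (K : ℕ), 0 < σ → σ ^ 2 ≤ D → 2 * L * σ ≤ D →
      D ≤ K * σ ^ 2 → 0 < μ → t1 ≤ t0 → t0 + D ≤ t2 → 0 ≤ L →
      (∀ a ∈ Icc (0:ℝ) 1, ∀ b ∈ Icc (0:ℝ) 1, dist (γ a) (γ b) ≤ L * |a - b|) →
      (∀ a ∈ Icc (0:ℝ) 1, ball (γ a) (3 * σ / l) ⊆ ball y r) →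
      (∀ a ∈ Icc (0:ℝ) 1, ∃ g1 Φ, Bar ν l (γ a) g1 Φ ∧ ∀ x, g x ≤ g1 x + g2 x) →
      (∀ a ∈ Icc (0:ℝ) 1, ∫⁻ x in ball (γ a) (3 * σ / l), ENNReal.ofReal (g2 x) ^ n ≤
        ENNReal.ofReal (ε ^ n)) →
      (∀ x ∈ ball (γ 0) σ, u (x, t0) ≤ M - μ) →
      ∀ x ∈ ball (γ 1) σ, u (x, t0 + D) ≤ M - c ^ K * μ := by
  obtain ⟨c, ε, hc, hc1, hε, hstep⟩ := step hn S hν hl hl1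
  refine ⟨c, ε, hc, hc1, hε, ?_⟩
  intro u g g2 y r t1 t2 M hu huM hg2m hg2 γ σ D t0 L μ K hσ hD hLD hDK hμ ht1 ht2 hL hγ hsub hbar
    hmass hbot
  have hDpos : 0 < D := lt_of_lt_of_le (by positivity) hD
  set k := ⌊D / σ ^ 2⌋₊ with hk
  have hσ2 : 0 < σ ^ 2 := by positivity
  have h1 : 1 ≤ D / σ ^ 2 := by rw [le_div_iff₀ hσ2]; linarith
  have hk1 : 1 ≤ k := by rw [hk, Nat.one_le_floor_iff]; exact h1
  have hkpos : (0:ℝ) < k := by exact_mod_cast hk1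
  have hk1' : (1:ℝ) ≤ k := by exact_mod_cast hk1
  have hkle : (k:ℝ) ≤ D / σ ^ 2 := Nat.floor_le (by positivity)
  have hklt : D / σ ^ 2 < k + 1 := Nat.lt_floor_add_one _
  rw [le_div_iff₀ hσ2] at hkle
  rw [div_lt_iff₀ hσ2] at hklt
  have hkK : k ≤ K := by
    have : (k:ℝ) ≤ K := by
      have := hkle.trans hDK
      exact le_of_mul_le_mul_right this hσ2
    exact_mod_cast this
  set T := D / k with hT
  have hkT : k * T = D := by rw [hT]; field_simp
  have hT1 : σ ^ 2 ≤ T := by rw [hT, le_div_iff₀ hkpos]; linarith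
  have hT2 : T ≤ 2 * σ ^ 2 := by
    rw [hT, div_le_iff₀ hkpos]; nlinarith
  have hTpos : 0 < T := by linarith
  have hLk : L / k ≤ σ := by
    rw [div_le_iff₀ hkpos]
    have : D ≤ 2 * k * σ ^ 2 := by nlinarith
    have : L * (2 * σ) ≤ (σ * k) * (2 * σ) := by nlinarith
    exact le_of_mul_le_mul_right this (by positivity)
  have key : ∀ i : ℕ, i ≤ k → ∀ x ∈ ball (γ (i / k)) σ, u (x, t0 + i * T) ≤ M - c ^ i * μ := by
    intro i
    induction i with
    | zero => intro _ x hx; simpa using hbot x (by simpa using hx)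
    | succ i ih =>
      intro hi x hx
      have ih := ih (by omega)
      have hik : (i:ℝ) + 1 ≤ k := by exact_mod_cast hi
      have hi0 : (0:ℝ) ≤ i := Nat.cast_nonneg i
      have hm1 : (i:ℝ) / k ∈ Icc (0:ℝ) 1 := ⟨by positivity, (div_le_one hkpos).2 (by linarith)⟩
      have hm2 : ((i + 1 : ℕ):ℝ) / k ∈ Icc (0:ℝ) 1 :=
        ⟨by positivity, (div_le_one hkpos).2 (by push_cast; linarith)⟩
      obtain ⟨g1, Φ, hB, hgg⟩ := hbar _ hm1
      have htt : t0 + i * T + T ≤ t2 := by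
        have : ((i:ℝ) + 1) * T ≤ k * T := by gcongr
        rw [hkT] at this
        linarith
      have ht0 : t1 ≤ t0 + i * T := by
        have : 0 ≤ i * T := by positivity
        linarith
      have hR : 0 < 3 * σ / l := by positivity
      have := hstep u g g1 g2 Φ (γ (i / k)) σ T (t0 + i * T) M (c ^ i * μ) hσ hT1 hT2
        (hu.mono hR (hsub _ hm1) ht0 htt) hB hg2m hg2 hgg (hmass _ hm1) (by positivity)
        (fun X hX => huM X ⟨closedBall_sub hR (hsub _ hm1) hX.1, ht0.trans hX.2.1,
          hX.2.2.trans htt⟩) ih x ?_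
      · have e : t0 + ((i + 1 : ℕ):ℝ) * T = t0 + i * T + T := by push_cast; ring
        rw [e, pow_succ]
        calc _ ≤ _ := this
          _ = _ := by ring
      · have h2 := hγ _ hm2 _ hm1
        have e : ((i + 1 : ℕ):ℝ) / k - i / k = 1 / k := by push_cast; ring
        rw [e, abs_of_nonneg (by positivity), mul_one_div] at h2
        rw [mem_ball] at hx ⊢
        linarith [dist_triangle x (γ (((i + 1 : ℕ):ℝ) / k)) (γ (i / k))]
  intro x hx
  have := key k le_rfl x (by rwa [div_self hkpos.ne'])
  rw [hkT] at this
  have hp : c ^ K ≤ c ^ k := pow_le_pow_of_le_one hc.le hc1.le hkK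
  have : c ^ K * μ ≤ c ^ k * μ := by gcongr
  linarith

lemma ell_diag {ν : ℝ} (hν : 0 < ν) {A : Matrix (Fin n) (Fin n) ℝ} (hA : Ell ν A) (i : Fin n) :
    A i i ≤ ν := by
  have h1 : (A i i) ^ 2 ≤ ν ^ 2 := by
    refine le_trans ?_ hA.2
    refine le_trans ?_ (Finset.single_le_sum (f := fun i => ∑ j, (A i j) ^ 2)
      (fun i _ => Finset.sum_nonneg fun j _ => sq_nonneg _) (Finset.mem_univ i))
    exact Finset.single_le_sum (f := fun j => (A i j) ^ 2)
      (fun j _ => sq_nonneg _) (Finset.mem_univ i)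
  exact le_of_sq_le_sq h1 hν.le

lemma bar_sq {ν : ℝ} (hν : 0 < ν) (x0 : En n) :
    Bar ν 1 x0 (fun _ => 0) (fun x => ‖x - x0‖ ^ 2) := by
  have hd : ∀ x : En n, HasFDerivAt (fun x => ‖x - x0‖ ^ 2) (2 • innerSL ℝ (x - x0)) x := by
    intro x
    have := ((hasFDerivAt_id x).sub_const x0).norm_sq
    exact this.congr_fderiv (by ext; simp)
  have hf : ∀ (x : En n) j, fderiv ℝ (fun x => ‖x - x0‖ ^ 2) x (EuclideanSpace.single j 1) =
      2 * (x j - x0 j) := by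
    intro x j
    rw [(hd x).fderiv]
    simp [EuclideanSpace.inner_single_right]
  have hg : ∀ x : En n, gvec (fun x => ‖x - x0‖ ^ 2) x = (2:ℝ) • (x - x0) := by
    intro x; ext i
    simp only [gvec, hf]
    simp
  have hd2 : ∀ (x : En n) j, HasFDerivAt (fun x : En n => 2 * (x j - x0 j))
      ((2:ℝ) • (EuclideanSpace.proj j : En n →L[ℝ] ℝ)) x := by
    intro x j
    exact (((EuclideanSpace.proj j : En n →L[ℝ] ℝ).hasFDerivAt.sub_const (x0 j)).const_mul 2)
  refine ⟨fun x => (hd x).differentiableAt, ?_, ?_, ?_, ?_, ?_, ?_⟩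
  · intro j
    simp only [hf]
    exact fun x => (hd2 x j).differentiableAt
  · intro x; simp
  · intro x; simp
  · intro x; rw [hg, norm_smul]; simp; nlinarith [norm_nonneg (x - x0)]
  · intro x; rw [hg, norm_smul]; simp; nlinarith [norm_nonneg (x - x0)]
  · intro x A hA
    simp only [hf, zero_mul, add_zero]
    have : ∀ i j, fderiv ℝ (fun x : En n => 2 * (x j - x0 j)) x (EuclideanSpace.single i 1) =
        if i = j then 2 else 0 := by
      intro i j
      rw [(hd2 x j).fderiv]
      by_cases h : i = j
      · subst h; simp
      · simp [h, Ne.symm h]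
    simp only [this]
    simp
    calc ∑ i, A i i * 2 ≤ ∑ i : Fin n, ν * 2 := by
          gcongr with i; exact ell_diag hν hA i
      _ = _ := by simp; ring

/-- Exit lemma: drift from the parabolic side to the centre. -/
theorem exit_lemma (hn : 0 < n) {ν : ℝ} (S : ℝ) (hν : 0 < ν) :
    ∃ C > 0, ∀ (u : En n × ℝ → ℝ) (g : En n → ℝ) (y : En n) (R s h M m : ℝ), 0 < R → 0 < h →
      C * R ^ 2 ≤ h → 0 < m → SubSol ν S y R (s - h) s u g →
      (∀ X ∈ closedBall y R ×ˢ Icc (s - h) s, u X ≤ M) →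
      (∀ x ∈ sphere y R, ∀ t ∈ Icc (s - h) s, u (x, t) ≤ M - m) → u (y, s) ≤ M - m / 2 := by
  obtain ⟨C, hC, hcmp⟩ := compare hn S hν
  set V := (volume (ball (0 : En n) 1)).toReal with hV
  have hV0 : 0 ≤ V := ENNReal.toReal_nonneg
  refine ⟨2 * C * (V + 1), by positivity, ?_⟩
  intro u g y R s h M m hR hh hCR hm hu huM hside
  have hdt : ∀ t : ℝ, HasDerivAt (fun t : ℝ => -(M - m) - m * (s - t) / h) (m / h) t := by
    intro t
    have := ((((hasDerivAt_id t).const_sub s).const_mul m).div_const h).const_sub (-(M - m))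
    exact this.congr_deriv (by simp; ring)
  set v : En n × ℝ → ℝ := fun X => -(M - m) - m * (s - X.2) / h with hv
  have vx : ∀ i X, Dx v i X = 0 := by
    intro i X
    simp only [Dx, hv]
    simp
  have vx' : ∀ i, Dx v i = fun _ => 0 := fun i => funext (vx i)
  have vxx : ∀ i j X, Dxx v i j X = 0 := by
    intro i j X
    rw [Dxx, vx' j]
    simp [Dx]
  have vt : ∀ X, Dt v X = m / h := fun X => (hdt X.2).deriv
  have vg : ∀ X, grd v X = 0 := by
    intro X; ext i; simp [grd, vx]
  have hmain := hcmp u v y R (s - h) s (m / h * (R * (V + 1))) g (fun _ => m / h) hR hu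
    (Continuous.continuousOn (by fun_prop)) ⟨?_, ?_, ?_⟩ measurable_const (fun _ => by positivity)
    ?_ ?_ ?_ (by positivity) ?_ (y, s) ⟨mem_closedBall_self hR.le, by linarith, le_rfl⟩
  · have e : v (y, s) = -(M - m) := by simp [hv]
    rw [e] at hmain
    have : C * R * (m / h * (R * (V + 1))) ≤ m / 2 := by
      have e2 : C * R * (m / h * (R * (V + 1))) = (m / 2) * ((2 * C * (V + 1) * R ^ 2) / h) := by
        field_simp
      rw [e2]
      have := (div_le_one hh).2 hCR
      exact mul_le_of_le_one_right (by positivity) this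
    linarith
  · intro X _; exact (hdt X.2).differentiableAt
  · intro X _; simp [hv]
  · intro j X _; simp [vx']
  · intro x hx t ht A hA
    rw [vt, vg]; simp [vxx]
  · intro x hx
    have := huM (x, s - h) ⟨hx, le_rfl, by linarith⟩
    have e : v (x, s - h) = -M := by simp only [hv]; field_simp; ring
    rw [e]; linarith
  · intro x hx t ht
    have := hside x hx t ht
    have e : v (x, t) ≤ -(M - m) := by
      simp only [hv]
      have : 0 ≤ m * (s - t) / h := div_nonneg (mul_nonneg hm.le (by linarith [ht.2])) hh.le
      linarith
    linarith
  · rw [lintegral_const, Measure.restrict_apply MeasurableSet.univ, univ_inter,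
      Measure.addHaar_ball_of_pos _ _ hR, finrank_euclideanSpace_fin]
    have hfin : volume (ball (0 : En n) 1) ≠ ∞ := measure_ball_lt_top.ne
    rw [← ENNReal.ofReal_toReal hfin, ← hV, ← ENNReal.ofReal_pow (by positivity),
      ← ENNReal.ofReal_mul (by positivity), ← ENNReal.ofReal_mul (by positivity)]
    refine ENNReal.ofReal_le_ofReal ?_
    have h1 : V ≤ (V + 1) ^ n := (by linarith : V ≤ V + 1).trans
      (le_self_pow₀ (by linarith) hn.ne')
    calc (m / h) ^ n * (R ^ n * V) ≤ (m / h) ^ n * (R ^ n * (V + 1) ^ n) := by gcongr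
      _ = _ := by rw [mul_pow, mul_pow]

lemma unit_dir (hn : 0 < n) (x : En n) : ∃ e : En n, ‖e‖ = 1 ∧ x = ‖x‖ • e := by
  by_cases hx : x = 0
  · refine ⟨EuclideanSpace.single ⟨0, hn⟩ 1, by simp, by simp [hx]⟩
  · have hx' : ‖x‖ ≠ 0 := norm_ne_zero_iff.2 hx
    refine ⟨‖x‖⁻¹ • x, by rw [norm_smul, norm_inv, norm_norm, inv_mul_cancel₀ hx'], ?_⟩
    rw [smul_smul, mul_inv_cancel₀ hx', one_smul]

lemma unit_perp (hn : 2 ≤ n) (ω : En n) : ∃ e : En n, ‖e‖ = 1 ∧ ⟪ω, e⟫ = 0 := by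
  have h1 : Module.finrank ℝ (ℝ ∙ ω) + Module.finrank ℝ (ℝ ∙ ω)ᗮ = n := by
    rw [Submodule.finrank_add_finrank_orthogonal, finrank_euclideanSpace_fin]
  have h2 : Module.finrank ℝ (ℝ ∙ ω) ≤ 1 := (finrank_span_le_card ({ω} : Set (En n))).trans (by simp)
  have h3 : (ℝ ∙ ω)ᗮ ≠ ⊥ := by
    intro h
    rw [h, finrank_bot] at h1
    omega
  obtain ⟨v, hv, hv0⟩ := Submodule.exists_mem_ne_zero_of_ne_bot h3
  rw [Submodule.mem_orthogonal_singleton_iff_inner_right] at hv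
  have hv' : ‖v‖ ≠ 0 := norm_ne_zero_iff.2 hv0
  refine ⟨‖v‖⁻¹ • v, by rw [norm_smul, norm_inv, norm_norm, inv_mul_cancel₀ hv'], ?_⟩
  rw [inner_smul_right, hv, mul_zero]

lemma ball_sub_dist (hn : 0 < n) {y z : En n} {ρ r : ℝ} (hρ : 0 < ρ) (h : ball z ρ ⊆ ball y r) :
    ‖z - y‖ + ρ ≤ r := by
  obtain ⟨e, he, hz⟩ := unit_dir hn (z - y)
  by_contra hcon
  push Not at hcon
  have hr : ‖z - y‖ < r := by
    have := h (mem_ball_self hρ); rwa [mem_ball, dist_eq_norm] at this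
  have := h (a := z + (r - ‖z - y‖) • e) (by
    rw [mem_ball, dist_eq_norm, add_sub_cancel_left, norm_smul, he, mul_one, Real.norm_eq_abs,
      abs_of_pos (by linarith)]
    linarith)
  rw [mem_ball, dist_eq_norm] at this
  have e1 : z + (r - ‖z - y‖) • e - y = r • e := by
    have : z + (r - ‖z - y‖) • e - y = (z - y) + (r - ‖z - y‖) • e := by abel
    rw [this]; nth_rw 1 [hz]; rw [← add_smul]; congr 1; ring
  rw [e1, norm_smul, he, Real.norm_eq_abs, mul_one] at this
  exact absurd this (not_lt.2 (le_abs_self r))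

lemma norm_comb {ω e : En n} (hω : ‖ω‖ = 1) (he : ‖e‖ = 1) (hp : ⟪ω, e⟫ = 0) (a b : ℝ) :
    ‖a • ω + b • e‖ ^ 2 = a ^ 2 + b ^ 2 := by
  rw [norm_add_sq_real, inner_smul_left, inner_smul_right, hp, norm_smul, norm_smul, hω, he]
  simp

/-- Arcs on the unit sphere. -/
lemma arc (hn : 2 ≤ n) {ω ω' : En n} (h : ‖ω‖ = 1) (h' : ‖ω'‖ = 1) :
    ∃ γ : ℝ → En n, γ 0 = ω ∧ γ 1 = ω' ∧ (∀ a, ‖γ a‖ = 1) ∧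
      ∀ a b, ‖γ a - γ b‖ ≤ 4 * |a - b| := by
  set p := ⟪ω, ω'⟫ with hp
  set q := ω' - p • ω with hq
  have hqω : ⟪ω, q⟫ = 0 := by
    rw [hq, inner_sub_right, inner_smul_right, real_inner_self_eq_norm_sq, h, ← hp]; ring
  have hpq : p ^ 2 + ‖q‖ ^ 2 = 1 := by
    have : ω' = p • ω + q := by rw [hq]; abel
    have h2 : ‖ω'‖ ^ 2 = ‖p • ω + q‖ ^ 2 := by rw [← this]
    rw [norm_add_sq_real, inner_smul_left, hqω, norm_smul, h, h'] at h2
    simp at h2; linarith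
  obtain ⟨e, he, hωe, hqe⟩ : ∃ e : En n, ‖e‖ = 1 ∧ ⟪ω, e⟫ = 0 ∧ q = ‖q‖ • e := by
    by_cases hq0 : q = 0
    · obtain ⟨e, he, hωe⟩ := unit_perp hn ω
      exact ⟨e, he, hωe, by simp [hq0]⟩
    · have hx' : ‖q‖ ≠ 0 := norm_ne_zero_iff.2 hq0
      refine ⟨‖q‖⁻¹ • q, by rw [norm_smul, norm_inv, norm_norm, inv_mul_cancel₀ hx'], ?_, ?_⟩
      · rw [inner_smul_right, hqω, mul_zero]
      · rw [smul_smul, mul_inv_cancel₀ hx', one_smul]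
  have hp1 : p ^ 2 ≤ 1 := by nlinarith [sq_nonneg ‖q‖]
  have hp2 := abs_le.1 ((sq_le_one_iff_abs_le_one p).1 hp1)
  set φ := Real.arccos p with hφ
  have hcos : Real.cos φ = p := Real.cos_arccos hp2.1 hp2.2
  have hsin : Real.sin φ = ‖q‖ := by
    rw [hφ, Real.sin_arccos, ← hpq, add_sub_cancel_left, Real.sqrt_sq (norm_nonneg _)]
  refine ⟨fun a => Real.cos (a * φ) • ω + Real.sin (a * φ) • e, by simp, ?_, ?_, ?_⟩
  · simp only [one_mul, hcos, hsin]
    rw [← hqe, hq]; abel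
  · intro a
    have := norm_comb h he hωe (Real.cos (a * φ)) (Real.sin (a * φ))
    rw [Real.cos_sq_add_sin_sq] at this
    exact (pow_eq_one_iff_of_nonneg (norm_nonneg _) two_ne_zero).1 this
  · intro a b
    have e1 : (Real.cos (a * φ) • ω + Real.sin (a * φ) • e) -
        (Real.cos (b * φ) • ω + Real.sin (b * φ) • e) =
        (Real.cos (a * φ) - Real.cos (b * φ)) • ω + (Real.sin (a * φ) - Real.sin (b * φ)) • e := by
      rw [sub_smul, sub_smul]; abel
    simp only
    rw [e1]
    refine le_of_sq_le_sq ?_ (by positivity)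
    rw [norm_comb h he hωe]
    have h1 := Real.one_sub_sq_div_two_le_cos (x := a * φ - b * φ)
    rw [Real.cos_sub] at h1
    have h2 := Real.cos_sq_add_sin_sq (a * φ)
    have h3 := Real.cos_sq_add_sin_sq (b * φ)
    have h4 : φ ^ 2 ≤ 16 := by
      have := Real.arccos_nonneg p
      have := Real.arccos_le_pi p
      nlinarith [Real.pi_le_four]
    rw [mul_pow, sq_abs]
    have h5 : (a * φ - b * φ) ^ 2 ≤ 4 ^ 2 * (a - b) ^ 2 := by
      have : (a * φ - b * φ) ^ 2 = φ ^ 2 * (a - b) ^ 2 := by ring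
      rw [this]; exact mul_le_mul_of_nonneg_right (by linarith) (sq_nonneg _)
    nlinarith

/-- Pigeonhole for masses of disjoint sets. -/
lemma pigeon {U : Set (En n)} {F : En n → ℝ≥0∞} {S e : ℝ} (he : 0 < e) {N : ℕ} (hN : 0 < N)
    (hS : S ≤ N * e) (hF : ∫⁻ x in U, F x ≤ ENNReal.ofReal S) (A : Fin N → Set (En n))
    (hm : ∀ j, MeasurableSet (A j)) (hd : Pairwise (Function.onFun Disjoint A))
    (hA : ∀ j, A j ⊆ U) : ∃ j, ∫⁻ x in A j, F x ≤ ENNReal.ofReal e := by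
  by_contra hcon
  push Not at hcon
  have h1 : ∑ j, ∫⁻ x in A j, F x ≤ ENNReal.ofReal S := by
    rw [← tsum_fintype (L := .unconditional _), ← lintegral_iUnion hm hd]
    exact (lintegral_mono_set (iUnion_subset hA)).trans hF
  have h2 : ∑ j : Fin N, ENNReal.ofReal e < ∑ j, ∫⁻ x in A j, F x := by
    refine ENNReal.sum_lt_sum_of_nonempty ⟨⟨0, hN⟩, Finset.mem_univ _⟩ fun j _ => hcon j
  have h3 : ∑ j : Fin N, ENNReal.ofReal e = ENNReal.ofReal (N * e) := by
    rw [ENNReal.ofReal_mul (by positivity)]; simp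
  rw [h3] at h2
  exact absurd ((h2.trans_le h1).trans_le (ENNReal.ofReal_le_ofReal hS)) (lt_irrefl _)

lemma ray_sep {ω ω' : En n} (h : ‖ω‖ = 1) (h' : ‖ω'‖ = 1) {R a b : ℝ} (hR : 0 ≤ R) (ha : R ≤ a)
    (hb : R ≤ b) : R * ‖ω - ω'‖ ≤ ‖a • ω - b • ω'‖ := by
  refine le_of_sq_le_sq ?_ (norm_nonneg _)
  have e1 : ‖a • ω - b • ω'‖ ^ 2 = (a - b) ^ 2 + a * b * ‖ω - ω'‖ ^ 2 := by
    rw [norm_sub_sq_real, norm_sub_sq_real, inner_smul_left, inner_smul_right, norm_smul, norm_smul,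
      h, h']
    simp
    ring
  rw [e1, mul_pow]
  have : R ^ 2 ≤ a * b := by nlinarith
  have := mul_le_mul_of_nonneg_right this (sq_nonneg ‖ω - ω'‖)
  nlinarith [sq_nonneg (a - b)]

/-- Directions close to `e1`. -/
lemma dirs {e1 e2 : En n} (h1 : ‖e1‖ = 1) (h2 : ‖e2‖ = 1) (hp : ⟪e1, e2⟫ = 0) :
    ∃ ω : ℝ → En n, (∀ s, |s| ≤ 1 → ‖ω s‖ = 1) ∧ (∀ s, |s| ≤ 1 → ‖ω s - e1‖ ≤ 2 * |s|) ∧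
      ∀ s t, |s - t| ≤ ‖ω s - ω t‖ := by
  refine ⟨fun s => √(1 - s ^ 2) • e1 + s • e2, ?_, ?_, ?_⟩
  · intro s hs
    have hs2 : s ^ 2 ≤ 1 := (sq_le_one_iff_abs_le_one s).2 hs
    have := norm_comb h1 h2 hp (√(1 - s ^ 2)) s
    rw [Real.sq_sqrt (by linarith), sub_add_cancel] at this
    exact (pow_eq_one_iff_of_nonneg (norm_nonneg _) two_ne_zero).1 this
  · intro s hs
    have hs2 : s ^ 2 ≤ 1 := (sq_le_one_iff_abs_le_one s).2 hs
    have e : √(1 - s ^ 2) • e1 + s • e2 - e1 = (√(1 - s ^ 2) - 1) • e1 + s • e2 := by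
      rw [sub_smul, one_smul]; abel
    simp only
    rw [e]
    refine le_of_sq_le_sq ?_ (by positivity)
    rw [norm_comb h1 h2 hp, mul_pow, sq_abs]
    have h3 : √(1 - s ^ 2) ^ 2 = 1 - s ^ 2 := Real.sq_sqrt (by linarith)
    have h4 := Real.sqrt_nonneg (1 - s ^ 2)
    have h5 : √(1 - s ^ 2) ≤ 1 := Real.sqrt_le_one.2 (by nlinarith)
    nlinarith
  · intro s t
    have e : (√(1 - s ^ 2) • e1 + s • e2) - (√(1 - t ^ 2) • e1 + t • e2) =
      (√(1 - s ^ 2) - √(1 - t ^ 2)) • e1 + (s - t) • e2 := by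
      rw [sub_smul, sub_smul]; abel
    simp only
    rw [e]
    refine le_of_sq_le_sq ?_ (norm_nonneg _)
    rw [norm_comb h1 h2 hp, sq_abs]
    nlinarith [sq_nonneg (√(1 - s ^ 2) - √(1 - t ^ 2))]

lemma nat_sep {N : ℕ} {i j : Fin N} (h : i ≠ j) : (1:ℝ) ≤ |(i:ℝ) - (j:ℝ)| := by
  have h1 : ((i:ℕ):ℤ) - ((j:ℕ):ℤ) ≠ 0 := by
    intro h2; apply h; ext; omega
  have h2 : (1:ℤ) ≤ |((i:ℕ):ℤ) - ((j:ℕ):ℤ)| := Int.one_le_abs h1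
  have h3 : ((1:ℤ):ℝ) ≤ ((|((i:ℕ):ℤ) - ((j:ℕ):ℤ)| : ℤ) : ℝ) := by exact_mod_cast h2
  push_cast at h3
  exact h3

lemma annulus {y : En n} {r S e ρ0 σ : ℝ} {F : En n → ℝ≥0∞} (he : 0 < e) {N : ℕ} (hN : 0 < N)
    (hS : S ≤ N * e) (hF : ∫⁻ x in ball y r, F x ≤ ENNReal.ofReal S) (hρ0 : 0 < ρ0)
    (hr : 2 * ρ0 ≤ r) (hσ : 3 * σ ≤ ρ0 / (2 * N)) :
    ∃ R, ρ0 ≤ R ∧ R ≤ 2 * ρ0 ∧ ∀ x, ‖x - y‖ = R → ball x (3 * σ) ⊆ ball y r ∧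
      ∫⁻ x in ball x (3 * σ), F x ≤ ENNReal.ofReal e := by
  have hNr : (0:ℝ) < N := by exact_mod_cast hN
  set w := ρ0 / (2 * N) with hw
  have hw0 : 0 < w := by positivity
  have hwN : ρ0 = 2 * N * w := by rw [hw]; field_simp
  set Rj : Fin N → ℝ := fun j => ρ0 + (2 * (j:ℝ) + 1) * w with hRj
  have hlo : ∀ j, ρ0 ≤ Rj j := by
    intro j; simp only [hRj]; have : 0 ≤ (2 * (j:ℝ) + 1) * w := by positivity
    linarith
  have hhi : ∀ j, Rj j + w ≤ 2 * ρ0 := by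
    intro j; simp only [hRj]
    have h1 : (j:ℝ) + 1 ≤ N := by exact_mod_cast j.2
    have : ((j:ℝ) + 1) * w ≤ N * w := by gcongr
    nlinarith
  have hopen : ∀ j, IsOpen {x : En n | |‖x - y‖ - Rj j| < w} := fun j =>
    isOpen_lt (by fun_prop) continuous_const
  have hsub : ∀ j, {x : En n | |‖x - y‖ - Rj j| < w} ⊆ ball y r := by
    intro j x hx
    rw [mem_ball, dist_eq_norm]
    have hx : |‖x - y‖ - Rj j| < w := hx
    have := (abs_lt.1 hx).2
    linarith [hhi j]
  obtain ⟨j, hj⟩ := pigeon he hN hS hF (fun j => {x : En n | |‖x - y‖ - Rj j| < w})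
    (fun j => (hopen j).measurableSet) (by
      intro i j hij
      rw [Function.onFun, Set.disjoint_left]
      intro x hx hx'
      have h1 := nat_sep hij
      have h2 : |Rj i - Rj j| < 2 * w := by
        have e : Rj i - Rj j = (‖x - y‖ - Rj j) - (‖x - y‖ - Rj i) := by ring
        rw [e]
        refine (abs_sub _ _).trans_lt ?_
        have hx : |‖x - y‖ - Rj i| < w := hx
        have hx' : |‖x - y‖ - Rj j| < w := hx'
        linarith
      have e : Rj i - Rj j = ((i:ℝ) - j) * (2 * w) := by simp only [hRj]; ring
      rw [e, abs_mul, abs_of_pos (by positivity : 0 < 2 * w)] at h2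
      nlinarith) hsub
  have hb : ∀ x, ‖x - y‖ = Rj j → ball x (3 * σ) ⊆ {x : En n | |‖x - y‖ - Rj j| < w} := by
    intro x hx z hz
    rw [mem_ball, dist_eq_norm] at hz
    change |‖z - y‖ - Rj j| < w
    rw [← hx]
    refine (abs_norm_sub_norm_le _ _).trans_lt ?_
    have : z - y - (x - y) = z - x := by abel
    rw [this]; linarith
  refine ⟨Rj j, hlo j, by linarith [hhi j], fun x hx => ⟨(hb x hx).trans (hsub j),
    (lintegral_mono_set (hb x hx)).trans hj⟩⟩

lemma tube (hn : 2 ≤ n) {y e1 : En n} {r S e R d η σ : ℝ} {F : En n → ℝ≥0∞} (he : 0 < e) {N : ℕ}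
    (hN : 0 < N) (hS : S ≤ N * e) (hF : ∫⁻ x in ball y r, F x ≤ ENNReal.ofReal S) (hR : 0 < R)
    (he1 : ‖e1‖ = 1) (hη : 0 < η) (hη1 : η ≤ 1) (hσ : 6 * σ ≤ R * (η / N)) (hd : d + 3 * σ ≤ r) :
    ∃ ω : En n, ‖ω‖ = 1 ∧ ‖ω - e1‖ ≤ 2 * η ∧ ∀ a, R ≤ a → a ≤ d →
      ball (y + a • ω) (3 * σ) ⊆ ball y r ∧
      ∫⁻ x in ball (y + a • ω) (3 * σ), F x ≤ ENNReal.ofReal e := by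
  have hNr : (0:ℝ) < N := by exact_mod_cast hN
  obtain ⟨e2, he2, hp⟩ := unit_perp hn e1
  obtain ⟨ω, hω1, hω2, hω3⟩ := dirs he1 he2 hp
  set s : Fin N → ℝ := fun j => η / N * j with hs
  have hsη : ∀ j, |s j| ≤ η := by
    intro j
    have h1 : (j:ℝ) ≤ N := by exact_mod_cast j.2.le
    rw [abs_of_nonneg (by positivity)]
    calc η / N * j ≤ η / N * N := by gcongr
      _ = η := by field_simp
  have hω1' : ∀ j, ‖ω (s j)‖ = 1 := fun j => hω1 _ ((hsη j).trans hη1)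
  have hball : ∀ j a, R ≤ a → a ≤ d → ball (y + a • ω (s j)) (3 * σ) ⊆ ball y r := by
    intro j a ha had x hx
    rw [mem_ball, dist_eq_norm] at hx ⊢
    have e : x - y = (x - (y + a • ω (s j))) + a • ω (s j) := by abel
    have h1 : ‖a • ω (s j)‖ = a := by
      rw [norm_smul, hω1' j, Real.norm_eq_abs, abs_of_nonneg (by linarith), mul_one]
    rw [e]
    refine (norm_add_le _ _).trans_lt ?_
    linarith
  obtain ⟨j, hj⟩ := pigeon he hN hS hF (fun j => ⋃ a ∈ Icc R d, ball (y + a • ω (s j)) (3 * σ))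
    (fun j => (isOpen_biUnion fun _ _ => isOpen_ball).measurableSet) (by
      intro i j hij
      rw [Function.onFun, Set.disjoint_left]
      intro x hx hx'
      simp only [mem_iUnion, exists_prop] at hx hx'
      obtain ⟨a, ha, hxa⟩ := hx
      obtain ⟨b, hb, hxb⟩ := hx'
      rw [mem_ball, dist_eq_norm] at hxa hxb
      have h1 : ‖a • ω (s i) - b • ω (s j)‖ < 6 * σ := by
        have e : a • ω (s i) - b • ω (s j) = (x - (y + b • ω (s j))) - (x - (y + a • ω (s i))) := by
          abel
        rw [e]
        refine (norm_sub_le _ _).trans_lt ?_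
        linarith
      have h2 := ray_sep (hω1' i) (hω1' j) hR.le ha.1 hb.1
      have h3 := hω3 (s i) (s j)
      have h4 : η / N ≤ |s i - s j| := by
        have e : s i - s j = η / N * ((i:ℝ) - j) := by simp only [hs]; ring
        rw [e, abs_mul, abs_of_pos (by positivity : 0 < η / N)]
        have := nat_sep hij
        exact le_mul_of_one_le_right (by positivity) this
      have h5 : R * (η / N) ≤ R * ‖ω (s i) - ω (s j)‖ :=
        mul_le_mul_of_nonneg_left (h4.trans h3) hR.le
      linarith) (fun j => iUnion₂_subset fun a ha => hball j a ha.1 ha.2)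
  refine ⟨ω (s j), hω1' j, ?_, fun a ha had => ⟨hball j a ha had, ?_⟩⟩
  · have := hω2 (s j) ((hsη j).trans hη1)
    linarith [hsη j]
  · refine (lintegral_mono_set ?_).trans hj
    exact subset_biUnion_of_mem (u := fun a => ball (y + a • ω (s j)) (3 * σ)) (show a ∈ Icc R d from ⟨ha, had⟩)

set_option maxHeartbeats 1600000 in
theorem core2 (hn : 2 ≤ n) {ν : ℝ} (S θ : ℝ) (hν : 0 < ν) (hθ : 0 < θ) :
    ∃ β, 0 < β ∧ β < 1 ∧ ∀ (u : En n × ℝ → ℝ) (g : En n → ℝ) (y z : En n) (s r ρ τ M : ℝ),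
      0 < r → 0 < ρ → ρ = θ * r → ball z ρ ⊆ ball y r → s - r ^ 2 ≤ τ →
      τ ≤ s - r ^ 2 / 4 - ρ ^ 2 → SubSol ν S y r (s - r ^ 2) s u g →
      (∀ X ∈ closedBall y r ×ˢ Icc (s - r ^ 2) s, u X ≤ M) → 0 < M →
      (∀ x ∈ ball z ρ, u (x, τ) ≤ 0) → u (y, s) ≤ β * M := by
  have hn0 : 0 < n := by omega
  obtain ⟨c, ε, hc, hc1, hε, hchain⟩ := chain hn0 S hν one_pos le_rfl
  obtain ⟨C, hC, hexit⟩ := exit_lemma hn0 S hν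
  have hεn : 0 < ε ^ n := by positivity
  obtain ⟨N0, hN0⟩ := exists_nat_ge (S / ε ^ n)
  set N := N0 + 1 with hNdef
  have hN : 0 < N := by omega
  have hNr : (1:ℝ) ≤ N := by exact_mod_cast hN
  have hSN : S ≤ N * ε ^ n := by
    rw [div_le_iff₀ hεn] at hN0
    have : (N:ℝ) = N0 + 1 := by push_cast [hNdef]; ring
    rw [this]; nlinarith
  set θ' := min θ 1 with hθ'
  have hθ'0 : 0 < θ' := lt_min hθ one_pos
  have hθ'1 : θ' ≤ 1 := min_le_right _ _
  have hθ'θ : θ' ≤ θ := min_le_left _ _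
  set δ := min (θ' / 8) (1 / (32 * C + 1)) with hδ
  have hδ0 : 0 < δ := lt_min (by positivity) (by positivity)
  have hδ1 : δ ≤ θ' / 8 := min_le_left _ _
  have hδ2 : δ * (32 * C + 1) ≤ 1 := by
    have : δ ≤ 1 / (32 * C + 1) := min_le_right _ _
    rwa [le_div_iff₀ (by positivity)] at this
  set σ0 := δ * θ' / (64 * N) with hσ0
  have hσ0pos : 0 < σ0 := by positivity
  have hσN : 64 * (N * σ0) = δ * θ' := by rw [hσ0]; field_simp
  have hσle : 64 * σ0 ≤ δ * θ' := by
    have := le_mul_of_one_le_left hσ0pos.le hNr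
    linarith
  obtain ⟨K, hK⟩ := exists_nat_ge (1 / σ0 ^ 2)
  have hK' : 1 ≤ K * σ0 ^ 2 := by rwa [div_le_iff₀ (by positivity)] at hK
  have hcK : 0 < c ^ K := by positivity
  have hcK1 : c ^ K ≤ 1 := pow_le_one₀ hc.le hc1.le
  have hcKK : c ^ K * c ^ K ≤ 1 := mul_le_one₀ hcK1 hcK.le hcK1
  refine ⟨1 - c ^ K * c ^ K / 2, by linarith, by have := mul_pos hcK hcK; linarith, ?_⟩
  intro u g y z s r ρ τ M hr hρ hρr hsub hτ1 hτ2 hu huM hM hdisk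
  have hdz := ball_sub_dist hn0 hρ hsub
  have hρle : ρ ≤ r := by linarith [norm_nonneg (z - y)]
  have hθ1 : θ ≤ 1 := by
    rw [hρr] at hρle
    exact le_of_mul_le_mul_right (by linarith) hr
  have hθθ : θ' = θ := min_eq_left hθ1
  rw [hθθ] at hδ1 hσN hσle
  have hr2 : 0 < r ^ 2 := by positivity
  obtain ⟨e1, he1, hze⟩ := unit_dir hn0 (z - y)
  set d := max ‖z - y‖ (ρ / 2) with hd
  have hdlo : ρ / 2 ≤ d := le_max_right _ _
  have hdlo' : ‖z - y‖ ≤ d := le_max_left _ _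
  have hdhi : d - ‖z - y‖ ≤ ρ / 2 := by
    rw [_root_.sub_le_iff_le_add]; exact max_le (by linarith) (by linarith [norm_nonneg (z - y)])
  set σ := σ0 * r with hσ
  have hσpos : 0 < σ := by positivity
  have hδ18 : δ ≤ 1 / 8 := by linarith
  have hσ0δ : 64 * σ0 ≤ δ := hσle.trans (mul_le_of_le_one_right hδ0.le hθ1)
  have hσ0θ : 64 * σ0 ≤ θ := hσle.trans (mul_le_of_le_one_left hθ.le (by linarith))
  have hσρ : 64 * σ ≤ ρ := by
    have := mul_le_mul_of_nonneg_right hσ0θ hr.le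
    rw [hσ, hρr]; linarith
  have hσδ : 64 * σ ≤ δ * r := by
    have := mul_le_mul_of_nonneg_right hσ0δ hr.le
    rw [hσ]; linarith
  have hδρ : 8 * (δ * r) ≤ ρ := by
    have := mul_le_mul_of_nonneg_right hδ1 hr.le
    rw [hρr]; linarith
  have hσN2 : 64 * (N * σ) = δ * r * θ := by rw [hσ]; linear_combination r * hσN
  have hσN3 : 64 * (N * σ) ≤ δ * r := by
    rw [hσN2]; exact mul_le_of_le_one_right (by positivity) hθ1
  have hNpos : (0:ℝ) < N := by linarith
  have hdr : d + 3 * σ ≤ r := by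
    have : d ≤ r - ρ / 2 := max_le (by linarith) (by linarith)
    linarith
  have hmass : ∫⁻ x in ball y r, ENNReal.ofReal (g x) ^ n ≤ ENNReal.ofReal S := hu.gS
  obtain ⟨R, hR1, hR2, hRm⟩ := annulus (σ := σ) (ρ0 := δ * r) hεn hN hSN hmass (by positivity)
    (by linarith) (by rw [le_div_iff₀ (by positivity)]; linarith)
  have hR0 : 0 < R := lt_of_lt_of_le (by positivity) hR1
  obtain ⟨ω, hω, hωe, hωm⟩ := tube (σ := σ) (R := R) (d := d) (η := θ / 8) (e1 := e1) hn hεn hN hSN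
    hmass hR0 he1 (by positivity) (by linarith) (by
      have h1 : δ * r * (θ / 8 / N) ≤ R * (θ / 8 / N) := by gcongr
      refine le_trans ?_ h1
      have : δ * r * (θ / 8 / N) = 8 * σ := by
        field_simp; linear_combination -hσN2
      rw [this]; linarith) hdr
  have hRd : R ≤ d := by linarith
  have hRr : R ≤ r / 4 := by linarith
  have hstart : ∀ x ∈ ball (y + d • ω) σ, x ∈ ball z ρ := by
    intro x hx
    rw [mem_ball, dist_eq_norm] at hx ⊢
    have e : x - z = (x - (y + d • ω)) + (d • (ω - e1) + (d - ‖z - y‖) • e1) := by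
      have : z = y + ‖z - y‖ • e1 := by rw [← hze]; abel
      nth_rw 1 [this]
      rw [smul_sub, sub_smul]; abel
    have h1 : ‖d • (ω - e1)‖ ≤ ρ / 4 := by
      rw [norm_smul, Real.norm_eq_abs, abs_of_nonneg (by linarith)]
      calc d * ‖ω - e1‖ ≤ r * (2 * (θ / 8)) := by
            gcongr; linarith
        _ = ρ / 4 := by rw [hρr]; ring
    have h2 : ‖(d - ‖z - y‖) • e1‖ ≤ ρ / 2 := by
      rw [norm_smul, he1, Real.norm_eq_abs, abs_of_nonneg (by linarith), mul_one]; exact hdhi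
    rw [e]
    refine (norm_add_le _ _).trans_lt ?_
    have := norm_add_le (d • (ω - e1)) ((d - ‖z - y‖) • e1)
    linarith
  have hseg : ∀ a ∈ Icc (0:ℝ) 1, R ≤ d + a * (R - d) ∧ d + a * (R - d) ≤ d := by
    intro a ha
    have h1 := mul_nonneg ha.1 (sub_nonneg.2 hRd)
    have h2 := mul_nonneg (sub_nonneg.2 ha.2) (sub_nonneg.2 hRd)
    constructor
    · linarith
    · linarith
  have h31 : 3 * σ / 1 = 3 * σ := by ring
  -- the side estimate
  have hside : ∀ x ∈ sphere y R, ∀ t ∈ Icc (s - r ^ 2 / 8) s, u (x, t) ≤ M - c ^ K * c ^ K * M := by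
    intro x hx t ht
    have hxR : ‖x - y‖ = R := by rwa [mem_sphere, dist_eq_norm] at hx
    set D := (t - τ) / 2 with hD
    have hD1 : r ^ 2 / 16 ≤ D := by rw [hD]; linarith [ht.1, sq_nonneg ρ]
    have hD2 : D ≤ r ^ 2 := by rw [hD]; linarith [ht.2]
    have hσ0s : 64 * σ0 ≤ 1 := by linarith
    have hσ1 : σ ^ 2 ≤ r ^ 2 / 16 := by
      have h1 : σ0 ^ 2 ≤ 1 / 16 := by nlinarith
      have := mul_le_mul_of_nonneg_right h1 hr2.le
      rw [hσ, mul_pow]; linarith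
    have hσL : 2 * r * σ ≤ D := by
      have := mul_le_mul_of_nonneg_right hσ0s hr2.le
      have e : 2 * r * σ = 2 * (σ0 * r ^ 2) := by rw [hσ]; ring
      rw [e]; linarith
    have hDK : D ≤ K * σ ^ 2 := by
      have := mul_le_mul_of_nonneg_right hK' hr2.le
      rw [hσ, mul_pow]; linarith
    have hA := hchain u g g y r (s - r ^ 2) s M hu huM hu.gm hu.gpos
      (fun a => y + (d + a * (R - d)) • ω) σ D τ r M K hσpos (hσ1.trans hD1) hσL hDK hM hτ1
      (by rw [hD]; linarith [ht.2]) hr.le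
      (by
        intro a _ b _
        rw [dist_eq_norm]
        have e : y + (d + a * (R - d)) • ω - (y + (d + b * (R - d)) • ω) =
            ((a - b) * (R - d)) • ω := by
          rw [add_sub_add_left_eq_sub, ← sub_smul]; congr 1; ring
        rw [e, norm_smul, hω, mul_one, Real.norm_eq_abs, abs_mul, mul_comm]
        gcongr
        rw [abs_sub_comm, abs_of_nonneg (by linarith)]; linarith)
      (by
        intro a ha
        rw [h31]
        exact (hωm _ (hseg a ha).1 (hseg a ha).2).1)
      (fun a _ => ⟨fun _ => 0, _, bar_sq hν _, by simp⟩)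
      (by
        intro a ha
        rw [h31]
        exact (hωm _ (hseg a ha).1 (hseg a ha).2).2)
      (by
        intro x hx
        rw [sub_self]
        exact hdisk x (hstart x (by simpa using hx)))
    have hA' : ∀ x ∈ ball (y + R • ω) σ, u (x, τ + D) ≤ M - c ^ K * M := by
      intro x hx
      exact hA x (by simpa using hx)
    have hω' : ‖R⁻¹ • (x - y)‖ = 1 := by
      rw [norm_smul, hxR, norm_inv, Real.norm_eq_abs, abs_of_pos hR0, inv_mul_cancel₀ hR0.ne']
    obtain ⟨γ, hγ0, hγ1, hγn, hγL⟩ := arc hn hω hω'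
    have hγR : ∀ a, ‖y + R • γ a - y‖ = R := by
      intro a
      rw [add_sub_cancel_left, norm_smul, hγn, mul_one, Real.norm_eq_abs, abs_of_pos hR0]
    have hB := hchain u g g y r (s - r ^ 2) s M hu huM hu.gm hu.gpos
      (fun a => y + R • γ a) σ D (τ + D) r (c ^ K * M) K hσpos (hσ1.trans hD1) hσL hDK
      (by positivity) (by linarith) (by rw [hD]; linarith [ht.2]) hr.le
      (by
        intro a _ b _
        rw [dist_eq_norm, add_sub_add_left_eq_sub, ← smul_sub, norm_smul, Real.norm_eq_abs,
          abs_of_pos hR0]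
        calc R * ‖γ a - γ b‖ ≤ (r / 4) * (4 * |a - b|) := by
              gcongr; exact hγL a b
          _ = r * |a - b| := by ring)
      (by
        intro a ha
        rw [h31]
        exact (hRm _ (hγR a)).1)
      (fun a _ => ⟨fun _ => 0, _, bar_sq hν _, by simp⟩)
      (by
        intro a ha
        rw [h31]
        exact (hRm _ (hγR a)).2)
      (by
        intro x hx
        exact hA' x (by simpa [hγ0] using hx))
      x (by
        have : y + R • γ 1 = x := by
          rw [hγ1, smul_smul, mul_inv_cancel₀ hR0.ne', one_smul]; abel
        simp only [this]
        exact mem_ball_self hσpos)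
    have e : τ + D + D = t := by rw [hD]; ring
    rw [e] at hB
    linarith
  have hRsub : ball y R ⊆ ball y r := ball_subset_ball (by linarith)
  have hfin := hexit u g y R s (r ^ 2 / 8) M (c ^ K * c ^ K * M) hR0 (by positivity)
    (by
      have h1 : R ^ 2 ≤ (2 * (δ * r)) ^ 2 := by gcongr
      have h2 : C * R ^ 2 ≤ C * (2 * (δ * r)) ^ 2 := by gcongr
      refine h2.trans ?_
      have h3 : 32 * C * δ ^ 2 ≤ 1 := by
        have : 32 * C * δ ≤ 1 := by linarith
        have h4 : 32 * C * δ * δ ≤ 1 * δ := mul_le_mul_of_nonneg_right this hδ0.le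
        have : 32 * C * δ ^ 2 = 32 * C * δ * δ := by ring
        linarith
      have := mul_le_mul_of_nonneg_right h3 hr2.le
      have e : C * (2 * (δ * r)) ^ 2 = (32 * C * δ ^ 2 * r ^ 2) / 8 := by ring
      rw [e]; linarith) (by positivity)
    (hu.mono hR0 hRsub (by linarith) le_rfl)
    (fun X hX => huM X ⟨closedBall_sub hR0 hRsub hX.1, by linarith [hX.2.1], hX.2.2⟩) hside
  linarith

/-- One dimensional distorted distance adapted to a continuous drift. -/
lemma phi_one {ν B : ℝ} (hν : 0 < ν) {G : ℝ → ℝ} (hG : Continuous G)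
    (hG0 : ∀ w, 0 ≤ G w) (hGB : ∀ a b, |∫ w in a..b, G w| ≤ B) (p : ℝ) :
    ∃ φ φ1 φ2 : ℝ → ℝ, (∀ w, HasDerivAt φ (φ1 w) w) ∧ (∀ w, HasDerivAt φ1 (φ2 w) w) ∧
      (∀ w, Real.exp (-(ν * B)) ^ 2 * (w - p) ^ 2 ≤ φ w) ∧ (∀ w, φ w ≤ (w - p) ^ 2) ∧
      (∀ w, φ1 w ^ 2 ≤ 4 * φ w) ∧ (∀ w, 4 * Real.exp (-(ν * B)) ^ 2 * φ w ≤ φ1 w ^ 2) ∧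
      ∀ w A, ν⁻¹ ≤ A → A ≤ ν → A * φ2 w + G w * |φ1 w| ≤ 2 * ν := by
  set l := Real.exp (-(ν * B)) with hl
  have hl0 : 0 < l := Real.exp_pos _
  set I : ℝ → ℝ := fun w => ∫ v in p..w, G v with hI
  have hId : ∀ w, HasDerivAt I (G w) w := fun w => hG.integral_hasStrictDerivAt p w |>.hasDerivAt
  have hIc : Continuous I := continuous_iff_continuousAt.2 fun w => (hId w).continuousAt
  have hIpos : ∀ w, p ≤ w → 0 ≤ I w := fun w hw =>
    intervalIntegral.integral_nonneg hw fun v _ => hG0 v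
  have hIneg : ∀ w, w ≤ p → I w ≤ 0 := by
    intro w hw
    simp only [hI]
    rw [intervalIntegral.integral_symm]
    have := intervalIntegral.integral_nonneg (μ := volume) hw fun v _ => hG0 v
    linarith
  set E : ℝ → ℝ := fun w => Real.exp (-(ν * |I w|)) with hE
  have hEc : Continuous E := by fun_prop
  have hE0 : ∀ w, 0 < E w := fun w => Real.exp_pos _
  have hE1 : ∀ w, E w ≤ 1 := fun w => Real.exp_le_one_iff.2 (by
    have : 0 ≤ ν * |I w| := by positivity
    linarith)
  have hEl : ∀ w, l ≤ E w := fun w => Real.exp_le_exp.2 (by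
    have : ν * |I w| ≤ ν * B := mul_le_mul_of_nonneg_left (hGB p w) hν.le
    linarith)
  set Ψ : ℝ → ℝ := fun w => ∫ v in p..w, E v with hΨ
  have hΨd : ∀ w, HasDerivAt Ψ (E w) w := fun w => hEc.integral_hasStrictDerivAt p w |>.hasDerivAt
  have hΨp : Ψ p = 0 := by simp [hΨ]
  have hup : ∀ a b, a ≤ b → l * (b - a) ≤ ∫ v in a..b, E v ∧ ∫ v in a..b, E v ≤ b - a := by
    intro a b hab
    constructor
    · have := intervalIntegral.integral_mono_on hab (intervalIntegrable_const (c := l) (μ := volume))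
        (hEc.intervalIntegrable a b) (fun x _ => hEl x)
      simp at this; linarith
    · have := intervalIntegral.integral_mono_on hab (hEc.intervalIntegrable (μ := volume) a b)
        (intervalIntegrable_const (c := (1:ℝ))) (fun x _ => hE1 x)
      simpa using this
  have hΨpos : ∀ w, p ≤ w → 0 ≤ Ψ w := fun w hw =>
    intervalIntegral.integral_nonneg hw fun v _ => (hE0 v).le
  have hΨneg : ∀ w, w ≤ p → Ψ w = - ∫ v in w..p, E v := fun w hw =>
    intervalIntegral.integral_symm _ _
  have hΨneg' : ∀ w, w ≤ p → Ψ w ≤ 0 := by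
    intro w hw
    rw [hΨneg w hw]
    have := intervalIntegral.integral_nonneg (μ := volume) hw fun v _ => (hE0 v).le
    linarith
  have hΨb : ∀ w, l * |w - p| ≤ |Ψ w| ∧ |Ψ w| ≤ |w - p| := by
    intro w
    rcases le_total p w with hw | hw
    · rw [abs_of_nonneg (hΨpos w hw), abs_of_nonneg (by linarith)]
      exact hup p w hw
    · rw [abs_of_nonpos (hΨneg' w hw), abs_of_nonpos (by linarith), hΨneg w hw, neg_neg, neg_sub]
      exact hup w p hw
  have hprod : ∀ w, HasDerivAt (fun w => Ψ w * E w) (E w ^ 2 - ν * G w * |Ψ w| * E w) w := by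
    intro w
    rcases lt_trichotomy w p with hw | hw | hw
    · have hd : HasDerivAt E (E w * (ν * G w)) w := by
        have h1 : HasDerivAt (fun w => Real.exp (ν * I w)) (Real.exp (ν * I w) * (ν * G w)) w :=
          ((hId w).const_mul ν).exp
        have h2 : E =ᶠ[𝓝 w] fun w => Real.exp (ν * I w) := by
          filter_upwards [Iio_mem_nhds hw] with v hv
          simp only [hE]
          rw [abs_of_nonpos (hIneg v (le_of_lt hv))]; congr 1; ring
        have h3 := h1.congr_of_eventuallyEq h2
        have h4 := h2.self_of_nhds
        simp only at h4
        rwa [← h4] at h3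
      refine ((hΨd w).mul hd).congr_deriv ?_
      rw [abs_of_nonpos (hΨneg' w hw.le)]; ring
    · subst hw
      rw [hasDerivAt_iff_tendsto_slope]
      have h1 := (hasDerivAt_iff_tendsto_slope.1 (hΨd w))
      have h2 : Tendsto E (𝓝[≠] w) (𝓝 (E w)) := (hEc.tendsto w).mono_left nhdsWithin_le_nhds
      have h3 := h1.mul h2
      have e : E w ^ 2 - ν * G w * |Ψ w| * E w = E w * E w := by rw [hΨp]; simp; ring
      rw [e]
      refine h3.congr fun v => ?_
      simp only [slope_def_field, hΨp]
      ring
    · have hd : HasDerivAt E (E w * (-(ν * G w))) w := by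
        have h1 : HasDerivAt (fun w => Real.exp (-(ν * I w))) (Real.exp (-(ν * I w)) * (-(ν * G w))) w :=
          (((hId w).const_mul ν).neg).exp
        have h2 : E =ᶠ[𝓝 w] fun w => Real.exp (-(ν * I w)) := by
          filter_upwards [Ioi_mem_nhds hw] with v hv
          simp only [hE]
          rw [abs_of_nonneg (hIpos v (le_of_lt hv))]
        have h3 := h1.congr_of_eventuallyEq h2
        have h4 := h2.self_of_nhds
        simp only at h4
        rwa [← h4] at h3
      refine ((hΨd w).mul hd).congr_deriv ?_
      rw [abs_of_nonneg (hΨpos w hw.le)]; ring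
  refine ⟨fun w => Ψ w ^ 2, fun w => 2 * (Ψ w * E w),
    fun w => 2 * (E w ^ 2 - ν * G w * |Ψ w| * E w), ?_, fun w => (hprod w).const_mul 2, ?_, ?_, ?_,
    ?_, ?_⟩
  · intro w
    exact ((hΨd w).pow 2).congr_deriv (by simp; ring)
  · intro w
    have h := pow_le_pow_left₀ (by positivity) (hΨb w).1 2
    rwa [mul_pow, sq_abs, sq_abs] at h
  · intro w
    have h := pow_le_pow_left₀ (by positivity) (hΨb w).2 2
    rwa [sq_abs, sq_abs] at h
  · intro w
    have h : E w ^ 2 ≤ 1 := pow_le_one₀ (hE0 w).le (hE1 w)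
    have := mul_le_mul_of_nonneg_left h (sq_nonneg (Ψ w))
    simp only
    nlinarith
  · intro w
    have h : l ^ 2 ≤ E w ^ 2 := pow_le_pow_left₀ hl0.le (hEl w) 2
    have := mul_le_mul_of_nonneg_left h (sq_nonneg (Ψ w))
    simp only
    nlinarith
  · intro w A hA1 hA2
    have hA0 : 0 ≤ A := le_trans (by positivity) hA1
    have h1 : 1 ≤ A * ν := by
      have := mul_le_mul_of_nonneg_right hA1 hν.le
      rwa [inv_mul_cancel₀ hν.ne'] at this
    have hX : 0 ≤ G w * |Ψ w| * E w := mul_nonneg (mul_nonneg (hG0 w) (abs_nonneg _)) (hE0 w).le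
    have h2 := mul_le_mul_of_nonneg_right h1 hX
    have h : E w ^ 2 ≤ 1 := pow_le_one₀ (hE0 w).le (hE1 w)
    have h3 := mul_le_mul_of_nonneg_left h hA0
    rw [abs_mul, abs_mul, abs_of_pos (hE0 w), abs_of_pos (by norm_num : (0:ℝ) < 2)]
    nlinarith

lemma norm_one_dim (x : En 1) : ‖x‖ = |x 0| := by
  rw [EuclideanSpace.norm_eq]; simp [Real.sqrt_sq_eq_abs]

lemma mp_one : MeasurePreserving (fun w : ℝ => (WithLp.toLp 2 (fun _ => w) : En 1)) volume volume := by
  have h1 := (volume_preserving_funUnique (Fin 1) ℝ).symm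
  have h2 := (PiLp.volume_preserving_toLp (Fin 1))
  exact h2.comp h1

lemma bar_one {ν B : ℝ} (hν : 0 < ν) (hB : 0 ≤ B) {f : En 1 → ℝ} (hf : Continuous f)
    (hf0 : ∀ x, 0 ≤ f x) (hfB : ∫⁻ x, ENNReal.ofReal (f x) ≤ ENNReal.ofReal B) (x0 : En 1) :
    ∃ Φ, Bar ν (Real.exp (-(ν * B))) x0 f Φ := by
  set G : ℝ → ℝ := fun w => f (WithLp.toLp 2 (fun _ => w)) with hG
  have hGc : Continuous G := by
    refine hf.comp ?_
    fun_prop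
  have hGx : ∀ x : En 1, G (x 0) = f x := by
    intro x; simp only [hG]; congr 1; ext i; fin_cases i; rfl
  have hGl : ∫⁻ w, ENNReal.ofReal (G w) ≤ ENNReal.ofReal B := by
    have := mp_one.lintegral_comp (f := fun x => ENNReal.ofReal (f x)) (by fun_prop)
    simp only [hG]
    rw [this]; exact hfB
  have hGi : Integrable G := by
    refine ⟨hGc.aestronglyMeasurable, ?_⟩
    rw [hasFiniteIntegral_iff_ofReal (Eventually.of_forall fun w => hf0 _)]
    exact hGl.trans_lt ENNReal.ofReal_lt_top
  have hGB : ∀ a b, |∫ w in a..b, G w| ≤ B := by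
    intro a b
    have h1 : |∫ w in a..b, G w| ≤ ∫ w in Set.uIoc a b, |G w| :=
      intervalIntegral.norm_integral_le_integral_norm_uIoc (f := G) (μ := volume)
    have h2 : ∫ w in Set.uIoc a b, |G w| ≤ ∫ w, |G w| :=
      setIntegral_le_integral hGi.abs (Eventually.of_forall fun w => abs_nonneg _)
    have h3 : ∫ w, |G w| ≤ B := by
      have e : ∀ w, |G w| = G w := fun w => abs_of_nonneg (hf0 _)
      simp only [e]
      rw [integral_eq_lintegral_of_nonneg_ae (Eventually.of_forall fun w => hf0 _)
        hGc.aestronglyMeasurable]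
      exact ENNReal.toReal_le_of_le_ofReal hB hGl
    linarith
  obtain ⟨φ, φ1, φ2, h1, h2, h3, h4, h5, h6, h7⟩ := phi_one hν hGc (fun w => hf0 _) hGB (x0 0)
  have hd : ∀ (ψ ψ' : ℝ → ℝ), (∀ w, HasDerivAt ψ (ψ' w) w) → ∀ x : En 1,
      HasFDerivAt (fun x : En 1 => ψ (x 0)) (ψ' (x 0) • (EuclideanSpace.proj 0 : En 1 →L[ℝ] ℝ)) x := by
    intro ψ ψ' h x
    exact (h (x 0)).comp_hasFDerivAt x (EuclideanSpace.proj 0 : En 1 →L[ℝ] ℝ).hasFDerivAt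
  have hfd : ∀ (x : En 1) (j : Fin 1),
      fderiv ℝ (fun x : En 1 => φ (x 0)) x (EuclideanSpace.single j 1) = φ1 (x 0) := by
    intro x j
    rw [(hd φ φ1 h1 x).fderiv]; fin_cases j; simp
  have hg : ∀ x : En 1, ‖gvec (fun x : En 1 => φ (x 0)) x‖ = |φ1 (x 0)| := by
    intro x; rw [norm_one_dim]; simp only [gvec, hfd]
  refine ⟨fun x => φ (x 0), fun x => (hd φ φ1 h1 x).differentiableAt, ?_, ?_, ?_, ?_, ?_, ?_⟩
  · intro j
    simp only [hfd]
    exact fun x => (hd φ1 φ2 h2 x).differentiableAt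
  · intro x; rw [norm_one_dim, sq_abs]; exact h3 (x 0)
  · intro x; rw [norm_one_dim, sq_abs]; exact h4 (x 0)
  · intro x; rw [hg, sq_abs]; exact h5 (x 0)
  · intro x; rw [hg, sq_abs]; exact h6 (x 0)
  · intro x A hA
    simp only [hfd, hg]
    have e : fderiv ℝ (fun x : En 1 => φ1 (x 0)) x (EuclideanSpace.single 0 1) = φ2 (x 0) := by
      rw [(hd φ1 φ2 h2 x).fderiv]; simp
    simp only [Fin.sum_univ_one, Fin.isValue, e, Nat.cast_one, mul_one]
    rw [← hGx x]
    refine h7 (x 0) (A 0 0) ?_ (ell_diag hν hA 0)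
    have := hA.1 (fun _ => 1)
    simpa using this

theorem core1 {ν : ℝ} (S θ : ℝ) (hS : 0 ≤ S) (hν : 0 < ν) (hθ : 0 < θ) :
    ∃ β, 0 < β ∧ β < 1 ∧ ∀ (u : En 1 × ℝ → ℝ) (g : En 1 → ℝ) (y z : En 1) (s r ρ τ M : ℝ),
      0 < r → 0 < ρ → ρ = θ * r → ball z ρ ⊆ ball y r → s - r ^ 2 ≤ τ →
      τ ≤ s - r ^ 2 / 4 - ρ ^ 2 → SubSol ν S y r (s - r ^ 2) s u g →
      (∀ X ∈ closedBall y r ×ˢ Icc (s - r ^ 2) s, u X ≤ M) → 0 < M →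
      (∀ x ∈ ball z ρ, u (x, τ) ≤ 0) → u (y, s) ≤ β * M := by
  have hn0 : 0 < 1 := one_pos
  set l := Real.exp (-(ν * (S + 1))) with hl
  have hl0 : 0 < l := Real.exp_pos _
  have hl1 : l ≤ 1 := Real.exp_le_one_iff.2 (by
    have : 0 ≤ ν * (S + 1) := by positivity
    linarith)
  obtain ⟨c, ε, hc, hc1, hε, hchain⟩ := chain hn0 S hν hl0 hl1
  set θ' := min θ 1 with hθ'
  have hθ'0 : 0 < θ' := lt_min hθ one_pos
  have hθ'1 : θ' ≤ 1 := min_le_right _ _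
  have hθ'θ : θ' ≤ θ := min_le_left _ _
  set σ0 := l * θ' / 24 with hσ0
  have hσ0pos : 0 < σ0 := by positivity
  obtain ⟨K, hK⟩ := exists_nat_ge (1 / σ0 ^ 2)
  have hK' : 1 ≤ K * σ0 ^ 2 := by rwa [div_le_iff₀ (by positivity)] at hK
  have hcK : 0 < c ^ K := by positivity
  have hcK1 : c ^ K ≤ 1 := pow_le_one₀ hc.le hc1.le
  refine ⟨1 - c ^ K / 2, by linarith, by linarith, ?_⟩
  intro u g y z s r ρ τ M hr hρ hρr hsub hτ1 hτ2 hu huM hM hdisk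
  have hdz := ball_sub_dist hn0 hρ hsub
  have hr2 : 0 < r ^ 2 := by positivity
  -- approximation of the drift
  set e : ℝ := min ε 1 / 2 with he
  have he0 : 0 < e := by have := lt_min hε one_pos; positivity
  have he1 : e ≤ 1 / 2 := by have := min_le_right ε 1; linarith
  have heε : e ≤ ε / 2 := by have := min_le_left ε 1; linarith
  set f : En 1 → ℝ := (ball y r).indicator g with hf
  have hfm : Measurable f := hu.gm.indicator measurableSet_ball
  have hf0 : ∀ x, 0 ≤ f x := fun x => indicator_nonneg (fun x _ => (hu.gpos x).le) x
  have hfS : ∫⁻ x, ENNReal.ofReal (f x) ≤ ENNReal.ofReal S := by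
    have h1 := hu.gS
    simp only [pow_one] at h1
    rw [← lintegral_indicator measurableSet_ball] at h1
    refine le_trans (le_of_eq (lintegral_congr fun x => ?_)) h1
    by_cases hx : x ∈ ball y r <;> simp [hf, hx]
  have hfi : Integrable f := by
    refine ⟨hfm.aestronglyMeasurable, ?_⟩
    rw [hasFiniteIntegral_iff_ofReal (Eventually.of_forall fun w => hf0 _)]
    exact hfS.trans_lt ENNReal.ofReal_lt_top
  obtain ⟨f1, -, hf1, hf1c, -⟩ := hfi.exists_hasCompactSupport_lintegral_sub_le
    (ε := ENNReal.ofReal e) (ENNReal.ofReal_pos.2 he0).ne'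
  set g1 : En 1 → ℝ := fun x => |f1 x| with hg1
  have hg1c : Continuous g1 := by fun_prop
  have hdiff : ∀ x, |f x - g1 x| ≤ |f x - f1 x| := by
    intro x
    have := abs_abs_sub_abs_le_abs_sub (f x) (f1 x)
    rwa [abs_of_nonneg (hf0 x)] at this
  have hfint : ∫⁻ x, ENNReal.ofReal |f x - g1 x| ≤ ENNReal.ofReal e := by
    refine le_trans (lintegral_mono fun x => ?_) hf1
    rw [← ofReal_norm, Real.norm_eq_abs]
    exact ENNReal.ofReal_le_ofReal (hdiff x)
  have hg1B : ∫⁻ x, ENNReal.ofReal (g1 x) ≤ ENNReal.ofReal (S + 1) := by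
    calc ∫⁻ x, ENNReal.ofReal (g1 x) ≤ ∫⁻ x, (ENNReal.ofReal (f x) + ENNReal.ofReal |f x - g1 x|) := by
          refine lintegral_mono fun x => ?_
          rw [← ENNReal.ofReal_add (hf0 x) (abs_nonneg _)]
          refine ENNReal.ofReal_le_ofReal ?_
          linarith [neg_abs_le (f x - g1 x)]
      _ = (∫⁻ x, ENNReal.ofReal (f x)) + ∫⁻ x, ENNReal.ofReal |f x - g1 x| :=
          lintegral_add_left (by fun_prop) _
      _ ≤ ENNReal.ofReal S + ENNReal.ofReal e := by gcongr
      _ = ENNReal.ofReal (S + e) := (ENNReal.ofReal_add hS he0.le).symm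
      _ ≤ _ := ENNReal.ofReal_le_ofReal (by linarith)
  set V := (volume (ball y r)).toReal with hV
  have hV0 : 0 ≤ V := ENNReal.toReal_nonneg
  set κ := ε / 2 / (V + 1) with hκ
  have hκ0 : 0 < κ := by positivity
  set g2 : En 1 → ℝ := fun x => |g x - g1 x| + κ with hg2
  have hg2m : Measurable g2 := by
    have := hu.gm
    have := hg1c.measurable
    simp only [hg2]
    fun_prop
  have hg2i : ∫⁻ x in ball y r, ENNReal.ofReal (g2 x) ≤ ENNReal.ofReal ε := by
    calc ∫⁻ x in ball y r, ENNReal.ofReal (g2 x)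
        ≤ ∫⁻ x in ball y r, (ENNReal.ofReal |f x - g1 x| + ENNReal.ofReal κ) := by
          refine setLIntegral_mono' measurableSet_ball fun x hx => ?_
          rw [← ENNReal.ofReal_add (abs_nonneg _) hκ0.le]
          refine ENNReal.ofReal_le_ofReal ?_
          simp only [hg2, hf, indicator_of_mem hx]; exact le_rfl
      _ = (∫⁻ x in ball y r, ENNReal.ofReal |f x - g1 x|) + ∫⁻ x in ball y r, ENNReal.ofReal κ :=
          lintegral_add_right _ measurable_const
      _ ≤ ENNReal.ofReal e + ENNReal.ofReal (ε / 2) := by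
          gcongr
          · exact (setLIntegral_le_lintegral _ _).trans hfint
          · rw [lintegral_const, Measure.restrict_apply MeasurableSet.univ, univ_inter,
              ← ENNReal.ofReal_toReal (a := volume (ball y r)) measure_ball_lt_top.ne, ← hV,
              ← ENNReal.ofReal_mul hκ0.le]
            refine ENNReal.ofReal_le_ofReal ?_
            rw [hκ, div_mul_eq_mul_div, div_le_iff₀ (by positivity)]
            exact mul_le_mul_of_nonneg_left (by linarith) (by positivity)
      _ = ENNReal.ofReal (e + ε / 2) := (ENNReal.ofReal_add he0.le (by positivity)).symm
      _ ≤ _ := ENNReal.ofReal_le_ofReal (by linarith)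
  set σ := σ0 * r with hσ
  have hσpos : 0 < σ := by positivity
  have hσρ : 3 * σ / l ≤ ρ := by
    have h1 : 3 * σ / l = θ' * r / 8 := by rw [hσ, hσ0]; field_simp; norm_num
    have h2 : θ' * r ≤ θ * r := by gcongr
    rw [h1, hρr]
    have : 0 < θ' * r := by positivity
    linarith
  have hσ01 : σ0 ≤ 1 / 24 := by
    have : l * θ' ≤ 1 := mul_le_one₀ hl1 hθ'0.le hθ'1
    rw [hσ0]; linarith
  have hσle : σ ≤ 3 * σ / l := by
    rw [le_div_iff₀ hl0]
    have := mul_le_mul_of_nonneg_left hl1 hσpos.le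
    linarith
  have hballs : ∀ a ∈ Icc (0:ℝ) 1, ball (z + a • (y - z)) (3 * σ / l) ⊆ ball y r := by
    intro a ha
    refine ball_subset_ball' ?_
    rw [dist_eq_norm]
    have e1 : z + a • (y - z) - y = (1 - a) • (z - y) := by
      rw [sub_smul, one_smul, smul_sub, smul_sub]; abel
    rw [e1, norm_smul, Real.norm_eq_abs, abs_of_nonneg (by linarith [ha.2])]
    have := mul_le_mul_of_nonneg_right (by linarith [ha.1] : 1 - a ≤ 1) (norm_nonneg (z - y))
    linarith
  set D := s - τ with hD
  have hD1 : r ^ 2 / 4 ≤ D := by rw [hD]; linarith [sq_nonneg ρ]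
  have hD2 : D ≤ r ^ 2 := by rw [hD]; linarith
  have hA := hchain u g g2 y r (s - r ^ 2) s M hu huM hg2m (fun x => by positivity)
    (fun a => z + a • (y - z)) σ D τ r M K hσpos
    (by
      have h1 : σ0 ^ 2 ≤ 1 / 4 := by nlinarith
      have := mul_le_mul_of_nonneg_right h1 hr2.le
      rw [hσ, mul_pow]; linarith)
    (by
      have := mul_le_mul_of_nonneg_right hσ01 hr2.le
      have e : 2 * r * σ = 2 * (σ0 * r ^ 2) := by rw [hσ]; ring
      rw [e]; linarith)
    (by
      have := mul_le_mul_of_nonneg_right hK' hr2.le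
      rw [hσ, mul_pow]; linarith) hM hτ1 (by rw [hD]; linarith) hr.le
    (by
      intro a _ b _
      rw [dist_eq_norm, add_sub_add_left_eq_sub, ← sub_smul, norm_smul, Real.norm_eq_abs, mul_comm,
        norm_sub_rev]
      gcongr
      linarith) hballs
    (by
      intro a _
      obtain ⟨Φ, hΦ⟩ := bar_one hν (by linarith : (0:ℝ) ≤ S + 1) hg1c (fun x => abs_nonneg _) hg1B
        (z + a • (y - z))
      refine ⟨g1, Φ, hΦ, fun x => ?_⟩
      simp only [hg2]
      linarith [le_abs_self (g x - g1 x)])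
    (by
      intro a ha
      simp only [pow_one]
      exact (lintegral_mono_set (hballs a ha)).trans hg2i)
    (by
      intro x hx
      rw [sub_self]
      refine hdisk x (ball_subset_ball (hσle.trans hσρ) ?_)
      simpa using hx)
    y (by simpa using hσpos)
  have e2 : τ + D = s := by rw [hD]; ring
  rw [e2] at hA
  have : 0 < c ^ K * M := by positivity
  linarith

theorem core (hn : 0 < n) {ν : ℝ} (S θ : ℝ) (hS : 0 ≤ S) (hν : 0 < ν) (hθ : 0 < θ) :
    ∃ β, 0 < β ∧ β < 1 ∧ ∀ (u : En n × ℝ → ℝ) (g : En n → ℝ) (y z : En n) (s r ρ τ M : ℝ),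
      0 < r → 0 < ρ → ρ = θ * r → ball z ρ ⊆ ball y r → s - r ^ 2 ≤ τ →
      τ ≤ s - r ^ 2 / 4 - ρ ^ 2 → SubSol ν S y r (s - r ^ 2) s u g →
      (∀ X ∈ closedBall y r ×ˢ Icc (s - r ^ 2) s, u X ≤ M) → 0 < M →
      (∀ x ∈ ball z ρ, u (x, τ) ≤ 0) → u (y, s) ≤ β * M := by
  rcases (by omega : n = 1 ∨ 2 ≤ n) with h | h
  · subst h; exact core1 S θ hS hν hθ
  · exact core2 h S θ hν hθ

/-- **Second Growth Theorem** (Theorem 4.1). -/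
theorem second_growth_theorem
    (n : ℕ) (hn : 0 < n) (ν S θ : ℝ) (hν : 1 ≤ ν) (hθ : 0 < θ) :
    ∃ β₃ : ℝ, 0 < β₃ ∧ β₃ < 1 ∧
      ∀ (y z : En n) (s r ρ τ : ℝ) (u : En n × ℝ → ℝ)
        (a : En n × ℝ → Matrix (Fin n) (Fin n) ℝ) (b : En n × ℝ → En n),
        0 < r → 0 < ρ → ρ = θ * r →
        ball z ρ ⊆ ball y r →
        s - r ^ 2 ≤ τ → τ ≤ s - r ^ 2 / 4 - ρ ^ 2 →
        IsC21 u (closure (pcyl (y, s) r)) →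
        UnifParabolic ν a (pcyl (y, s) r) →
        LxnLtinfPow b (pcyl (y, s) r) ≤ ENNReal.ofReal S →
        (∀ X ∈ pcyl (y, s) r, 0 ≤ -Dt u X + Lop a b u X) →
        (∀ x ∈ ball z ρ, u (x, τ) ≤ 0) →
        u (y, s) ≤ β₃ * supPos u (pcyl (y, s) r) := by
  have hν0 : 0 < ν := by linarith
  set S' : ℝ := max S 0 + 2 * (volume (ball (0 : En n) 1)).toReal with hS'
  have hS'0 : 0 ≤ S' := add_nonneg (le_max_right _ _)
    (mul_nonneg zero_le_two ENNReal.toReal_nonneg)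
  obtain ⟨β, hβ0, hβ1, hcore⟩ := core hn S' θ hS'0 hν0 hθ
  refine ⟨β, hβ0, hβ1, ?_⟩
  intro y z s r ρ τ u a b hr hρ hρr hsub hτ1 hτ2 hC hUP hb hpde hdisk
  obtain ⟨g, hgm, hg0, hgS, hgp⟩ := reduction hn hν0 hr hC hUP hb hpde
  have hcl := closure_pcyl y s r hr
  have hr2 : 0 < r ^ 2 := by positivity
  have hin : ball y r ×ˢ Ioc (s - r ^ 2) s ⊆ closure (pcyl (y, s) r) := by
    rw [hcl]; exact prod_mono ball_subset_closedBall Ioc_subset_Icc_self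
  have hu : SubSol ν S' y r (s - r ^ 2) s u g :=
    ⟨by rw [← hcl]; exact hC.cont, ⟨fun X hX => hC.diff_t X (hin hX), fun X hX => hC.diff_x X (hin hX),
      fun j X hX => hC.diff_xx j X (hin hX)⟩, hgm, hg0, hgS, hgp⟩
  have hcomp : IsCompact (closure (pcyl (y, s) r)) := by
    rw [hcl]; exact (isCompact_closedBall y r).prod isCompact_Icc
  have hbdd : BddAbove ((fun X => max (u X) 0) '' pcyl (y, s) r) := by
    have h1 : ContinuousOn (fun X => max (u X) 0) (closure (pcyl (y, s) r)) :=
      hC.cont.sup continuousOn_const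
    exact (hcomp.bddAbove_image h1).mono (image_mono subset_closure)
  set M := supPos u (pcyl (y, s) r) with hM
  have hle : ∀ X ∈ pcyl (y, s) r, max (u X) 0 ≤ M := fun X hX =>
    le_csSup hbdd (mem_image_of_mem _ hX)
  have hM0 : 0 ≤ M := Real.sSup_nonneg (by
    rintro _ ⟨X, -, rfl⟩; exact le_max_right _ _)
  have hucl : ∀ X ∈ closure (pcyl (y, s) r), u X ≤ M := by
    intro X hX
    refine le_on_closure (f := u) (g := fun _ => M) (fun Y hY => ?_) hC.cont continuousOn_const hX
    exact (le_max_left _ _).trans (hle Y hY)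
  rcases hM0.eq_or_lt with h0 | hMpos
  · have : u (y, s) ≤ M := hucl (y, s) (by
      rw [hcl]; exact ⟨mem_closedBall_self hr.le, by linarith, le_rfl⟩)
    rw [← h0] at this ⊢
    simpa using this
  · exact hcore u g y z s r ρ τ M hr hρ hρr hsub hτ1 hτ2 hu (by rw [← hcl]; exact hucl) hMpos hdisk
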